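/- arXiv:1405.2999 — 2 statements merged into one kernel-verified Lean document; each statement's English description precedes it below -/
import Mathlib

section
/- Let n ≥ 2, M ≥ 1, and let E = (E_{αβ}) : ℝⁿ∖{0} → ℂ^{M×M} be C^∞ with E(-x) = E(x) for all x ≠ 0 and with each first-order partial derivative ∂_j E_{αβ} positively homogeneous of degree 1-n. Fix j ∈ {1,…,n}, α,β ∈ {1,…,M}, p ∈ (1,∞), and κ > 0. Then there exists a finite constant C > 0, independent of f, such that for every f ∈ L^p(ℝ^{n-1};ℂ) the function u(x',t) := ∫_{ℝ^{n-1}} (∂_j E_{αβ})(x'-y',t) f(y') dy', (x',t) ∈ ℝⁿ₊, satisfies ‖N_κ u‖_{L^p(ℝ^{n-1})} ≤ C‖f‖_{L^p(ℝ^{n-1})}. -/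
open MeasureTheory Filter Metric Real
open scoped ENNReal NNReal Topology

noncomputable section

/-- The point `(x', t)` of `ℝⁿ`, where `x' ∈ ℝ^{n-1}` and `t ∈ ℝ` is the last coordinate. -/
def toUp {n : ℕ} (x' : EuclideanSpace ℝ (Fin (n - 1))) (t : ℝ) :
    EuclideanSpace ℝ (Fin n) :=
  (WithLp.equiv 2 (Fin n → ℝ)).symm
    (fun i => if h : (i : ℕ) < n - 1 then x' ⟨i, h⟩ else t)

/-- The first `n-1` coordinates of a point of `ℝⁿ`. -/
def xinit {n : ℕ} (x : EuclideanSpace ℝ (Fin n)) : EuclideanSpace ℝ (Fin (n - 1)) :=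
  (WithLp.equiv 2 (Fin (n - 1) → ℝ)).symm
    (fun i => x ⟨(i : ℕ), Nat.lt_of_lt_of_le i.isLt (Nat.sub_le n 1)⟩)

/-- The last coordinate of a point of `ℝⁿ`. -/
def xlast {n : ℕ} (x : EuclideanSpace ℝ (Fin n)) : ℝ :=
  if h : 0 < n then x ⟨n - 1, by omega⟩ else 0

/-- The upper half space `ℝⁿ₊`. -/
def upperHalfSpace (n : ℕ) : Set (EuclideanSpace ℝ (Fin n)) := {x | 0 < xlast x}

/-- The embedding `Fin (n-1) → Fin n`. -/
def finUp {n : ℕ} (i : Fin (n - 1)) : Fin n :=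
  ⟨(i : ℕ), Nat.lt_of_lt_of_le i.isLt (Nat.sub_le n 1)⟩

/-- The last index of `Fin n`. -/
def lastIdx (n : ℕ) (h : 0 < n) : Fin n := ⟨n - 1, by omega⟩

/-- Partial derivative along the `i`-th coordinate direction. -/
def pd {n : ℕ} {F : Type*} [NormedAddCommGroup F] [NormedSpace ℝ F]
    (i : Fin n) (u : EuclideanSpace ℝ (Fin n) → F) (x : EuclideanSpace ℝ (Fin n)) : F :=
  fderiv ℝ u x (EuclideanSpace.single i 1)

/-- Iterated mixed partial derivative along the string of coordinate directions `d`. -/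
def mpd {n : ℕ} {F : Type*} [NormedAddCommGroup F] [NormedSpace ℝ F]
    (k : ℕ) (d : Fin k → Fin n) (u : EuclideanSpace ℝ (Fin n) → F)
    (x : EuclideanSpace ℝ (Fin n)) : F :=
  iteratedFDeriv ℝ k u x (fun i => EuclideanSpace.single (d i) 1)

/-- The nontangential approach filter for the cone `Γ_κ(x')` (points written as `(y', t)`). -/
def ntFilter {n : ℕ} (κ : ℝ) (x' : EuclideanSpace ℝ (Fin (n - 1))) :
    Filter ((EuclideanSpace ℝ (Fin (n - 1))) × ℝ) :=
  (nhds (x', (0 : ℝ))) ⊓ Filter.principal {q | 0 < q.2 ∧ dist x' q.1 < κ * q.2}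

/-- The nontangential maximal function (aperture `κ`) of `u : ℝⁿ → F`,
as an `ℝ≥0∞`-valued function on `ℝ^{n-1}`. -/
def ntMax {n : ℕ} {F : Type*} [NormedAddCommGroup F] (κ : ℝ)
    (u : EuclideanSpace ℝ (Fin n) → F) (x' : EuclideanSpace ℝ (Fin (n - 1))) : ℝ≥0∞ :=
  ⨆ (y' : EuclideanSpace ℝ (Fin (n - 1))) (t : ℝ) (_ : 0 < t ∧ dist x' y' < κ * t),
    (‖u (toUp y' t)‖₊ : ℝ≥0∞)

/-- The `L^p` norm (`p ∈ (0,∞]`) of an `ℝ≥0∞`-valued function on `ℝ^m`. -/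
def lpNormE {m : ℕ} (g : EuclideanSpace ℝ (Fin m) → ℝ≥0∞) (p : ℝ≥0∞) : ℝ≥0∞ :=
  if p = ∞ then essSup g volume
  else (∫⁻ x', (g x') ^ p.toReal) ^ (1 / p.toReal)

/-- The Hardy–Littlewood maximal function. -/
def hlMax {m : ℕ} {F : Type*} [NormedAddCommGroup F]
    (f : EuclideanSpace ℝ (Fin m) → F) (x' : EuclideanSpace ℝ (Fin m)) : ℝ≥0∞ :=
  ⨆ (r : ℝ) (_ : 0 < r),
    (volume (ball x' r))⁻¹ * ∫⁻ y' in ball x' r, (‖f y'‖₊ : ℝ≥0∞)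

/-- The Legendre-Hadamard ellipticity condition for the coefficient tensor `A`,
where `A r s α β` stands for `a^{αβ}_{rs}`. -/
def LegendreHadamard {n M : ℕ} (A : Fin n → Fin n → Fin M → Fin M → ℂ) : Prop :=
  ∃ κ₀ : ℝ, 0 < κ₀ ∧ ∀ (ξ : Fin n → ℝ) (η : Fin M → ℂ),
    κ₀ * (∑ r, ξ r ^ 2) * (∑ a, ‖η a‖ ^ 2) ≤
      (∑ r, ∑ s, ∑ a, ∑ b, A r s a b * ξ r * ξ s * (starRingEnd ℂ) (η a) * η b).re

/-- `g` is the weak (distributional) mixed partial derivative of `f` of order `k`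
along the string of directions `d`. -/
def IsWeakDeriv {m : ℕ} {F : Type*} [NormedAddCommGroup F] [NormedSpace ℝ F]
    (k : ℕ) (d : Fin k → Fin m) (f g : EuclideanSpace ℝ (Fin m) → F) : Prop :=
  ∀ φ : EuclideanSpace ℝ (Fin m) → ℝ, ContDiff ℝ (⊤ : ℕ∞) φ → HasCompactSupport φ →
    ∫ x', (mpd k d φ x') • f x' = ((-1 : ℝ) ^ k) • ∫ x', φ x' • g x'

/-- The surface area `ω_{n-1}` of the unit sphere `S^{n-1}` in `ℝⁿ`. -/
def sphereArea (n : ℕ) : ℝ :=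
  (n : ℝ) * (volume (ball (0 : EuclideanSpace ℝ (Fin n)) (1 : ℝ))).toReal

/-- The parabolic dilation `F_t(x') = t^{1-n} F(x'/t)` of a matrix-valued kernel. -/
def matDil {n M : ℕ} (P : EuclideanSpace ℝ (Fin (n - 1)) → Matrix (Fin M) (Fin M) ℂ)
    (t : ℝ) (x' : EuclideanSpace ℝ (Fin (n - 1))) : Matrix (Fin M) (Fin M) ℂ :=
  (t ^ ((1 : ℤ) - (n : ℤ))) • P (t⁻¹ • x')

/-- The convolution `(P_t * f)(x')` of a dilated matrix kernel with a `ℂ^M`-valued function. -/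
def matConv {n M : ℕ} (P : EuclideanSpace ℝ (Fin (n - 1)) → Matrix (Fin M) (Fin M) ℂ)
    (f : EuclideanSpace ℝ (Fin (n - 1)) → EuclideanSpace ℂ (Fin M))
    (t : ℝ) (x' : EuclideanSpace ℝ (Fin (n - 1))) : EuclideanSpace ℂ (Fin M) :=
  (WithLp.equiv 2 (Fin M → ℂ)).symm
    (fun γ => ∫ y', ∑ α, matDil P t (x' - y') γ α * f y' α)

/-!
Polar coordinates and the oddness of `K` write the convolution of `f` with a smooth truncation of
`K(·, 0)` as an average, over directions `θ`, of conjugate Poisson integrals of `f` along the lines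
in direction `θ` (the method of rotations). On a line, the conjugate Poisson integral is controlled
by the Cauchy transform, whose `L^p` bound comes from the contour integral of a power of the
transform and duality, and whose maximal function is controlled by the Hardy–Littlewood maximal
function because the transform on a horizontal line is the Poisson integral of its values lower
down. Inside the cone over `x` at height `t`, the difference between `K` and the truncation at
scale `t` is at most a multiple of `‖w‖^{2-n}` times the Poisson kernel at scale `t`, and is thus
controlled by the maximal functions along lines as well.
-/

namespace CalderonZygmund

open scoped ComplexConjugate

lemma lintegral_Ioi_ofReal_rpow (s : ℝ) :
    ∫⁻ t in Set.Ioi (0 : ℝ), ENNReal.ofReal (t ^ s) = ∞ := by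
  by_contra hne
  refine not_integrableOn_Ioi_rpow s ⟨(measurable_id.pow_const s).aestronglyMeasurable, ?_⟩
  rw [hasFiniteIntegral_iff_ofReal]
  · exact Ne.lt_top hne
  · filter_upwards [ae_restrict_mem measurableSet_Ioi] with t ht using rpow_nonneg ht.le s

theorem lintegral_rpow_eq_lintegral_meas_ofReal_lt_mul {α : Type*} [MeasurableSpace α]
    (ν : Measure α) {f : α → ℝ≥0∞} (hf : Measurable f) {p : ℝ} (hp : 0 < p) :
    ∫⁻ x, f x ^ p ∂ν = ENNReal.ofReal p *
      ∫⁻ t in Set.Ioi (0 : ℝ), ν {x | ENNReal.ofReal t < f x} * ENNReal.ofReal (t ^ (p - 1)) := by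
  rcases eq_or_ne (ν {x | f x = ∞}) 0 with htop | htop
  · have hfin : ∀ᵐ x ∂ν, f x ≠ ∞ := by simpa [ae_iff] using htop
    have hpow : ∫⁻ x, f x ^ p ∂ν = ∫⁻ x, ENNReal.ofReal ((f x).toReal ^ p) ∂ν :=
      lintegral_congr_ae <| hfin.mono fun x hx => by
        beta_reduce
        rw [← ENNReal.ofReal_rpow_of_nonneg ENNReal.toReal_nonneg hp.le, ENNReal.ofReal_toReal hx]
    rw [hpow, lintegral_rpow_eq_lintegral_meas_lt_mul ν (.of_forall fun _ => ENNReal.toReal_nonneg)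
      hf.ennreal_toReal.aemeasurable hp]
    congr 1
    refine setLIntegral_congr_fun measurableSet_Ioi fun t ht => ?_
    congr 1
    exact measure_congr <| hfin.mono fun x hx =>
      propext (ENNReal.ofReal_lt_iff_lt_toReal (le_of_lt ht) hx).symm
  · have hlhs : ∫⁻ x, f x ^ p ∂ν = ∞ := by
      refine lintegral_eq_top_of_measure_eq_top_ne_zero (hf.pow_const p).aemeasurable ?_
      simpa [ENNReal.rpow_eq_top_iff_of_pos hp] using htop
    have hrhs : ∫⁻ t in Set.Ioi (0 : ℝ),
        ν {x | ENNReal.ofReal t < f x} * ENNReal.ofReal (t ^ (p - 1)) = ∞ := by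
      refine top_unique ?_
      calc ∞ = ν {x | f x = ∞} * ∫⁻ t in Set.Ioi (0 : ℝ), ENNReal.ofReal (t ^ (p - 1)) := by
            rw [lintegral_Ioi_ofReal_rpow, ENNReal.mul_top htop]
        _ ≤ ∫⁻ t in Set.Ioi (0 : ℝ), ν {x | f x = ∞} * ENNReal.ofReal (t ^ (p - 1)) :=
            lintegral_const_mul_le _ _
        _ ≤ _ := by
            gcongr with t x
            intro hx
            simp [hx]
    rw [hlhs, hrhs, ENNReal.mul_top (by simpa using hp)]

lemma lintegral_withDensity_const_mul_rpow {α : Type*} [MeasurableSpace α] (μ : Measure α)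
    {g : α → ℝ≥0∞} (hg : Measurable g) (a : ℝ≥0∞) {q : ℝ} (hq : 0 ≤ q) :
    ∫⁻ y, (a * g y) ^ q ∂μ.withDensity g = a ^ q * ∫⁻ y, g y ^ (q + 1) ∂μ := by
  rw [lintegral_withDensity_eq_lintegral_mul _ hg ((hg.const_mul a).pow_const _),
    ← lintegral_const_mul _ (hg.pow_const _)]
  refine lintegral_congr fun y => ?_
  rw [Pi.mul_apply, ENNReal.mul_rpow_of_nonneg _ _ hq, mul_left_comm,
    ENNReal.rpow_add_of_nonneg _ _ hq zero_le_one, ENNReal.rpow_one, mul_comm (g y)]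

section MaximalFunction

variable {E : Type*} [NormedAddCommGroup E] [MeasurableSpace E]
  {μ : Measure E} {g h : E → ℝ≥0∞}

/-- The centered Hardy–Littlewood maximal function of a nonnegative function `g` with respect to
`μ`, over balls of all radii. It plays the role of `hlMax` on a general normed space. -/
def maximalFunction (μ : Measure E) (g : E → ℝ≥0∞) (x : E) : ℝ≥0∞ :=
  ⨆ (r : ℝ) (_ : 0 < r), ⨍⁻ y in ball x r, g y ∂μ

lemma setLAverage_ball_le_maximalFunction {r : ℝ} (hr : 0 < r) (x : E) :
    ⨍⁻ y in ball x r, g y ∂μ ≤ maximalFunction μ g x :=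
  le_iSup₂ (f := fun r (_ : 0 < r) => ⨍⁻ y in ball x r, g y ∂μ) r hr

lemma maximalFunction_mono (hgh : ∀ y, g y ≤ h y) (x : E) :
    maximalFunction μ g x ≤ maximalFunction μ h x :=
  iSup₂_mono fun _ _ => laverage_mono_ae (.of_forall hgh)

lemma maximalFunction_add_le (hg : Measurable g) (x : E) :
    maximalFunction μ (fun y => g y + h y) x ≤ maximalFunction μ g x + maximalFunction μ h x := by
  refine iSup₂_le fun r hr => ?_
  rw [setLAverage_eq, lintegral_add_left hg, ENNReal.add_div, ← setLAverage_eq, ← setLAverage_eq]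
  exact add_le_add (setLAverage_ball_le_maximalFunction hr x)
    (setLAverage_ball_le_maximalFunction hr x)

lemma lowerSemicontinuous_measure_ball {X : Type*} [PseudoMetricSpace X] [MeasurableSpace X]
    (ν : Measure X) (r : ℝ) : LowerSemicontinuous fun x => ν (ball x r) := by
  intro x a ha
  have hpos (n : ℕ) : 0 < 1 / (n + 1 : ℝ) := Nat.one_div_pos_of_nat
  have hmono : Monotone fun n : ℕ => ball x (r - 1 / (n + 1 : ℝ)) := fun m n hmn =>
    ball_subset_ball (sub_le_sub_left (Nat.one_div_le_one_div hmn) r)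
  have hunion : ball x r = ⋃ n : ℕ, ball x (r - 1 / (n + 1 : ℝ)) := by
    refine Set.Subset.antisymm (fun y hy => ?_)
      (Set.iUnion_subset fun n => ball_subset_ball (sub_le_self r (hpos n).le))
    obtain ⟨n, hn⟩ := exists_nat_one_div_lt (sub_pos.2 (mem_ball.1 hy))
    exact Set.mem_iUnion.2 ⟨n, mem_ball.2 (by linarith)⟩
  obtain ⟨n, hn⟩ : ∃ n : ℕ, a < ν (ball x (r - 1 / (n + 1 : ℝ))) := by
    simp only [hunion, hmono.measure_iUnion] at ha
    exact lt_iSup_iff.1 ha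
  filter_upwards [ball_mem_nhds x (hpos n)] with x' hx'
  refine hn.trans_le (measure_mono (ball_subset_ball' ?_))
  rw [dist_comm]
  linarith [mem_ball.1 hx']

lemma measurable_maximalFunction [BorelSpace E] [μ.IsAddHaarMeasure] :
    Measurable (maximalFunction μ g) := by
  refine (lowerSemicontinuous_iSup fun r => lowerSemicontinuous_iSup fun hr => ?_).measurable
  have havg : (fun x => ⨍⁻ y in ball x r, g y ∂μ) =
      fun x => (μ (ball 0 r))⁻¹ * (μ.withDensity g) (ball x r) := by
    ext x
    rw [setLAverage_eq, withDensity_apply _ measurableSet_ball, Measure.addHaar_ball_center,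
      ENNReal.div_eq_inv_mul]
  rw [havg]
  exact (ENNReal.continuous_const_mul
    (ENNReal.inv_ne_top.2 (measure_ball_pos μ 0 hr).ne')).comp_lowerSemicontinuous
    (lowerSemicontinuous_measure_ball _ r) fun _ _ hab =>
      mul_le_mul_right hab _

variable [NormedSpace ℝ E] [FiniteDimensional ℝ E] [μ.IsAddHaarMeasure]

lemma setLIntegral_ball_le (r : ℝ) (x : E) :
    ∫⁻ y in ball x r, g y ∂μ ≤ μ (ball x r) * maximalFunction μ g x := by
  rcases le_or_gt r 0 with hr | hr
  · simp [ball_eq_empty.2 hr]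
  · rw [← measure_mul_setLAverage _ measure_ball_lt_top.ne]
    gcongr
    exact setLAverage_ball_le_maximalFunction hr x

lemma maximalFunction_le_of_le {B : ℝ≥0∞} (hB : ∀ x, g x ≤ B) (x : E) :
    maximalFunction μ g x ≤ B := by
  refine iSup₂_le fun r hr => ?_
  rw [← setLAverage_const (measure_ball_pos μ x hr).ne' measure_ball_lt_top.ne B]
  exact laverage_mono_ae (.of_forall hB)

variable [BorelSpace E]

lemma exists_mul_measure_closedBall_le [Nontrivial E] {a : ℝ≥0∞} {x : E}
    (hx : a < maximalFunction μ g x) :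
    ∃ r : ℝ, 0 < r ∧ a * μ (closedBall x r) ≤ ∫⁻ y in closedBall x r, g y ∂μ := by
  obtain ⟨r, hr⟩ := lt_iSup_iff.1 hx
  obtain ⟨hr, hlt⟩ := lt_iSup_iff.1 hr
  refine ⟨r, hr, ?_⟩
  rw [Measure.addHaar_closedBall_eq_addHaar_ball]
  refine (ENNReal.mul_le_of_le_div (setLAverage_eq μ g (ball x r) ▸ hlt.le)).trans ?_
  exact lintegral_mono_set ball_subset_closedBall

lemma bddAbove_radius_of_measure_closedBall_le [Nontrivial E] {m : ℝ≥0∞} (hm : m ≠ ∞) :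
    ∃ R : ℝ, ∀ (x : E) (r : ℝ), μ (closedBall x r) ≤ m → r ≤ R := by
  obtain ⟨R, hR⟩ : ∃ R : ℝ, m < μ (closedBall 0 R) := by
    have hlim := tendsto_measure_iUnion_atTop (μ := μ) (s := fun n : ℕ => closedBall (0 : E) n)
      fun a b hab => closedBall_subset_closedBall (by exact_mod_cast hab)
    rw [iUnion_closedBall_nat, measure_univ_of_isAddLeftInvariant] at hlim
    obtain ⟨n, hn⟩ := (hlim.eventually (lt_mem_nhds hm.lt_top)).exists
    exact ⟨n, hn⟩
  refine ⟨R, fun x r hr => le_of_not_gt fun hlt => ?_⟩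
  rw [Measure.addHaar_closedBall_center] at hr
  exact (hR.trans_le (measure_mono (closedBall_subset_closedBall hlt.le))).not_ge hr

theorem mul_meas_lt_maximalFunction_le [Nontrivial E] (a : ℝ≥0∞) :
    a * μ {x | a < maximalFunction μ g x} ≤ 4 ^ Module.finrank ℝ E * ∫⁻ y, g y ∂μ := by
  rcases eq_or_ne (∫⁻ y, g y ∂μ) ∞ with hI | hI
  · simp [hI]
  rcases eq_or_ne a ∞ with rfl | hat
  · simp
  rcases eq_or_ne a 0 with rfl | ha
  · simp
  choose! r hr0 hr using fun x (hx : x ∈ {x | a < maximalFunction μ g x}) =>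
    exists_mul_measure_closedBall_le hx
  obtain ⟨R, hR⟩ := bddAbove_radius_of_measure_closedBall_le (μ := μ) (ENNReal.div_ne_top hI ha)
  have hrR : ∀ x ∈ {x | a < maximalFunction μ g x}, r x ≤ R := fun x hx =>
    hR x _ <| (ENNReal.le_div_iff_mul_le (.inl ha) (.inl hat)).2 <| by
      rw [mul_comm]
      exact (hr x hx).trans (setLIntegral_le_lintegral _ _)
  obtain ⟨u, hut, hdisj, hcov⟩ :=
    Vitali.exists_disjoint_subfamily_covering_enlargement_closedBall
      {x | a < maximalFunction μ g x} id r R hrR 4 (by norm_num)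
  replace hdisj : u.PairwiseDisjoint fun b => closedBall b (r b) := hdisj
  have hu : u.Countable := hdisj.countable_of_nonempty_interior fun x hx => by
    simp [interior_closedBall x (hr0 x (hut hx)).ne', hr0 x (hut hx)]
  have hsub : {x | a < maximalFunction μ g x} ⊆ ⋃ b ∈ u, closedBall b (4 * r b) := fun x hx => by
    obtain ⟨b, hb, hxb⟩ := hcov x hx
    exact Set.mem_biUnion hb (hxb (mem_closedBall_self (hr0 x hx).le))
  calc a * μ {x | a < maximalFunction μ g x}
      ≤ a * ∑' b : u, μ (closedBall (b : E) (4 * r b)) := by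
        gcongr
        exact (measure_mono hsub).trans (measure_biUnion_le _ hu _)
    _ = 4 ^ Module.finrank ℝ E * ∑' b : u, a * μ (closedBall (b : E) (r b)) := by
        simp only [Measure.addHaar_closedBall_mul_of_pos μ _ four_pos, ENNReal.tsum_mul_left,
          Measure.addHaar_closedBall_center, ENNReal.ofReal_pow four_pos.le, ENNReal.ofReal_ofNat]
        ring
    _ ≤ 4 ^ Module.finrank ℝ E * ∑' b : u, ∫⁻ y in closedBall (b : E) (r b), g y ∂μ := by
        gcongr with b
        exact hr b (hut b.2)
    _ = 4 ^ Module.finrank ℝ E * ∫⁻ y in ⋃ b ∈ u, closedBall b (r b), g y ∂μ := by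
        rw [lintegral_biUnion hu (fun _ _ => measurableSet_closedBall) hdisj]
    _ ≤ 4 ^ Module.finrank ℝ E * ∫⁻ y, g y ∂μ := by
        gcongr
        exact Measure.restrict_le_self

lemma mul_meas_lt_maximalFunction_le_setLIntegral [Nontrivial E] (hg : Measurable g)
    (t : ℝ≥0∞) :
    t * μ {x | t < maximalFunction μ g x} ≤
      2 * 4 ^ Module.finrank ℝ E * ∫⁻ y in {y | t < 2 * g y}, g y ∂μ := by
  have hms : MeasurableSet {y | t < 2 * g y} := measurableSet_lt measurable_const (hg.const_mul 2)
  set G : E → ℝ≥0∞ := {y | t < 2 * g y}.indicator g with hG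
  have hgG : ∀ y, g y ≤ G y + t / 2 := fun y => by
    by_cases hy : t < 2 * g y
    · rw [hG, Set.indicator_of_mem (Set.mem_ofPred_eq ▸ hy)]
      exact le_self_add
    · refine le_add_left ((ENNReal.le_div_iff_mul_le (by simp) (by simp)).2 ?_)
      rw [mul_comm]
      exact not_lt.1 hy
  have hM : ∀ x, maximalFunction μ g x ≤ maximalFunction μ G x + t / 2 := fun x =>
    (maximalFunction_mono hgG x).trans <| (maximalFunction_add_le (hg.indicator hms) x).trans <| by
      gcongr
      exact maximalFunction_le_of_le (fun _ => le_rfl) x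
  have hsub : {x | t < maximalFunction μ g x} ⊆ {x | t / 2 < maximalFunction μ G x} := by
    intro x hx
    by_contra hle
    refine (hx.trans_le (hM x)).not_ge ?_
    calc maximalFunction μ G x + t / 2 ≤ t / 2 + t / 2 := by
          gcongr
          exact not_lt.1 hle
      _ = t := ENNReal.add_halves t
  calc t * μ {x | t < maximalFunction μ g x}
      ≤ 2 * (t / 2 * μ {x | t / 2 < maximalFunction μ G x}) := by
        rw [← mul_assoc, ENNReal.mul_div_cancel two_ne_zero ENNReal.ofNat_ne_top]
        gcongr
    _ ≤ 2 * (4 ^ Module.finrank ℝ E * ∫⁻ y, G y ∂μ) := by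
        exact mul_le_mul_right (mul_meas_lt_maximalFunction_le _) 2
    _ = _ := by rw [hG, lintegral_indicator hms, mul_assoc]

lemma meas_lt_maximalFunction_mul_rpow_le [Nontrivial E] (hg : Measurable g) (p : ℝ) {t : ℝ}
    (ht : 0 < t) :
    μ {x | ENNReal.ofReal t < maximalFunction μ g x} * ENNReal.ofReal (t ^ p) ≤
      2 * 4 ^ Module.finrank ℝ E *
        (μ.withDensity g {y | ENNReal.ofReal t < 2 * g y} * ENNReal.ofReal (t ^ (p - 1))) := by
  have hpow : ENNReal.ofReal (t ^ p) = ENNReal.ofReal t * ENNReal.ofReal (t ^ (p - 1)) := by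
    rw [← ENNReal.ofReal_mul ht.le, rpow_sub_one ht.ne' p, mul_div_cancel₀ _ ht.ne']
  rw [withDensity_apply _ (measurableSet_lt measurable_const (hg.const_mul 2)), hpow,
    ← mul_assoc, ← mul_assoc, mul_comm (μ _)]
  exact mul_le_mul_left (mul_meas_lt_maximalFunction_le_setLIntegral hg (ENNReal.ofReal t)) _

theorem exists_lintegral_maximalFunction_rpow_le [Nontrivial E] {p : ℝ} (hp : 1 < p) :
    ∃ C : ℝ≥0, ∀ g : E → ℝ≥0∞, Measurable g →
      ∫⁻ x, maximalFunction μ g x ^ p ∂μ ≤ C * ∫⁻ x, g x ^ p ∂μ := by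
  set c : ℝ≥0 := 2 * 4 ^ Module.finrank ℝ E with hc
  have hc' : (c : ℝ≥0∞) = 2 * 4 ^ Module.finrank ℝ E := by simp [hc]
  refine ⟨p.toNNReal * (c * ((p - 1)⁻¹.toNNReal * 2 ^ (p - 1))), fun g hg => ?_⟩
  set ν := μ.withDensity g
  have hp1 : 0 < p - 1 := sub_pos.2 hp
  have hlayer : ∫⁻ t in Set.Ioi (0 : ℝ),
      ν {y | ENNReal.ofReal t < 2 * g y} * ENNReal.ofReal (t ^ (p - 1 - 1)) =
        ENNReal.ofReal (p - 1)⁻¹ * ∫⁻ y, (2 * g y) ^ (p - 1) ∂ν := by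
    rw [lintegral_rpow_eq_lintegral_meas_ofReal_lt_mul ν (hg.const_mul 2) hp1, ← mul_assoc,
      ← ENNReal.ofReal_mul (inv_nonneg.2 hp1.le), inv_mul_cancel₀ hp1.ne', ENNReal.ofReal_one,
      one_mul]
  calc ∫⁻ x, maximalFunction μ g x ^ p ∂μ
      ≤ ENNReal.ofReal p * ∫⁻ t in Set.Ioi (0 : ℝ),
          c * (ν {y | ENNReal.ofReal t < 2 * g y} * ENNReal.ofReal (t ^ (p - 1 - 1))) := by
        rw [lintegral_rpow_eq_lintegral_meas_ofReal_lt_mul μ measurable_maximalFunction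
          (by linarith), hc']
        gcongr ENNReal.ofReal p * ?_
        exact setLIntegral_mono' measurableSet_Ioi fun t ht =>
          meas_lt_maximalFunction_mul_rpow_le hg (p - 1) ht
    _ = _ := by
        rw [lintegral_const_mul' _ _ ENNReal.coe_ne_top, hlayer,
          lintegral_withDensity_const_mul_rpow μ hg 2 hp1.le, sub_add_cancel]
        simp only [ENNReal.ofReal, ENNReal.coe_mul, ENNReal.coe_rpow_of_nonneg _ hp1.le,
          ENNReal.coe_ofNat]
        ring

end MaximalFunction

section RadialKernel

variable {E : Type*} [NormedAddCommGroup E] [NormedSpace ℝ E] [FiniteDimensional ℝ E]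
  [MeasurableSpace E] [BorelSpace E]

/- By the layer-cake formula such a kernel is a superposition of indicators of balls. -/
theorem lintegral_kernel_mul_le_maximalFunction (μ : Measure E) [μ.IsAddHaarMeasure]
    {k : E → ℝ} (hk : Measurable k) (hk0 : ∀ y, 0 ≤ k y)
    (hball : ∀ t > 0, ∃ r, {y | t < k y} = ball 0 r) {g : E → ℝ≥0∞} (hg : Measurable g) (x : E) :
    ∫⁻ y, ENNReal.ofReal (k (x - y)) * g y ∂μ ≤
      (∫⁻ y, ENNReal.ofReal (k y) ∂μ) * maximalFunction μ g x := by
  have hkx : Measurable fun y => k (x - y) := hk.comp (measurable_const.sub measurable_id)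
  have hball' : ∀ t > 0, ∃ r, {y | t < k (x - y)} = ball x r := fun t ht => by
    obtain ⟨r, hr⟩ := hball t ht
    refine ⟨r, ?_⟩
    ext y
    rw [mem_ball', dist_eq_norm, ← mem_ball_zero_iff, ← hr]
    rfl
  calc ∫⁻ y, ENNReal.ofReal (k (x - y)) * g y ∂μ
      = ∫⁻ y, ENNReal.ofReal (k (x - y)) ∂μ.withDensity g := by
        rw [lintegral_withDensity_eq_lintegral_mul _ hg hkx.ennreal_ofReal]
        exact lintegral_congr fun y => mul_comm _ _
    _ = ∫⁻ t in Set.Ioi (0 : ℝ), (μ.withDensity g) {y | t < k (x - y)} :=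
        lintegral_eq_lintegral_meas_lt _ (.of_forall fun y => hk0 _) hkx.aemeasurable
    _ ≤ ∫⁻ t in Set.Ioi (0 : ℝ), μ {y | t < k (x - y)} * maximalFunction μ g x := by
        refine setLIntegral_mono' measurableSet_Ioi fun t ht => ?_
        obtain ⟨r, hr⟩ := hball' t ht
        rw [hr, withDensity_apply _ measurableSet_ball]
        exact setLIntegral_ball_le r x
    _ = (∫⁻ t in Set.Ioi (0 : ℝ), μ {y | t < k (x - y)}) * maximalFunction μ g x := by
        refine lintegral_mul_const _ (Antitone.measurable fun s t hst => ?_)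
        exact measure_mono fun y hy => lt_of_le_of_lt hst hy
    _ = (∫⁻ y, ENNReal.ofReal (k (x - y)) ∂μ) * maximalFunction μ g x := by
        rw [lintegral_eq_lintegral_meas_lt _ (.of_forall fun y => hk0 _) hkx.aemeasurable]
    _ = (∫⁻ y, ENNReal.ofReal (k y) ∂μ) * maximalFunction μ g x := by
        rw [lintegral_sub_left_eq_self (fun y => ENNReal.ofReal (k y)) x]

end RadialKernel

section PoissonKernels

/-- The Poisson kernel of the upper half-plane at height `s`, without the factor `1 / π`. -/
def poisson (s r : ℝ) : ℝ := s / (s ^ 2 + r ^ 2)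

/-- The conjugate Poisson kernel of the upper half-plane at height `s`, without the factor `1 / π`:
`1 / (r + s * I) = conjPoisson s r - poisson s r * I`. -/
def conjPoisson (s r : ℝ) : ℝ := r / (s ^ 2 + r ^ 2)

variable {s : ℝ}

lemma poisson_pos (hs : 0 < s) (r : ℝ) : 0 < poisson s r := by
  unfold poisson
  positivity

lemma conjPoisson_neg (s r : ℝ) : conjPoisson s (-r) = -conjPoisson s r := by
  simp only [conjPoisson, neg_sq, neg_div]

lemma norm_conjPoisson_le (hs : 0 < s) (r : ℝ) : ‖conjPoisson s r‖ ≤ s⁻¹ := by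
  rw [conjPoisson, norm_div, norm_of_nonneg (by positivity : 0 ≤ s ^ 2 + r ^ 2),
    div_le_iff₀ (by positivity), le_inv_mul_iff₀ hs, norm_eq_abs]
  nlinarith [sq_nonneg (s - |r|), sq_abs r, mul_nonneg hs.le (abs_nonneg r)]

lemma measurable_conjPoisson (s : ℝ) : Measurable (conjPoisson s) :=
  measurable_id.div (by fun_prop)

lemma continuous_poisson (hs : 0 < s) : Continuous (poisson s) :=
  continuous_const.div (by fun_prop) fun _ => by positivity

lemma norm_poisson_le (hs : 0 < s) (r : ℝ) : ‖poisson s r‖ ≤ s⁻¹ := by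
  rw [norm_of_nonneg (poisson_pos hs r).le, poisson, div_le_iff₀ (by positivity), mul_add,
    pow_two, inv_mul_cancel_left₀ hs.ne']
  exact le_add_of_nonneg_right (by positivity)

lemma integrable_poisson_smul {V : Type*} [NormedAddCommGroup V] [NormedSpace ℝ V] (hs : 0 < s)
    {f : ℝ → V} (hf : Integrable f) (x : ℝ) : Integrable fun y => poisson s (x - y) • f y :=
  hf.bdd_smul s⁻¹ ((continuous_poisson hs).comp (by fun_prop)).aestronglyMeasurable
    (.of_forall fun _ => norm_poisson_le hs _)

lemma poisson_eq_inv_mul (hs : 0 < s) (r : ℝ) :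
    poisson s r = s⁻¹ * (1 + (s⁻¹ * r) ^ 2)⁻¹ := by
  unfold poisson
  field_simp

lemma integrable_poisson (hs : 0 < s) : Integrable (poisson s) := by
  rw [funext (poisson_eq_inv_mul hs)]
  exact (integrable_inv_one_add_sq.comp_mul_left' (inv_pos.2 hs).ne').const_mul _

lemma integral_poisson (hs : 0 < s) : ∫ r, poisson s r = π := by
  simp only [poisson_eq_inv_mul hs]
  rw [integral_const_mul, Measure.integral_comp_mul_left (fun y => (1 + y ^ 2)⁻¹) s⁻¹,
    integral_univ_inv_one_add_sq, inv_inv, abs_of_pos hs, smul_eq_mul,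
    inv_mul_cancel_left₀ hs.ne']

lemma lintegral_poisson (hs : 0 < s) : ∫⁻ r, ENNReal.ofReal (poisson s r) = ENNReal.ofReal π := by
  rw [← ofReal_integral_eq_lintegral_ofReal (integrable_poisson hs)
    (.of_forall fun r => (poisson_pos hs r).le), integral_poisson hs]

lemma setOf_lt_poisson (hs : 0 < s) {t : ℝ} (ht : 0 < t) :
    {r | t < poisson s r} = ball 0 √(s / t - s ^ 2) := by
  ext r
  rw [Set.mem_ofPred_eq, poisson, lt_div_iff₀ (by positivity), ← lt_div_iff₀' ht,
    mem_ball_zero_iff, norm_eq_abs, lt_sqrt (abs_nonneg r), sq_abs, lt_sub_iff_add_lt']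

lemma lintegral_poisson_mul_le (hs : 0 < s) {g : ℝ → ℝ≥0∞} (hg : Measurable g) (x : ℝ) :
    ∫⁻ y, ENNReal.ofReal (poisson s (x - y)) * g y ≤
      ENNReal.ofReal π * maximalFunction volume g x := by
  rw [← lintegral_poisson hs]
  exact lintegral_kernel_mul_le_maximalFunction volume (continuous_poisson hs).measurable
    (fun r => (poisson_pos hs r).le) (fun t ht => ⟨_, setOf_lt_poisson hs ht⟩) hg x

lemma enorm_integral_poisson_smul_le {V : Type*} [NormedAddCommGroup V] [NormedSpace ℝ V]
    [MeasurableSpace V] [OpensMeasurableSpace V] (hs : 0 < s) {f : ℝ → V} (hf : Measurable f)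
    (x : ℝ) :
    ‖∫ y, poisson s (x - y) • f y‖ₑ ≤
      ENNReal.ofReal π * maximalFunction volume (fun y => ‖f y‖ₑ) x := by
  refine (enorm_integral_le_lintegral_enorm _).trans ?_
  simp only [enorm_smul, Real.enorm_of_nonneg (poisson_pos hs _).le]
  exact lintegral_poisson_mul_le hs hf.enorm x

lemma exists_lintegral_enorm_integral_poisson_smul_rpow_le {p : ℝ} (hp : 1 < p) :
    ∃ C : ℝ≥0, ∀ f : ℝ → ℝ, Measurable f → ∀ s : ℝ, 0 < s →
      ∫⁻ x, ‖∫ y, poisson s (x - y) • f y‖ₑ ^ p ≤ C * ∫⁻ x, ‖f x‖ₑ ^ p := by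
  obtain ⟨C, hC⟩ := exists_lintegral_maximalFunction_rpow_le (μ := (volume : Measure ℝ)) hp
  have hp0 : 0 ≤ p := by linarith
  refine ⟨Real.toNNReal π ^ p * C, fun f hf s hs => ?_⟩
  calc ∫⁻ x, ‖∫ y, poisson s (x - y) • f y‖ₑ ^ p
      ≤ ∫⁻ x, (ENNReal.ofReal π * maximalFunction volume (fun y => ‖f y‖ₑ) x) ^ p := by
        gcongr with x
        exact enorm_integral_poisson_smul_le hs hf x
    _ = ENNReal.ofReal π ^ p * ∫⁻ x, maximalFunction volume (fun y => ‖f y‖ₑ) x ^ p := by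
        simp only [ENNReal.mul_rpow_of_nonneg _ _ hp0]
        rw [lintegral_const_mul' _ _ (by finiteness)]
    _ ≤ ENNReal.ofReal π ^ p * (C * ∫⁻ x, ‖f x‖ₑ ^ p) := by
        gcongr
        exact hC _ hf.enorm
    _ = _ := by rw [ENNReal.coe_mul, ENNReal.coe_rpow_of_nonneg _ hp0, mul_assoc]; rfl

end PoissonKernels

section CauchyIntegral

variable {F : Type*} [NormedAddCommGroup F] {G : ℂ → F} {s C p : ℝ}

lemma integrable_horizontal_of_norm_le (hp : 1 < p) (hG : ContinuousOn G {z | s ≤ z.im})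
    (hb : ∀ z : ℂ, s ≤ z.im → ‖G z‖ ≤ C * (1 + ‖z‖) ^ (-p)) :
    Integrable fun x : ℝ => G (x + s * Complex.I) := by
  have hcont : Continuous fun x : ℝ => G (x + s * Complex.I) :=
    hG.comp_continuous (by fun_prop) fun x => by simp
  have hC : 0 ≤ C := nonneg_of_mul_nonneg_left
    ((norm_nonneg _).trans (hb (s * Complex.I) (by simp))) (by positivity)
  refine ((integrable_one_add_norm (E := ℝ) (by simpa using hp)).const_mul C).mono'
    hcont.aestronglyMeasurable (.of_forall fun x => (hb _ (by simp)).trans ?_)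
  have hx : ‖x‖ ≤ ‖(x + s * Complex.I : ℂ)‖ := by
    simpa using Complex.abs_re_le_norm (x + s * Complex.I)
  gcongr ?_ * ?_
  exact rpow_le_rpow_of_nonpos (by positivity) (by linarith) (by linarith)

variable [NormedSpace ℂ F]

lemma intervalIntegral_horizontal_eq_sub_add (hG : DifferentiableOn ℂ G {z | s ≤ z.im}) {t : ℝ}
    (hst : s ≤ t) (N : ℝ) :
    ∫ x in (-N)..N, G (x + s * Complex.I) =
      (∫ x in (-N)..N, G (x + t * Complex.I)) -
        Complex.I • (∫ y in s..t, G (N + y * Complex.I)) +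
        Complex.I • ∫ y in s..t, G ((-N : ℝ) + y * Complex.I) := by
  have hrect := Complex.integral_boundary_rect_eq_zero_of_differentiableOn G
    (⟨-N, s⟩ : ℂ) (⟨N, t⟩ : ℂ) <| hG.mono fun z hz => by
      have him := (Complex.mem_reProdIm.1 hz).2
      rw [Set.uIcc_of_le hst] at him
      exact him.1
  dsimp only at hrect
  rw [← sub_eq_zero, ← hrect]
  abel

lemma norm_intervalIntegral_horizontal_le (hp : 0 ≤ p)
    (hG : DifferentiableOn ℂ G {z | s ≤ z.im})
    (hb : ∀ z : ℂ, s ≤ z.im → ‖G z‖ ≤ C * (1 + ‖z‖) ^ (-p)) {N : ℝ} (hN : 0 < N) (hNs : -s < N) :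
    ‖∫ x in (-N)..N, G (x + s * Complex.I)‖ ≤ 6 * C * N ^ (-(p - 1)) := by
  have hC : 0 ≤ C := nonneg_of_mul_nonneg_left
    ((norm_nonneg _).trans (hb (s * Complex.I) (by simp))) (by positivity)
  have hsN : s ≤ s + 2 * N := by linarith
  have hbN (z : ℂ) (hz : s ≤ z.im) (hNz : N ≤ ‖z‖) : ‖G z‖ ≤ C * N ^ (-p) := by
    refine (hb z hz).trans (mul_le_mul_of_nonneg_left ?_ hC)
    exact rpow_le_rpow_of_nonpos hN (by linarith) (by linarith)
  have htop : ‖∫ x in (-N)..N, G (x + (s + 2 * N : ℝ) * Complex.I)‖ ≤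
      C * N ^ (-p) * |N - -N| := by
    refine intervalIntegral.norm_integral_le_of_norm_le_const fun x _ =>
      hbN _ (by simpa using hN.le) ?_
    calc N ≤ s + 2 * N := by linarith
      _ ≤ ‖(x + (s + 2 * N : ℝ) * Complex.I : ℂ)‖ := by
        simpa using (le_abs_self _).trans
          (Complex.abs_im_le_norm (x + (s + 2 * N : ℝ) * Complex.I))
  have hside (a : ℝ) (ha : |a| = N) :
      ‖∫ y in s..(s + 2 * N), G (a + y * Complex.I)‖ ≤ C * N ^ (-p) * |s + 2 * N - s| := by
    refine intervalIntegral.norm_integral_le_of_norm_le_const fun y hy => hbN _ ?_ ?_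
    · simpa using (Set.uIoc_of_le hsN ▸ hy).1.le
    · simpa [ha] using Complex.abs_re_le_norm (a + y * Complex.I)
  have hpow : N ^ (-(p - 1)) = N ^ (-p) * N := by
    rw [neg_sub, sub_eq_neg_add, rpow_add_one hN.ne']
  rw [sub_neg_eq_add, ← two_mul, abs_of_pos (by positivity)] at htop
  simp only [add_sub_cancel_left, abs_of_pos (by positivity : 0 < 2 * N)] at hside
  rw [intervalIntegral_horizontal_eq_sub_add hG hsN N, hpow]
  refine (norm_add_le_of_le (r₂ := C * N ^ (-p) * (2 * N)) (norm_sub_le_of_le htop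
    (r₂ := C * N ^ (-p) * (2 * N)) ?_) ?_).trans_eq (by ring)
  · simpa [norm_smul] using hside N (abs_of_pos hN)
  · simpa [norm_smul] using hside (-N) (by rw [abs_neg, abs_of_pos hN])

theorem integral_horizontal_eq_zero [CompleteSpace F] (hp : 1 < p)
    (hG : DifferentiableOn ℂ G {z | s ≤ z.im})
    (hb : ∀ z : ℂ, s ≤ z.im → ‖G z‖ ≤ C * (1 + ‖z‖) ^ (-p)) :
    ∫ x : ℝ, G (x + s * Complex.I) = 0 := by
  have hlim : Tendsto (fun N : ℝ => 6 * C * N ^ (-(p - 1))) atTop (𝓝 0) := by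
    simpa using (tendsto_rpow_neg_atTop (sub_pos.2 hp)).const_mul (6 * C)
  refine tendsto_nhds_unique (intervalIntegral_tendsto_integral
    (integrable_horizontal_of_norm_le hp hG.continuousOn hb) tendsto_neg_atTop_atBot tendsto_id)
    (squeeze_zero_norm' ?_ hlim)
  filter_upwards [eventually_gt_atTop 0, eventually_gt_atTop (-s)] with N hN hNs
  exact norm_intervalIntegral_horizontal_le (by linarith) hG hb hN hNs

end CauchyIntegral

section LinftyC

variable {E V : Type*} [NormedAddCommGroup E] [MeasurableSpace E] [NormedAddCommGroup V]
  [MeasurableSpace V]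

/-- The class `L^∞_c` of measurable, bounded functions with bounded support, on which all the
singular integrals below converge absolutely. Its members are genuine functions, not classes
modulo null sets. -/
structure MemLinftyC (f : E → V) : Prop where
  measurable : Measurable f
  exists_norm_le : ∃ B, ∀ x, ‖f x‖ ≤ B
  exists_eq_zero : ∃ R, ∀ x, R < ‖x‖ → f x = 0

namespace MemLinftyC

variable {f : E → V}

lemma integrable [BorelSpace E] [ProperSpace E] [BorelSpace V] [SecondCountableTopology V]
    (hf : MemLinftyC f) (μ : Measure E) [IsFiniteMeasureOnCompacts μ] : Integrable f μ := by
  obtain ⟨hm, ⟨B, hB⟩, R, hR⟩ := hf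
  have hsupp : Function.support f ⊆ closedBall 0 R := fun x hx => by
    by_contra hxR
    exact hx (hR x (by simpa using hxR))
  rw [← integrableOn_iff_integrable_of_support_subset hsupp]
  exact Measure.integrableOn_of_bounded (isCompact_closedBall _ _).measure_lt_top.ne
    hm.aestronglyMeasurable (.of_forall hB)

lemma of_norm_le {W : Type*} [NormedAddCommGroup W] [MeasurableSpace W] (hf : MemLinftyC f)
    {g : E → W} (hg : Measurable g) {A : ℝ} (hgf : ∀ x, ‖g x‖ ≤ A * ‖f x‖) : MemLinftyC g := by
  obtain ⟨-, ⟨B, hB⟩, R, hR⟩ := hf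
  refine ⟨hg, ⟨|A| * B, fun x => (hgf x).trans ?_⟩, R, fun x hx => ?_⟩
  · exact mul_le_mul (le_abs_self A) (hB x) (norm_nonneg _) (abs_nonneg A)
  · simpa [hR x hx] using hgf x

end MemLinftyC

end LinftyC

section CauchyTransform

/-- The Cauchy transform of `f : ℝ → ℂ` at a point `z` off the real line, without the factor
`1 / (2 * π * I)`. -/
def cauchyTransform (f : ℝ → ℂ) (z : ℂ) : ℂ := ∫ y : ℝ, f y / (z - y)

variable {f : ℝ → ℂ} {s : ℝ} {z : ℂ}

lemma im_le_norm_sub_ofReal (z : ℂ) (y : ℝ) : z.im ≤ ‖z - y‖ := by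
  simpa using (le_abs_self _).trans (Complex.abs_im_le_norm (z - y))

lemma sub_ofReal_ne_zero (hz : 0 < z.im) (y : ℝ) : z - y ≠ 0 :=
  norm_pos_iff.1 (hz.trans_le (im_le_norm_sub_ofReal z y))

lemma norm_div_sub_ofReal_le (hs : 0 < s) (hz : s ≤ z.im) (w : ℂ) (y : ℝ) :
    ‖w / (z - y)‖ ≤ s⁻¹ * ‖w‖ := by
  rw [norm_div, div_eq_inv_mul]
  gcongr
  exact hz.trans (im_le_norm_sub_ofReal z y)

lemma aestronglyMeasurable_div_sub_ofReal (hf : Integrable f) (z : ℂ) :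
    AEStronglyMeasurable fun y : ℝ => f y / (z - y) :=
  hf.aestronglyMeasurable.div₀ (by fun_prop : Measurable fun y : ℝ => z - y).aestronglyMeasurable

lemma integrable_div_sub_ofReal (hf : Integrable f) (hz : 0 < z.im) :
    Integrable fun y : ℝ => f y / (z - y) :=
  (hf.norm.const_mul z.im⁻¹).mono' (aestronglyMeasurable_div_sub_ofReal hf z)
    (.of_forall fun y => norm_div_sub_ofReal_le hz le_rfl (f y) y)

lemma one_add_norm_le_mul_norm_sub {z w : ℂ} (hs : 0 < s) (hzw : s ≤ ‖z - w‖) :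
    1 + ‖z‖ ≤ ((1 + ‖w‖) / s + 1) * ‖z - w‖ := by
  have h1 : 1 + ‖w‖ ≤ (1 + ‖w‖) / s * ‖z - w‖ := by
    rw [div_mul_eq_mul_div, le_div_iff₀ hs]
    gcongr
  linarith [norm_le_norm_sub_add z w]

lemma exists_norm_cauchyTransform_le (hf : MemLinftyC f) (hs : 0 < s) :
    ∃ C, 0 ≤ C ∧ ∀ z : ℂ, s ≤ z.im → ‖cauchyTransform f z‖ ≤ C * (1 + ‖z‖)⁻¹ := by
  have hint := hf.integrable volume
  obtain ⟨R, hR⟩ := hf.exists_eq_zero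
  refine ⟨((1 + |R|) / s + 1) * ∫ y, ‖f y‖, by positivity, fun z hz => ?_⟩
  rw [mul_right_comm, ← integral_const_mul]
  refine norm_integral_le_of_norm_le (hint.norm.const_mul _) (.of_forall fun y => ?_)
  rcases lt_or_ge R ‖y‖ with hy | hy
  · simp [hR y hy]
  have hsy : s ≤ ‖z - y‖ := hz.trans (im_le_norm_sub_ofReal z y)
  rw [norm_div, div_eq_inv_mul, ← div_eq_mul_inv]
  gcongr
  rw [inv_le_comm₀ (hs.trans_le hsy) (by positivity), inv_div, div_le_iff₀ (by positivity),
    mul_comm]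
  refine (one_add_norm_le_mul_norm_sub hs hsy).trans ?_
  gcongr
  rw [Complex.norm_real]
  exact hy.trans (le_abs_self R)

lemma hasDerivAt_div_sub_ofReal (w : ℂ) {y : ℝ} (h : z - y ≠ 0) :
    HasDerivAt (fun z : ℂ => w / (z - y)) (-w / (z - y) ^ 2) z := by
  have := ((hasDerivAt_id z).sub_const (y : ℂ)).fun_inv h |>.const_mul w
  simpa only [id, div_eq_mul_inv, neg_mul, mul_neg, one_mul] using this

theorem differentiableOn_cauchyTransform (hf : Integrable f) :
    DifferentiableOn ℂ (cauchyTransform f) {z | 0 < z.im} := by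
  intro z₀ (hz₀ : 0 < z₀.im)
  have hδ : 0 < z₀.im / 2 := half_pos hz₀
  have him : {z : ℂ | z₀.im / 2 < z.im} ∈ 𝓝 z₀ :=
    (isOpen_lt continuous_const Complex.continuous_im).mem_nhds (half_lt_self hz₀)
  refine (hasDerivAt_integral_of_dominated_loc_of_deriv_le (μ := volume)
    (F := fun z (y : ℝ) => f y / (z - y)) (F' := fun z (y : ℝ) => -f y / (z - y) ^ 2)
    (bound := fun y => ((z₀.im / 2) ^ 2)⁻¹ * ‖f y‖) him
    (.of_forall fun z => aestronglyMeasurable_div_sub_ofReal hf z)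
    (integrable_div_sub_ofReal hf hz₀)
    (hf.aestronglyMeasurable.neg.div₀
      (by fun_prop : Measurable fun y : ℝ => (z₀ - (y : ℂ)) ^ 2).aestronglyMeasurable)
    (.of_forall fun y z hz => ?_) (hf.norm.const_mul _)
    (.of_forall fun y z hz => hasDerivAt_div_sub_ofReal (f y) (sub_ofReal_ne_zero (hδ.trans hz) y))
    ).2.differentiableAt.differentiableWithinAt
  rw [norm_div, div_eq_inv_mul, norm_neg, norm_pow]
  gcongr
  exact (le_of_lt hz).trans (im_le_norm_sub_ofReal z y)

lemma continuous_cauchyTransform_horizontal (hf : Integrable f) (hs : 0 < s) :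
    Continuous fun x : ℝ => cauchyTransform f (x + s * Complex.I) :=
  (differentiableOn_cauchyTransform hf).continuousOn.comp_continuous (by fun_prop)
    fun x => by simpa using hs

lemma inv_sub_ofReal_eq (hs : 0 < s) (x y : ℝ) :
    (x + s * Complex.I - y : ℂ)⁻¹ = conjPoisson s (x - y) - poisson s (x - y) * Complex.I := by
  have h1 : (s : ℂ) ^ 2 + (x - y) ^ 2 ≠ 0 := by
    exact_mod_cast (by positivity : s ^ 2 + (x - y) ^ 2 ≠ 0)
  refine (eq_inv_of_mul_eq_one_left ?_).symm
  unfold conjPoisson poisson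
  push_cast
  field_simp
  linear_combination -(s : ℂ) ^ 2 * Complex.I_sq

end CauchyTransform

section Riesz

lemma exists_one_le_mul_cos_rpow_sub_mul_cos {p : ℝ} (hp : 1 < p) (hp2 : p ≤ 2) :
    ∃ A B : ℝ, 0 ≤ A ∧ ∀ φ, 0 ≤ φ → φ < π / 2 →
      1 ≤ A * cos φ ^ p - B * cos (p * φ) := by
  have hp0 : 0 < p := by linarith
  obtain ⟨θ, hpθ, hθ⟩ : ∃ θ, π / 2 / p < θ ∧ θ < π / 2 :=
    exists_between (div_lt_self pi_div_two_pos hp)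
  have hθ0 : 0 < θ := (by positivity : 0 < π / 2 / p).trans hpθ
  have hπ {φ : ℝ} (hφ : φ < π / 2) : p * φ ≤ π := by nlinarith [pi_pos]
  have hm : 0 < cos θ := cos_pos_of_mem_Ioo ⟨by linarith, hθ⟩
  have hδ : 0 < -cos (p * θ) := neg_pos.2 <| cos_neg_of_pi_div_two_lt_of_lt
    (by rwa [div_lt_iff₀' hp0] at hpθ) (by linarith [hπ hθ, pi_pos])
  set δ := -cos (p * θ)
  refine ⟨(1 + δ⁻¹) * (cos θ ^ p)⁻¹, δ⁻¹, by positivity, fun φ hφ0 hφ => ?_⟩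
  rcases le_total φ θ with hle | hle
  · have hcos : 1 ≤ (cos θ ^ p)⁻¹ * cos φ ^ p := by
      rw [← div_eq_inv_mul, one_le_div (by positivity)]
      exact rpow_le_rpow hm.le (cos_le_cos_of_nonneg_of_le_pi hφ0 (by linarith) hle) hp0.le
    calc (1 : ℝ) = (1 + δ⁻¹) * 1 - δ⁻¹ * 1 := by ring
      _ ≤ (1 + δ⁻¹) * ((cos θ ^ p)⁻¹ * cos φ ^ p) - δ⁻¹ * cos (p * φ) := by
        gcongr
        exact cos_le_one _
      _ = _ := by ring
  · have hφcos : 0 ≤ cos φ := cos_nonneg_of_mem_Icc ⟨by linarith, hφ.le⟩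
    have hcos : cos (p * φ) ≤ -δ := by
      simpa only [δ, neg_neg] using
        cos_le_cos_of_nonneg_of_le_pi (by positivity) (hπ hφ) (by gcongr)
    calc (1 : ℝ) = 0 - δ⁻¹ * (-δ) := by field_simp; ring
      _ ≤ _ := by gcongr; positivity

lemma exists_norm_rpow_le_re_rpow_sub_re_cpow {p : ℝ} (hp : 1 < p) (hp2 : p ≤ 2) :
    ∃ A B : ℝ, 0 ≤ A ∧ ∀ z : ℂ, 0 < z.re →
      ‖z‖ ^ p ≤ A * z.re ^ p - B * (z ^ (p : ℂ)).re := by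
  obtain ⟨A, B, hA, hAB⟩ := exists_one_le_mul_cos_rpow_sub_mul_cos hp hp2
  refine ⟨A, B, hA, fun z hz => ?_⟩
  have harg : |z.arg| < π / 2 := Complex.abs_arg_lt_pi_div_two_iff.2 (.inl hz)
  have hcos : 0 ≤ cos |z.arg| := cos_nonneg_of_mem_Icc ⟨by linarith [abs_nonneg z.arg], harg.le⟩
  have hpcos : cos (p * |z.arg|) = cos (z.arg * p) := by
    rw [← cos_abs (z.arg * p), abs_mul, abs_of_pos (by linarith : 0 < p), mul_comm]
  have hre : z.re = ‖z‖ * cos |z.arg| := by rw [cos_abs, Complex.norm_mul_cos_arg]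
  rw [Complex.cpow_ofReal_re, ← hpcos, hre, mul_rpow (norm_nonneg z) hcos]
  calc ‖z‖ ^ p = ‖z‖ ^ p * 1 := (mul_one _).symm
    _ ≤ ‖z‖ ^ p * (A * cos |z.arg| ^ p - B * cos (p * |z.arg|)) := by
      gcongr
      exact hAB _ (abs_nonneg _) harg
    _ = _ := by ring

section

variable {s p D : ℝ}

lemma norm_cpow_le_of_norm_le {z w : ℂ} (hp : 0 ≤ p) (hw : ‖w‖ ≤ D * (1 + ‖z‖)⁻¹) :
    ‖w ^ (p : ℂ)‖ ≤ D ^ p * (1 + ‖z‖) ^ (-p) := by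
  have hD : 0 ≤ D := nonneg_of_mul_nonneg_left ((norm_nonneg _).trans hw) (by positivity)
  rw [Complex.norm_cpow_real, rpow_neg (by positivity), ← inv_rpow (by positivity),
    ← mul_rpow hD (by positivity)]
  exact rpow_le_rpow (norm_nonneg _) hw hp

lemma integrable_norm_rpow_horizontal {F : Type*} [NormedAddCommGroup F] {G : ℂ → F} (hp : 1 < p)
    (hG : ContinuousOn G {z | s ≤ z.im}) (hD : ∀ z, s ≤ z.im → ‖G z‖ ≤ D * (1 + ‖z‖)⁻¹) :
    Integrable fun x : ℝ => ‖G (x + s * Complex.I)‖ ^ p := by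
  have hp0 : 0 ≤ p := by linarith
  refine integrable_horizontal_of_norm_le (G := fun z => ‖G z‖ ^ p) (C := D ^ p) hp
    (hG.norm.rpow_const fun _ _ => .inr hp0) fun z hz => ?_
  have hpow := norm_cpow_le_of_norm_le (w := ‖G z‖) hp0 (by simpa using hD z hz)
  rw [norm_of_nonneg (by positivity)]
  simpa only [Complex.norm_cpow_real, Complex.norm_real, norm_norm] using hpow

/- The holomorphic function `W ^ p` has integral zero along horizontal lines, so the term
`B * Re (W ^ p)` of the pointwise inequality disappears upon integration. -/
theorem exists_integral_norm_rpow_le_of_re_pos (hp : 1 < p) (hp2 : p ≤ 2) :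
    ∃ A : ℝ, 0 ≤ A ∧ ∀ (W : ℂ → ℂ) (s D : ℝ), DifferentiableOn ℂ W {z | s ≤ z.im} →
      (∀ z, s ≤ z.im → 0 < (W z).re) → (∀ z, s ≤ z.im → ‖W z‖ ≤ D * (1 + ‖z‖)⁻¹) →
      Integrable (fun x : ℝ => ‖(W (x + s * Complex.I)).re‖ ^ p) ∧
        ∫ x : ℝ, ‖W (x + s * Complex.I)‖ ^ p ≤
          A * ∫ x : ℝ, ‖(W (x + s * Complex.I)).re‖ ^ p := by
  obtain ⟨A, B, hA, hAB⟩ := exists_norm_rpow_le_re_rpow_sub_re_cpow hp hp2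
  have hp0 : 0 ≤ p := by linarith
  refine ⟨A, hA, fun W s D hW hpos hD => ?_⟩
  have hdiff : DifferentiableOn ℂ (fun z => W z ^ (p : ℂ)) {z | s ≤ z.im} :=
    hW.cpow_const fun z hz => .inl (hpos z hz)
  have hdecay (z : ℂ) (hz : s ≤ z.im) : ‖W z ^ (p : ℂ)‖ ≤ D ^ p * (1 + ‖z‖) ^ (-p) :=
    norm_cpow_le_of_norm_le hp0 (hD z hz)
  have hcpow : Integrable fun x : ℝ => (W (x + s * Complex.I) ^ (p : ℂ)).re :=
    (integrable_horizontal_of_norm_le hp hdiff.continuousOn hdecay).re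
  have hzero : ∫ x : ℝ, (W (x + s * Complex.I) ^ (p : ℂ)).re = 0 :=
    (integral_re (integrable_horizontal_of_norm_le hp hdiff.continuousOn hdecay)).trans
      (by rw [integral_horizontal_eq_zero hp hdiff hdecay]; rfl)
  have hnorm := integrable_norm_rpow_horizontal hp hW.continuousOn hD
  have hre : Integrable fun x : ℝ => ‖(W (x + s * Complex.I)).re‖ ^ p :=
    integrable_norm_rpow_horizontal (G := fun z => (W z).re) hp
      (Complex.continuous_re.comp_continuousOn hW.continuousOn)
      fun z hz => (Complex.abs_re_le_norm _).trans (hD z hz)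
  have hpointwise (x : ℝ) : ‖W (x + s * Complex.I)‖ ^ p ≤
      A * ‖(W (x + s * Complex.I)).re‖ ^ p - B * (W (x + s * Complex.I) ^ (p : ℂ)).re := by
    have hx : 0 < (W (x + s * Complex.I)).re := hpos _ (by simp)
    rw [norm_of_nonneg hx.le]
    exact hAB _ hx
  refine ⟨hre, ?_⟩
  calc ∫ x : ℝ, ‖W (x + s * Complex.I)‖ ^ p
      ≤ ∫ x : ℝ, (A * ‖(W (x + s * Complex.I)).re‖ ^ p -
          B * (W (x + s * Complex.I) ^ (p : ℂ)).re) :=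
        integral_mono hnorm ((hre.const_mul A).sub (hcpow.const_mul B)) hpointwise
    _ = A * ∫ x : ℝ, ‖(W (x + s * Complex.I)).re‖ ^ p := by
        rw [integral_sub (hre.const_mul A) (hcpow.const_mul B), integral_const_mul,
          integral_const_mul, hzero, mul_zero, sub_zero]

lemma ofReal_integral_norm_rpow_eq_lintegral_enorm {X V : Type*} [MeasurableSpace X]
    [NormedAddCommGroup V] {μ : Measure X} {f : X → V} (hp : 0 ≤ p)
    (hf : Integrable (fun x => ‖f x‖ ^ p) μ) :
    ENNReal.ofReal (∫ x, ‖f x‖ ^ p ∂μ) = ∫⁻ x, ‖f x‖ₑ ^ p ∂μ := by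
  rw [ofReal_integral_eq_lintegral_ofReal hf (.of_forall fun x => by positivity)]
  simp only [← ENNReal.ofReal_rpow_of_nonneg (norm_nonneg _) hp, ofReal_norm]

theorem exists_lintegral_enorm_rpow_le_of_re_pos (hp : 1 < p) (hp2 : p ≤ 2) :
    ∃ A : ℝ≥0, ∀ (W : ℂ → ℂ) (s D : ℝ), DifferentiableOn ℂ W {z | s ≤ z.im} →
      (∀ z, s ≤ z.im → 0 < (W z).re) → (∀ z, s ≤ z.im → ‖W z‖ ≤ D * (1 + ‖z‖)⁻¹) →
      ∫⁻ x : ℝ, ‖W (x + s * Complex.I)‖ₑ ^ p ≤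
        A * ∫⁻ x : ℝ, ‖(W (x + s * Complex.I)).re‖ₑ ^ p := by
  obtain ⟨A, hA, hRiesz⟩ := exists_integral_norm_rpow_le_of_re_pos hp hp2
  have hp0 : 0 ≤ p := by linarith
  refine ⟨A.toNNReal, fun W s D hW hpos hD => ?_⟩
  have hint := integrable_norm_rpow_horizontal hp hW.continuousOn hD
  obtain ⟨hre, hle⟩ := hRiesz W s D hW hpos hD
  rw [← ofReal_integral_norm_rpow_eq_lintegral_enorm hp0 hint,
    ← ofReal_integral_norm_rpow_eq_lintegral_enorm hp0 hre, ← ENNReal.ofReal,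
    ← ENNReal.ofReal_mul hA]
  exact ENNReal.ofReal_le_ofReal hle

end

lemma re_I_mul_cauchyTransform {f : ℝ → ℝ} {s : ℝ} (hf : Integrable f) (hs : 0 < s) (x : ℝ) :
    (Complex.I * cauchyTransform (fun y => (f y : ℂ)) (x + s * Complex.I)).re =
      ∫ y, poisson s (x - y) • f y := by
  have hint : Integrable fun y => Complex.I * ((f y : ℂ) / (x + s * Complex.I - y)) :=
    (integrable_div_sub_ofReal hf.ofReal (by simpa using hs)).const_mul _
  rw [cauchyTransform, ← integral_const_mul]
  refine (integral_re hint).symm.trans (integral_congr_ae (.of_forall fun y => ?_))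
  simp only [div_eq_mul_inv, inv_sub_ofReal_eq hs]
  simp [mul_comm]

lemma re_I_mul_cauchyTransform_pos {f : ℝ → ℝ} (hf : Integrable f) (h0 : 0 ≤ f)
    (hne : ¬ f =ᵐ[volume] 0) {z : ℂ} (hz : 0 < z.im) :
    0 < (Complex.I * cauchyTransform (fun y => (f y : ℂ)) z).re := by
  have hre := re_I_mul_cauchyTransform hf hz z.re
  rw [Complex.re_add_im] at hre
  have hnn : 0 ≤ fun y => poisson z.im (z.re - y) • f y :=
    fun y => mul_nonneg (poisson_pos hz _).le (h0 y)
  rw [hre]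
  refine (integral_nonneg hnn).lt_of_ne fun h => hne ?_
  have hae := (integral_eq_zero_iff_of_nonneg hnn (integrable_poisson_smul hz hf _)).1 h.symm
  filter_upwards [hae] with y hy
  exact (mul_eq_zero.1 hy).resolve_left (poisson_pos hz _).ne'

lemma exists_lintegral_cauchyTransform_rpow_le_of_nonneg {p : ℝ} (hp : 1 < p) (hp2 : p ≤ 2) :
    ∃ C : ℝ≥0, ∀ f : ℝ → ℝ, MemLinftyC f → 0 ≤ f → ∀ s : ℝ, 0 < s →
      ∫⁻ x : ℝ, ‖cauchyTransform (fun y => (f y : ℂ)) (x + s * Complex.I)‖ₑ ^ p ≤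
        C * ∫⁻ x, ‖f x‖ₑ ^ p := by
  obtain ⟨A, hA⟩ := exists_lintegral_enorm_rpow_le_of_re_pos hp hp2
  obtain ⟨C, hC⟩ := exists_lintegral_enorm_integral_poisson_smul_rpow_le hp
  refine ⟨A * C, fun f hf h0 s hs => ?_⟩
  have hint := hf.integrable volume
  by_cases hzero : f =ᵐ[volume] 0
  · have hCT (z : ℂ) : cauchyTransform (fun y => (f y : ℂ)) z = 0 :=
      integral_eq_zero_of_ae (hzero.mono fun y hy => by simp [hy])
    simp [hCT, show 0 < p by linarith]
  have hfC : MemLinftyC fun y => (f y : ℂ) :=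
    hf.of_norm_le (Complex.measurable_ofReal.comp hf.measurable) (A := 1) fun y => by simp
  obtain ⟨D, -, hD⟩ := exists_norm_cauchyTransform_le hfC hs
  have hRiesz := hA (fun z => Complex.I * cauchyTransform (fun y => (f y : ℂ)) z) s D
    (((differentiableOn_cauchyTransform hint.ofReal).const_mul _).mono fun z hz => hs.trans_le hz)
    (fun z hz => re_I_mul_cauchyTransform_pos hint h0 hzero (hs.trans_le hz))
    (fun z hz => by simpa using hD z hz)
  simp only [re_I_mul_cauchyTransform hint hs, enorm_mul, enorm_eq_nnnorm Complex.I,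
    Complex.nnnorm_I, ENNReal.coe_one, one_mul] at hRiesz
  rw [ENNReal.coe_mul, mul_assoc]
  exact hRiesz.trans (by gcongr; exact hC f hf.measurable s hs)

end Riesz

section Duality

/-- The multiple of `conj w` whose product with `w` is `‖w‖ ^ p`; composing with it turns a function
into the one which norms it in the duality between `L^p` and its dual. -/
def dualPower (p : ℝ) (w : ℂ) : ℂ := (‖w‖ ^ (p - 2) : ℝ) * conj w

variable {p q : ℝ}

lemma measurable_dualPower (p : ℝ) : Measurable (dualPower p) := by
  unfold dualPower
  exact (Complex.measurable_ofReal.comp (by fun_prop)).mul Complex.continuous_conj.measurable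

lemma norm_dualPower (hp : 1 < p) (w : ℂ) : ‖dualPower p w‖ = ‖w‖ ^ (p - 1) := by
  rw [dualPower, norm_mul, RCLike.norm_conj, Complex.norm_real, norm_of_nonneg (by positivity),
    ← rpow_add_one' (norm_nonneg w) (by linarith)]
  ring_nf

lemma dualPower_mul_self (hp : 0 < p) (w : ℂ) : dualPower p w * w = (‖w‖ ^ p : ℝ) := by
  rw [dualPower, mul_assoc, Complex.conj_mul', ← Complex.ofReal_pow, ← Complex.ofReal_mul,
    ← rpow_natCast, ← rpow_add' (norm_nonneg w) (by push_cast; linarith)]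
  norm_num

lemma enorm_dualPower_rpow (hpq : p.HolderConjugate q) (w : ℂ) :
    ‖dualPower p w‖ₑ ^ q = ‖w‖ₑ ^ p := by
  have hp1 : 0 ≤ p - 1 := sub_nonneg.2 hpq.lt.le
  rw [← ofReal_norm, norm_dualPower hpq.lt, ← ENNReal.ofReal_rpow_of_nonneg (norm_nonneg w) hp1,
    ofReal_norm, ← ENNReal.rpow_mul, hpq.sub_one_mul_conj]

lemma le_rpow_of_le_mul_rpow_inv (hpq : p.HolderConjugate q) {X D : ℝ≥0∞} (hX : X ≠ ∞)
    (h : X ≤ D * X ^ q⁻¹) : X ≤ D ^ p := by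
  rcases eq_or_ne X 0 with rfl | hX0
  · exact zero_le
  have hq0 : X ^ q⁻¹ ≠ 0 := by simp [hX0, hX]
  have hqt : X ^ q⁻¹ ≠ ∞ := ENNReal.rpow_ne_top_of_nonneg hpq.symm.inv_nonneg hX
  have hsplit : X = X ^ p⁻¹ * X ^ q⁻¹ := by
    rw [← ENNReal.rpow_add _ _ hX0 hX, hpq.inv_add_inv_eq_one, ENNReal.rpow_one]
  nth_rw 1 [hsplit] at h
  rw [← ENNReal.rpow_inv_le_iff hpq.pos]
  exact (ENNReal.mul_le_mul_iff_left hq0 hqt).1 h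

variable {E : Type*} [NormedAddCommGroup E] [MeasurableSpace E] [BorelSpace E]

lemma memLinftyC_indicator_closedBall {V : Type*} [NormedAddCommGroup V] [MeasurableSpace V]
    {g : E → V} (hg : Measurable g) (N : ℝ) {B : ℝ} (hB : ∀ x ∈ closedBall 0 N, ‖g x‖ ≤ B) :
    MemLinftyC ((closedBall 0 N).indicator g) := by
  refine ⟨hg.indicator measurableSet_closedBall, ⟨max B 0, fun x => ?_⟩, N, fun x hx => ?_⟩
  · by_cases hx : x ∈ closedBall 0 N
    · simpa only [Set.indicator_of_mem hx] using (hB x hx).trans (le_max_left B 0)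
    · simp [Set.indicator_of_notMem hx]
  · exact Set.indicator_of_notMem (by simpa using hx) g

variable [ProperSpace E] {μ : Measure E} [IsFiniteMeasureOnCompacts μ] {F : E → ℂ} {D : ℝ≥0∞}

lemma setLIntegral_closedBall_enorm_rpow_le (hpq : p.HolderConjugate q) (hF : Continuous F)
    (hD : ∀ g, MemLinftyC g → ‖∫ x, g x * F x ∂μ‖ₑ ≤ D * (∫⁻ x, ‖g x‖ₑ ^ q ∂μ) ^ q⁻¹) (N : ℝ) :
    ∫⁻ x in closedBall 0 N, ‖F x‖ₑ ^ p ∂μ ≤ D ^ p := by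
  have hball : MeasurableSet (closedBall (0 : E) N) := measurableSet_closedBall
  have hint : IntegrableOn (fun x => ‖F x‖ ^ p) (closedBall 0 N) μ :=
    (hF.norm.rpow_const fun _ => .inr hpq.nonneg).continuousOn.integrableOn_compact
      (isCompact_closedBall 0 _)
  obtain ⟨B, hB⟩ := (isCompact_closedBall (0 : E) N).exists_bound_of_continuousOn hF.continuousOn
  set g := (closedBall (0 : E) N).indicator fun x => dualPower p (F x)
  have hg : MemLinftyC g := memLinftyC_indicator_closedBall
    ((measurable_dualPower p).comp hF.measurable) N (B := B ^ (p - 1)) fun x hx => by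
      rw [Function.comp, norm_dualPower hpq.lt]
      exact rpow_le_rpow (norm_nonneg _) (hB x hx) (sub_nonneg.2 hpq.lt.le)
  have hnorm : ∫⁻ x, ‖g x‖ₑ ^ q ∂μ = ∫⁻ x in closedBall 0 N, ‖F x‖ₑ ^ p ∂μ := by
    rw [← lintegral_indicator hball]
    congr with x
    by_cases hx : x ∈ closedBall 0 N <;> simp [g, hx, enorm_dualPower_rpow hpq, hpq.symm.pos]
  have hpair : ∫ x, g x * F x ∂μ = (∫ x in closedBall 0 N, ‖F x‖ ^ p ∂μ : ℝ) := by
    rw [← integral_complex_ofReal, ← integral_indicator hball]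
    congr with x
    by_cases hx : x ∈ closedBall 0 N <;> simp [g, hx, dualPower_mul_self hpq.pos]
  have hofReal := ofReal_integral_norm_rpow_eq_lintegral_enorm hpq.nonneg hint
  refine le_rpow_of_le_mul_rpow_inv hpq (hofReal ▸ ENNReal.ofReal_ne_top) ?_
  calc ∫⁻ x in closedBall 0 N, ‖F x‖ₑ ^ p ∂μ = ‖∫ x, g x * F x ∂μ‖ₑ := by
        rw [hpair, ← hofReal, ← ofReal_norm, Complex.norm_real, norm_of_nonneg (by positivity)]
    _ ≤ _ := hnorm ▸ hD g hg

theorem lintegral_enorm_rpow_le_of_forall_enorm_integral_mul_le (hpq : p.HolderConjugate q)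
    (hF : Continuous F)
    (hD : ∀ g, MemLinftyC g → ‖∫ x, g x * F x ∂μ‖ₑ ≤ D * (∫⁻ x, ‖g x‖ₑ ^ q ∂μ) ^ q⁻¹) :
    ∫⁻ x, ‖F x‖ₑ ^ p ∂μ ≤ D ^ p :=
  le_of_tendsto' ((aecover_closedBall tendsto_natCast_atTop_atTop)
    |>.lintegral_tendsto_of_countably_generated (hF.measurable.enorm.pow_const p).aemeasurable)
    fun N => setLIntegral_closedBall_enorm_rpow_le hpq hF hD N

end Duality

section CauchyTransformLp

variable {p q s : ℝ} {f g : ℝ → ℂ}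

/-- The part of `z` along the half-line spanned by `I ^ k`: it is nonnegative, and `z` is the sum of
its four parts times the corresponding directions. -/
def axisPart (k : Fin 4) (z : ℂ) : ℝ := max ((-Complex.I) ^ (k : ℕ) * z).re 0

lemma sum_I_pow_mul_axisPart (z : ℂ) :
    ∑ k : Fin 4, Complex.I ^ (k : ℕ) * (axisPart k z : ℂ) = z := by
  apply Complex.ext <;> simp [Fin.sum_univ_four, axisPart, pow_succ, ← sub_eq_add_neg]

lemma norm_axisPart_le (k : Fin 4) (z : ℂ) : ‖axisPart k z‖ ≤ ‖z‖ := by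
  rw [axisPart, norm_of_nonneg (le_max_right _ _)]
  refine max_le ((Complex.re_le_norm _).trans_eq ?_) (norm_nonneg z)
  simp

lemma MemLinftyC.axisPart (hf : MemLinftyC f) (k : Fin 4) :
    MemLinftyC fun y => axisPart k (f y) :=
  hf.of_norm_le ((Complex.measurable_re.comp (hf.measurable.const_mul _)).max measurable_const)
    (A := 1) fun y => by simpa using norm_axisPart_le k (f y)

lemma enorm_cauchyTransform_le_sum_axisPart (hf : MemLinftyC f) {z : ℂ} (hz : 0 < z.im) :
    ‖cauchyTransform f z‖ₑ ≤
      ∑ k : Fin 4, ‖cauchyTransform (fun y => (axisPart k (f y) : ℂ)) z‖ₑ := by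
  have hint (k : Fin 4) := (integrable_div_sub_ofReal
    ((hf.axisPart k).integrable volume).ofReal hz).const_mul (Complex.I ^ (k : ℕ))
  have hsum : cauchyTransform f z =
      ∑ k : Fin 4, Complex.I ^ (k : ℕ) * cauchyTransform (fun y => (axisPart k (f y) : ℂ)) z := by
    simp only [cauchyTransform, ← integral_const_mul]
    refine (integral_congr_ae (.of_forall fun y => ?_)).trans
      (integral_finsetSum _ fun k _ => hint k)
    simp only [← mul_div_assoc, ← Finset.sum_div, sum_I_pow_mul_axisPart]
  rw [hsum]
  exact (enorm_sum_le _ _).trans_eq (by simp [enorm_mul, enorm_pow, enorm_eq_nnnorm Complex.I])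

lemma exists_lintegral_cauchyTransform_rpow_le_of_le_two (hp : 1 < p) (hp2 : p ≤ 2) :
    ∃ C : ℝ≥0, ∀ f : ℝ → ℂ, MemLinftyC f → ∀ s : ℝ, 0 < s →
      ∫⁻ x : ℝ, ‖cauchyTransform f (x + s * Complex.I)‖ₑ ^ p ≤ C * ∫⁻ x, ‖f x‖ₑ ^ p := by
  obtain ⟨C, hC⟩ := exists_lintegral_cauchyTransform_rpow_le_of_nonneg hp hp2
  refine ⟨4 ^ (p - 1) * (4 * C), fun f hf s hs => ?_⟩
  set T : Fin 4 → ℝ → ℝ≥0∞ := fun k x =>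
    ‖cauchyTransform (fun y => (axisPart k (f y) : ℂ)) (x + s * Complex.I)‖ₑ
  have hT (k : Fin 4) : Measurable (T k) := (continuous_cauchyTransform_horizontal
    ((hf.axisPart k).integrable volume).ofReal hs).measurable.enorm
  have hTC (k : Fin 4) : ∫⁻ x, T k x ^ p ≤ C * ∫⁻ x, ‖f x‖ₑ ^ p := by
    refine (hC _ (hf.axisPart k) (fun y => le_max_right _ _) s hs).trans ?_
    gcongr with x
    exact enorm_le_iff_norm_le.2 (norm_axisPart_le k (f x))
  calc ∫⁻ x : ℝ, ‖cauchyTransform f (x + s * Complex.I)‖ₑ ^ p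
      ≤ ∫⁻ x : ℝ, (4 : ℝ≥0∞) ^ (p - 1) * ∑ k, T k x ^ p := by
        gcongr with x
        have hsum := enorm_cauchyTransform_le_sum_axisPart hf (z := x + s * Complex.I) (by simpa)
        refine (ENNReal.rpow_le_rpow hsum (by linarith)).trans ?_
        simpa using ENNReal.rpow_sum_le_const_mul_sum_rpow Finset.univ (T · x) hp.le
    _ = (4 : ℝ≥0∞) ^ (p - 1) * ∑ k, ∫⁻ x, T k x ^ p := by
        rw [lintegral_const_mul' _ _ (by finiteness),
          lintegral_finsetSum _ fun k _ => (hT k).pow_const p]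
    _ ≤ (4 : ℝ≥0∞) ^ (p - 1) * ∑ _ : Fin 4, C * ∫⁻ x, ‖f x‖ₑ ^ p := by
        gcongr with k
        exact hTC k
    _ = _ := by
        simp [ENNReal.coe_rpow_of_nonneg _ (sub_nonneg.2 hp.le), mul_assoc]

lemma integral_mul_cauchyTransform (hf : Integrable f) (hg : Integrable g) (hs : 0 < s) :
    ∫ x : ℝ, g x * cauchyTransform f (x + s * Complex.I) =
      -∫ y : ℝ, f y * conj (cauchyTransform (fun x => conj (g x)) (y + s * Complex.I)) := by
  have hne (x y : ℝ) : (x + s * Complex.I - y : ℂ) ≠ 0 :=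
    sub_ofReal_ne_zero (z := x + s * Complex.I) (by simpa using hs) y
  have hcont : Continuous fun z : ℝ × ℝ => (z.1 + s * Complex.I - z.2 : ℂ)⁻¹ :=
    (by fun_prop : Continuous fun z : ℝ × ℝ => (z.1 + s * Complex.I - z.2 : ℂ)).inv₀
      fun z => hne z.1 z.2
  have hint : Integrable (fun z : ℝ × ℝ => (z.1 + s * Complex.I - z.2 : ℂ)⁻¹ * (g z.1 * f z.2))
      (volume.prod volume) :=
    (hg.mul_prod hf).bdd_mul (c := s⁻¹) hcont.aestronglyMeasurable (.of_forall fun z => by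
      simpa [div_eq_mul_inv] using norm_div_sub_ofReal_le (z := z.1 + s * Complex.I) hs
        (by simp) 1 z.2)
  calc ∫ x : ℝ, g x * cauchyTransform f (x + s * Complex.I)
      = ∫ x : ℝ, ∫ y : ℝ, (x + s * Complex.I - y : ℂ)⁻¹ * (g x * f y) := by
        simp only [cauchyTransform, ← integral_const_mul]
        simp only [div_eq_inv_mul, mul_left_comm]
    _ = ∫ y : ℝ, ∫ x : ℝ, (x + s * Complex.I - y : ℂ)⁻¹ * (g x * f y) :=
        integral_integral_swap hint
    _ = _ := by
        simp only [cauchyTransform, ← integral_conj, ← integral_const_mul, ← integral_neg]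
        refine integral_congr_ae (.of_forall fun y => integral_congr_ae (.of_forall fun x => ?_))
        have hconj : conj (y + s * Complex.I - x : ℂ) = -(x + s * Complex.I - y) := by
          simp
          ring
        dsimp only
        rw [map_div₀, hconj, Complex.conj_conj, div_neg]
        ring

lemma exists_lintegral_cauchyTransform_rpow_le_of_dual (hpq : p.HolderConjugate q)
    (hq : ∃ C : ℝ≥0, ∀ f : ℝ → ℂ, MemLinftyC f → ∀ s : ℝ, 0 < s →
      ∫⁻ x : ℝ, ‖cauchyTransform f (x + s * Complex.I)‖ₑ ^ q ≤ C * ∫⁻ x, ‖f x‖ₑ ^ q) :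
    ∃ C : ℝ≥0, ∀ f : ℝ → ℂ, MemLinftyC f → ∀ s : ℝ, 0 < s →
      ∫⁻ x : ℝ, ‖cauchyTransform f (x + s * Complex.I)‖ₑ ^ p ≤ C * ∫⁻ x, ‖f x‖ₑ ^ p := by
  obtain ⟨C, hC⟩ := hq
  refine ⟨(C ^ q⁻¹) ^ p, fun f hf s hs => ?_⟩
  have hfi := hf.integrable volume
  have hpow : ((C ^ q⁻¹) ^ p : ℝ≥0) * ∫⁻ x, ‖f x‖ₑ ^ p =
      ((∫⁻ x, ‖f x‖ₑ ^ p) ^ p⁻¹ * C ^ q⁻¹) ^ p := by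
    rw [ENNReal.mul_rpow_of_nonneg _ _ hpq.nonneg, ENNReal.rpow_inv_rpow hpq.ne_zero, mul_comm,
      ENNReal.coe_rpow_of_nonneg _ hpq.nonneg, ENNReal.coe_rpow_of_nonneg _ hpq.symm.inv_nonneg]
  rw [hpow]
  refine lintegral_enorm_rpow_le_of_forall_enorm_integral_mul_le hpq
    (continuous_cauchyTransform_horizontal hfi hs) fun g hg => ?_
  have hgC : MemLinftyC fun x => conj (g x) :=
    hg.of_norm_le (Complex.continuous_conj.measurable.comp hg.measurable) (A := 1) (by simp)
  have hcont := continuous_cauchyTransform_horizontal (hgC.integrable volume) hs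
  rw [integral_mul_cauchyTransform hfi (hg.integrable volume) hs, enorm_neg]
  calc ‖∫ y : ℝ, f y * conj (cauchyTransform (fun x => conj (g x)) (y + s * Complex.I))‖ₑ
      ≤ ∫⁻ y : ℝ, ‖f y‖ₑ * ‖cauchyTransform (fun x => conj (g x)) (y + s * Complex.I)‖ₑ := by
        refine (enorm_integral_le_lintegral_enorm _).trans_eq ?_
        simp only [enorm_mul, RCLike.enorm_conj]
    _ ≤ (∫⁻ y, ‖f y‖ₑ ^ p) ^ p⁻¹ *
        (∫⁻ y : ℝ, ‖cauchyTransform (fun x => conj (g x)) (y + s * Complex.I)‖ₑ ^ q) ^ q⁻¹ := by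
        simpa only [one_div, Pi.mul_apply] using ENNReal.lintegral_mul_le_Lp_mul_Lq volume hpq
          hf.measurable.enorm.aemeasurable hcont.measurable.enorm.aemeasurable
    _ ≤ (∫⁻ y, ‖f y‖ₑ ^ p) ^ p⁻¹ * (C * ∫⁻ x, ‖g x‖ₑ ^ q) ^ q⁻¹ := by
        have hbound := hC _ hgC s hs
        simp only [RCLike.enorm_conj] at hbound
        have := hpq.symm.inv_nonneg
        gcongr
    _ = _ := by rw [ENNReal.mul_rpow_of_nonneg _ _ hpq.symm.inv_nonneg, mul_assoc]

theorem exists_lintegral_cauchyTransform_rpow_le (hp : 1 < p) :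
    ∃ C : ℝ≥0, ∀ f : ℝ → ℂ, MemLinftyC f → ∀ s : ℝ, 0 < s →
      ∫⁻ x : ℝ, ‖cauchyTransform f (x + s * Complex.I)‖ₑ ^ p ≤ C * ∫⁻ x, ‖f x‖ₑ ^ p := by
  rcases le_total p 2 with hp2 | hp2
  · exact exists_lintegral_cauchyTransform_rpow_le_of_le_two hp hp2
  have hpq := Real.HolderConjugate.conjExponent hp
  have hq2 : p.conjExponent ≤ 2 := by
    rw [Real.conjExponent, div_le_iff₀ (by linarith)]
    linarith
  exact exists_lintegral_cauchyTransform_rpow_le_of_dual hpq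
    (exists_lintegral_cauchyTransform_rpow_le_of_le_two hpq.symm.lt hq2)

end CauchyTransformLp

section Cotlar

variable {f : ℝ → ℂ} {s t : ℝ}

lemma cauchyTransform_sub_cauchyTransform (hf : Integrable f) {z w : ℂ} (hz : 0 < z.im)
    (hw : 0 < w.im) :
    cauchyTransform f z - cauchyTransform f w =
      (w - z) * cauchyTransform (fun y => f y / (w - y)) z := by
  simp only [cauchyTransform]
  rw [← integral_sub (integrable_div_sub_ofReal hf hz) (integrable_div_sub_ofReal hf hw),
    ← integral_const_mul]
  congr 1
  funext y
  have hzy := sub_ofReal_ne_zero hz y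
  have hwy := sub_ofReal_ne_zero hw y
  field_simp
  ring

lemma poisson_eq_div_mul (s t x y : ℝ) :
    (poisson t (x - y) : ℂ) = t / ((y + s * Complex.I - (x + (s + t : ℝ) * Complex.I)) *
      (y + s * Complex.I - (x + (s - t : ℝ) * Complex.I))) := by
  unfold poisson
  push_cast
  congr 1
  linear_combination (t : ℂ) ^ 2 * Complex.I_sq

lemma le_norm_sub_of_im_le {a : ℝ} {z w : ℂ} (hz : s ≤ z.im) (hw : w.im ≤ a) :
    s - a ≤ ‖z - w‖ :=
  (sub_le_sub hz hw).trans ((le_abs_self _).trans (by simpa using Complex.abs_im_le_norm (z - w)))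

lemma integral_cauchyTransform_div_eq_zero (hf : MemLinftyC f) (hs : 0 < s) {w : ℂ}
    (hw : w.im < s) :
    Integrable (fun y : ℝ => cauchyTransform f (y + s * Complex.I) / (y + s * Complex.I - w)) ∧
    ∫ y : ℝ, cauchyTransform f (y + s * Complex.I) / (y + s * Complex.I - w) = 0 := by
  obtain ⟨D, hD, hDb⟩ := exists_norm_cauchyTransform_le hf hs
  have hsw : 0 < s - w.im := sub_pos.2 hw
  have hsub (z : ℂ) (hz : s ≤ z.im) : s - w.im ≤ ‖z - w‖ := le_norm_sub_of_im_le hz le_rfl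
  have hG : DifferentiableOn ℂ (fun z => cauchyTransform f z / (z - w)) {z | s ≤ z.im} :=
    ((differentiableOn_cauchyTransform (hf.integrable volume)).mono fun z hz =>
      hs.trans_le hz).div (by fun_prop) fun z hz => norm_pos_iff.1 (hsw.trans_le (hsub z hz))
  have hb (z : ℂ) (hz : s ≤ z.im) : ‖cauchyTransform f z / (z - w)‖ ≤
      D * ((1 + ‖w‖) / (s - w.im) + 1) * (1 + ‖z‖) ^ (-2 : ℝ) := by
    have hpos : 0 < ‖z - w‖ := hsw.trans_le (hsub z hz)
    rw [norm_div, div_le_iff₀ hpos]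
    calc ‖cauchyTransform f z‖ ≤ D * (1 + ‖z‖)⁻¹ := hDb z hz
      _ = D * (1 + ‖z‖) ^ (-2 : ℝ) * (1 + ‖z‖) := by
        rw [rpow_neg (by positivity), rpow_two]
        field_simp
      _ ≤ D * (1 + ‖z‖) ^ (-2 : ℝ) * (((1 + ‖w‖) / (s - w.im) + 1) * ‖z - w‖) := by
        gcongr
        exact one_add_norm_le_mul_norm_sub hsw (hsub z hz)
      _ = _ := by ring
  exact ⟨integrable_horizontal_of_norm_le one_lt_two hG.continuousOn hb,
    integral_horizontal_eq_zero one_lt_two hG hb⟩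

lemma pi_mul_cauchyTransform_eq_integral_poisson_smul (hf : MemLinftyC f) (hs : 0 < s)
    (ht : 0 < t) (x : ℝ) :
    π * cauchyTransform f (x + (s + t : ℝ) * Complex.I) =
      ∫ y : ℝ, poisson t (x - y) • cauchyTransform f (y + s * Complex.I) := by
  set α : ℂ := x + (s + t : ℝ) * Complex.I with hα
  set β : ℂ := x + (s - t : ℝ) * Complex.I with hβ
  set g : ℝ → ℂ := fun y => f y / (α - y)
  have hαim : α.im = s + t := by simp [hα]
  have hβim : β.im = s - t := by simp [hβ]
  have hg : MemLinftyC g := hf.of_norm_le (hf.measurable.div (by fun_prop))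
    fun y => norm_div_sub_ofReal_le (add_pos hs ht) hαim.ge (f y) y
  obtain ⟨hGi, hG0⟩ := integral_cauchyTransform_div_eq_zero hg hs (w := β) (by linarith)
  have hsplit (y : ℝ) : poisson t (x - y) • cauchyTransform f (y + s * Complex.I) =
      poisson t (x - y) * cauchyTransform f α -
        t * (cauchyTransform g (y + s * Complex.I) / (y + s * Complex.I - β)) := by
    set z : ℂ := y + s * Complex.I with hz
    have hzim : z.im = s := by simp [hz]
    have hza : z - α ≠ 0 := fun h => by
      simpa [hzim, hαim, ht.ne'] using congrArg Complex.im h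
    have hzb : z - β ≠ 0 := fun h => by
      simpa [hzim, hβim, ht.ne'] using congrArg Complex.im h
    have hres : cauchyTransform f z - cauchyTransform f α = (α - z) * cauchyTransform g z :=
      cauchyTransform_sub_cauchyTransform (hf.integrable volume) (by linarith) (by linarith)
    have hpois : (poisson t (x - y) : ℂ) = t / ((z - α) * (z - β)) := poisson_eq_div_mul s t x y
    rw [Complex.real_smul, eq_add_of_sub_eq' hres, hpois]
    field_simp
    ring
  have hpois : Integrable fun y => (poisson t (x - y) : ℂ) :=
    ((integrable_poisson ht).comp_sub_left x).ofReal
  simp only [hsplit]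
  rw [integral_sub (hpois.mul_const _) (hGi.const_mul _), integral_const_mul, hG0,
    integral_mul_const, integral_complex_ofReal,
    integral_sub_left_eq_self (poisson t) volume x, integral_poisson ht, mul_zero, sub_zero]

theorem enorm_cauchyTransform_add_le (hf : MemLinftyC f) (hs : 0 < s) (ht : 0 < t) (x : ℝ) :
    ‖cauchyTransform f (x + (s + t : ℝ) * Complex.I)‖ₑ ≤
      maximalFunction volume (fun y : ℝ => ‖cauchyTransform f (y + s * Complex.I)‖ₑ) x := by
  have hπ : ENNReal.ofReal π ≠ 0 := by simpa using pi_pos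
  rw [← ENNReal.mul_le_mul_iff_right hπ ENNReal.ofReal_ne_top]
  convert enorm_integral_poisson_smul_le ht
    (continuous_cauchyTransform_horizontal (hf.integrable volume) hs).measurable x using 1
  rw [← pi_mul_cauchyTransform_eq_integral_poisson_smul hf hs ht, enorm_mul,
    ← ofReal_norm (π : ℂ), Complex.norm_of_nonneg pi_pos.le]

end Cotlar

theorem lintegral_rpow_le_of_le_liminf {α : Type*} [MeasurableSpace α] {μ : Measure α} {p : ℝ}
    (hp : 0 < p) {g : ℕ → α → ℝ≥0∞} {G : α → ℝ≥0∞} {A : ℝ≥0∞} (hg : ∀ k, Measurable (g k))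
    (hG : ∀ x, G x ≤ liminf (fun k => g k x) atTop) (hA : ∀ k, ∫⁻ x, g k x ^ p ∂μ ≤ A) :
    ∫⁻ x, G x ^ p ∂μ ≤ A := by
  calc ∫⁻ x, G x ^ p ∂μ ≤ ∫⁻ x, liminf (fun k => g k x ^ p) atTop ∂μ := by
        gcongr with x
        exact (ENNReal.rpow_le_rpow (hG x) hp.le).trans_eq
          (ENNReal.orderIsoRpow p hp).liminf_apply
    _ ≤ liminf (fun k => ∫⁻ x, g k x ^ p ∂μ) atTop :=
        lintegral_liminf_le fun k => (hg k).pow_const p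
    _ ≤ A := liminf_le_of_le (by isBoundedDefault) fun _ hb =>
        let ⟨k, hk⟩ := hb.exists
        hk.trans (hA k)

section MaximalCauchyTransform

variable {p s : ℝ} {f : ℝ → ℂ}

theorem exists_lintegral_iSup_cauchyTransform_rpow_le (hp : 1 < p) :
    ∃ C : ℝ≥0, ∀ f : ℝ → ℂ, MemLinftyC f →
      ∫⁻ x : ℝ, (⨆ (s : ℝ) (_ : 0 < s), ‖cauchyTransform f (x + s * Complex.I)‖ₑ) ^ p ≤
        C * ∫⁻ x, ‖f x‖ₑ ^ p := by
  obtain ⟨C₁, hC₁⟩ := exists_lintegral_maximalFunction_rpow_le (μ := (volume : Measure ℝ)) hp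
  obtain ⟨C₂, hC₂⟩ := exists_lintegral_cauchyTransform_rpow_le hp
  refine ⟨C₁ * C₂, fun f hf => ?_⟩
  have hs (k : ℕ) : (0 : ℝ) < 1 / (k + 1) := by positivity
  refine lintegral_rpow_le_of_le_liminf (by linarith) (fun k => measurable_maximalFunction
    (μ := volume) (g := fun y : ℝ => ‖cauchyTransform f (y + (1 / (k + 1) : ℝ) * Complex.I)‖ₑ))
    (fun x => iSup₂_le fun s hs0 => le_liminf_of_le (by isBoundedDefault) ?_) fun k => ?_
  · filter_upwards [tendsto_one_div_add_atTop_nhds_zero_nat.eventually_lt_const hs0] with k hk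
    simpa only [add_sub_cancel] using enorm_cauchyTransform_add_le hf (hs k) (sub_pos.2 hk) x
  · rw [ENNReal.coe_mul, mul_assoc]
    have hmeas := (continuous_cauchyTransform_horizontal (hf.integrable volume) (hs k)).measurable
    exact (hC₁ _ hmeas.enorm).trans (mul_le_mul_right (hC₂ f hf _ (hs k)) _)

lemma integral_conjPoisson_smul_eq (hf : MemLinftyC f) (hs : 0 < s) (x : ℝ) :
    ∫ y, conjPoisson s (x - y) • f y = cauchyTransform f (x + s * Complex.I) +
      Complex.I * ∫ y, poisson s (x - y) • f y := by
  have hfi := hf.integrable volume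
  rw [cauchyTransform, ← integral_const_mul, ← integral_add
    (integrable_div_sub_ofReal hfi (by simpa using hs))
    ((integrable_poisson_smul hs hfi x).const_mul _)]
  refine integral_congr_ae (.of_forall fun y => ?_)
  simp only [div_eq_mul_inv, inv_sub_ofReal_eq hs, Complex.real_smul]
  ring

end MaximalCauchyTransform

section DirectionalMaximal

variable {E : Type*} [NormedAddCommGroup E] [NormedSpace ℝ E]

/-- The maximal function of `f` along the line through `x` with direction `v`: it controls the
conjugate Poisson integral of `f` and the Poisson integral of `‖f‖` along that line, at all dyadic
heights. Only countably many heights are used, so that measurability is immediate. -/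
def directionalMaximal (f : E → ℂ) (v x : E) : ℝ≥0∞ :=
  ⨆ j : ℤ, (‖∫ r, conjPoisson (2 ^ j) r • f (x - r • v)‖ₑ +
    ∫⁻ r, ENNReal.ofReal (poisson (2 ^ j) r) * ‖f (x - r • v)‖ₑ)

lemma enorm_integral_conjPoisson_smul_le_directionalMaximal (f : E → ℂ) (v x : E) (j : ℤ) :
    ‖∫ r, conjPoisson (2 ^ j) r • f (x - r • v)‖ₑ ≤ directionalMaximal f v x :=
  le_self_add.trans (le_iSup_of_le j le_rfl)

lemma lintegral_poisson_mul_le_directionalMaximal (f : E → ℂ) (v x : E) (j : ℤ) :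
    ∫⁻ r, ENNReal.ofReal (poisson (2 ^ j) r) * ‖f (x - r • v)‖ₑ ≤ directionalMaximal f v x :=
  le_add_self.trans (le_iSup_of_le j le_rfl)

lemma directionalMaximal_one_le {f : ℝ → ℂ} (hf : MemLinftyC f) (x : ℝ) :
    directionalMaximal f 1 x ≤
      (⨆ (s : ℝ) (_ : 0 < s), ‖cauchyTransform f (x + s * Complex.I)‖ₑ) +
        2 * ENNReal.ofReal π * maximalFunction volume (fun y => ‖f y‖ₑ) x := by
  refine iSup_le fun j => ?_
  have hs : (0 : ℝ) < 2 ^ j := by positivity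
  have hconj : ∫ r, conjPoisson (2 ^ j) r • f (x - r • (1 : ℝ)) =
      ∫ y, conjPoisson (2 ^ j) (x - y) • f y := by
    rw [← integral_sub_left_eq_self (fun y => conjPoisson (2 ^ j) (x - y) • f y) volume x]
    simp only [smul_eq_mul, mul_one, sub_sub_cancel]
  have hpois : ∫⁻ r, ENNReal.ofReal (poisson (2 ^ j) r) * ‖f (x - r • (1 : ℝ))‖ₑ =
      ∫⁻ y, ENNReal.ofReal (poisson (2 ^ j) (x - y)) * ‖f y‖ₑ := by
    rw [← lintegral_sub_left_eq_self
      (fun y => ENNReal.ofReal (poisson (2 ^ j) (x - y)) * ‖f y‖ₑ) x]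
    simp only [smul_eq_mul, mul_one, sub_sub_cancel]
  rw [hconj, hpois, integral_conjPoisson_smul_eq hf hs, mul_assoc, two_mul, ← add_assoc]
  gcongr
  · refine (enorm_add_le _ _).trans (add_le_add (le_iSup₂_of_le _ hs le_rfl) ?_)
    rw [enorm_mul, ← ofReal_norm Complex.I, Complex.norm_I, ENNReal.ofReal_one, one_mul]
    exact enorm_integral_poisson_smul_le hs hf.measurable x
  · exact lintegral_poisson_mul_le hs hf.measurable.enorm x

theorem exists_lintegral_directionalMaximal_one_rpow_le {p : ℝ} (hp : 1 < p) :
    ∃ C : ℝ≥0, ∀ f : ℝ → ℂ, MemLinftyC f →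
      ∫⁻ x, directionalMaximal f 1 x ^ p ≤ C * ∫⁻ x, ‖f x‖ₑ ^ p := by
  obtain ⟨C₁, hC₁⟩ := exists_lintegral_iSup_cauchyTransform_rpow_le hp
  obtain ⟨C₂, hC₂⟩ := exists_lintegral_maximalFunction_rpow_le (μ := (volume : Measure ℝ)) hp
  have hp0 : 0 ≤ p := by linarith
  set c : ℝ≥0 := 2 * Real.toNNReal π
  refine ⟨2 ^ (p - 1) * (C₁ + c ^ p * C₂), fun f hf => ?_⟩
  set M := maximalFunction volume fun y => ‖f y‖ₑ
  set N : ℝ → ℝ≥0∞ := fun x =>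
    ⨆ (s : ℝ) (_ : 0 < s), ‖cauchyTransform f (x + s * Complex.I)‖ₑ
  calc ∫⁻ x, directionalMaximal f 1 x ^ p
      ≤ ∫⁻ x, 2 ^ (p - 1) * (N x ^ p + c ^ p * M x ^ p) := by
        gcongr with x
        rw [← ENNReal.mul_rpow_of_nonneg _ _ hp0]
        exact (ENNReal.rpow_le_rpow (directionalMaximal_one_le hf x) hp0).trans
          (ENNReal.rpow_add_le_mul_rpow_add_rpow _ _ hp.le)
    _ = 2 ^ (p - 1) * ((∫⁻ x, N x ^ p) + c ^ p * ∫⁻ x, M x ^ p) := by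
        have hM : Measurable M := measurable_maximalFunction
        rw [lintegral_const_mul' _ _ (by finiteness),
          lintegral_add_right _ ((hM.pow_const p).const_mul _),
          lintegral_const_mul' _ _ (by finiteness)]
    _ ≤ 2 ^ (p - 1) * (C₁ * (∫⁻ x, ‖f x‖ₑ ^ p) + c ^ p * (C₂ * ∫⁻ x, ‖f x‖ₑ ^ p)) := by
        gcongr
        · exact hC₁ f hf
        · exact hC₂ _ hf.measurable.enorm
    _ = _ := by
        push_cast [ENNReal.coe_rpow_of_nonneg _ hp0,
          ENNReal.coe_rpow_of_nonneg _ (sub_nonneg.2 hp.le)]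
        ring

end DirectionalMaximal

section Lines

variable {E : Type*} [NormedAddCommGroup E] [NormedSpace ℝ E] {f : E → ℂ} {v : E}

lemma directionalMaximal_add_smul (f : E → ℂ) (v w : E) (r : ℝ) :
    directionalMaximal f v (w + r • v) = directionalMaximal (fun t : ℝ => f (w + t • v)) 1 r := by
  simp only [directionalMaximal, smul_eq_mul, mul_one, sub_smul, add_sub_assoc]

variable [MeasurableSpace E] [BorelSpace E]

lemma MemLinftyC.comp_line (hf : MemLinftyC f) (hv : v ≠ 0) (w : E) :
    MemLinftyC fun r : ℝ => f (w + r • v) := by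
  obtain ⟨hm, ⟨B, hB⟩, R, hR⟩ := hf
  refine ⟨hm.comp (by fun_prop), ⟨B, fun r => hB _⟩, (R + ‖w‖) / ‖v‖, fun r hr => hR _ ?_⟩
  rw [div_lt_iff₀ (norm_pos_iff.2 hv), ← norm_smul] at hr
  rw [add_comm w]
  linarith [norm_le_add_norm_add (r • v) w]

variable [FiniteDimensional ℝ E]

theorem exists_lintegral_eq_lintegral_lines (μ : Measure E) [μ.IsAddHaarMeasure] (hv : v ≠ 0) :
    ∃ ν : Measure E, ∀ F : E → ℝ≥0∞, Measurable F →
      ∫⁻ x, F x ∂μ = ∫⁻ w, (∫⁻ r : ℝ, F (w + r • v)) ∂ν := by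
  obtain ⟨φ, hφ⟩ := SeparatingDual.exists_eq_one (R := ℝ) hv
  set L := ContinuousLinearEquiv.equivOfRightInverse φ (ContinuousLinearMap.toSpanSingleton ℝ v)
    (fun r => by simp [hφ]) with hL
  have hL_symm (z : ℝ × φ.ker) : L.symm z = z.2 + z.1 • v := by
    rw [hL, ContinuousLinearEquiv.equivOfRightInverse_symm_apply]
    simp [add_comm]
  set η : Measure φ.ker := Measure.addHaar
  set μ' : Measure E := ((volume : Measure ℝ).prod η).map L.symm
  have : μ'.IsAddHaarMeasure := L.symm.isAddHaarMeasure_map _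
  refine ⟨Measure.addHaarScalarFactor μ μ' • η.map Subtype.val, fun F hF => ?_⟩
  have hFline : Measurable fun w : E => ∫⁻ r : ℝ, F (w + r • v) :=
    (show Measurable fun z : E × ℝ => F (z.1 + z.2 • v) from
      hF.comp (by fun_prop)).lintegral_prod_right'
  conv_lhs => rw [Measure.isAddLeftInvariant_eq_smul μ μ']
  rw [lintegral_smul_measure, lintegral_smul_measure]
  congr 1
  rw [lintegral_map hF L.symm.continuous.measurable,
    lintegral_prod_symm (fun z => F (L.symm z))
      (hF.comp L.symm.continuous.measurable).aemeasurable,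
    lintegral_map hFline measurable_subtype_coe]
  simp only [hL_symm]

lemma measurable_directionalMaximal {α : Type*} [MeasurableSpace α] (hf : Measurable f)
    {g h : α → E} (hg : Measurable g) (hh : Measurable h) :
    Measurable fun a => directionalMaximal f (g a) (h a) := by
  refine Measurable.iSup fun j => ?_
  have hs : (0 : ℝ) < 2 ^ j := by positivity
  have hline : Measurable fun z : α × ℝ => f (h z.1 - z.2 • g z.1) := hf.comp (by fun_prop)
  have hconj : StronglyMeasurable fun z : α × ℝ =>
      conjPoisson (2 ^ j) z.2 • f (h z.1 - z.2 • g z.1) :=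
    (((measurable_conjPoisson _).comp measurable_snd).smul hline).stronglyMeasurable
  have hpois : Measurable fun z : α × ℝ =>
      ENNReal.ofReal (poisson (2 ^ j) z.2) * ‖f (h z.1 - z.2 • g z.1)‖ₑ :=
    ((continuous_poisson hs).measurable.comp measurable_snd).ennreal_ofReal.mul hline.enorm
  exact hconj.integral_prod_right'.measurable.enorm.add hpois.lintegral_prod_right'

theorem exists_lintegral_directionalMaximal_rpow_le (μ : Measure E) [μ.IsAddHaarMeasure] {p : ℝ}
    (hp : 1 < p) :
    ∃ C : ℝ≥0, ∀ f : E → ℂ, MemLinftyC f → ∀ v : E, v ≠ 0 →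
      ∫⁻ x, directionalMaximal f v x ^ p ∂μ ≤ C * ∫⁻ x, ‖f x‖ₑ ^ p ∂μ := by
  obtain ⟨C, hC⟩ := exists_lintegral_directionalMaximal_one_rpow_le hp
  refine ⟨C, fun f hf v hv => ?_⟩
  obtain ⟨ν, hν⟩ := exists_lintegral_eq_lintegral_lines μ hv
  have hmeas : Measurable fun x => directionalMaximal f v x :=
    measurable_directionalMaximal hf.measurable measurable_const measurable_id
  rw [hν _ (hmeas.pow_const p), hν _ (hf.measurable.enorm.pow_const p),
    ← lintegral_const_mul' _ _ (by finiteness)]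
  gcongr with w
  simp only [directionalMaximal_add_smul]
  exact hC _ (hf.comp_line hv w)

end Lines

lemma lintegral_rpow_le_measure_univ_rpow_mul {α : Type*} [MeasurableSpace α] {μ : Measure α}
    {p : ℝ} (hp : 1 ≤ p) {g : α → ℝ≥0∞} (hg : AEMeasurable g μ) :
    (∫⁻ a, g a ∂μ) ^ p ≤ μ Set.univ ^ (p - 1) * ∫⁻ a, g a ^ p ∂μ := by
  have hp0 : 0 < p := by linarith
  have h := ENNReal.rpow_le_rpow
    (eLpNorm'_le_eLpNorm'_mul_rpow_measure_univ one_pos hp hg.aestronglyMeasurable) hp0.le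
  simp only [eLpNorm', enorm_eq_self, ENNReal.rpow_one, div_one,
    ENNReal.mul_rpow_of_nonneg _ _ hp0.le, ← ENNReal.rpow_mul, one_div_mul_cancel hp0.ne', sub_mul,
    one_mul] at h
  rwa [mul_comm]

section PolarCoordinates

variable {E : Type*} [NormedAddCommGroup E] [NormedSpace ℝ E]

lemma smul_homeomorphUnitSphereProd (x : ({0}ᶜ : Set E)) :
    ((homeomorphUnitSphereProd E x).2 : ℝ) • ((homeomorphUnitSphereProd E x).1 : E) = x := by
  rw [← homeomorphUnitSphereProd_symm_apply_coe, Homeomorph.symm_apply_apply]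

variable [FiniteDimensional ℝ E] [Nontrivial E] [MeasurableSpace E] [BorelSpace E]
  (μ : Measure E) [μ.IsAddHaarMeasure]

theorem lintegral_eq_lintegral_sphere_Ioi {F : E → ℝ≥0∞} (hF : Measurable F) :
    ∫⁻ w, F w ∂μ = ∫⁻ θ : sphere (0 : E) 1, (∫⁻ r in Set.Ioi (0 : ℝ),
      ENNReal.ofReal (r ^ (Module.finrank ℝ E - 1)) * F (r • (θ : E))) ∂μ.toSphere := by
  set G : sphere (0 : E) 1 × Set.Ioi (0 : ℝ) → ℝ≥0∞ := fun z => F ((z.2 : ℝ) • (z.1 : E))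
  have hG : Measurable G := hF.comp (by fun_prop)
  calc ∫⁻ w, F w ∂μ
      = ∫⁻ x : ({0}ᶜ : Set E), G (homeomorphUnitSphereProd E x) ∂(μ.comap (↑)) := by
        simp only [G, smul_homeomorphUnitSphereProd]
        rw [lintegral_subtype_comap (measurableSet_singleton _).compl, restrict_compl_singleton]
    _ = ∫⁻ z, G z ∂(μ.toSphere.prod (.volumeIoiPow (Module.finrank ℝ E - 1))) :=
        μ.measurePreserving_homeomorphUnitSphereProd.lintegral_comp hG
    _ = ∫⁻ θ : sphere (0 : E) 1, (∫⁻ r : Set.Ioi (0 : ℝ), G (θ, r)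
          ∂(.volumeIoiPow (Module.finrank ℝ E - 1))) ∂μ.toSphere :=
        lintegral_prod _ hG.aemeasurable
    _ = _ := by
        congr 1 with θ
        have hGθ : Measurable fun r : Set.Ioi (0 : ℝ) => G (θ, r) := hG.comp measurable_prodMk_left
        rw [Measure.volumeIoiPow, lintegral_withDensity_eq_lintegral_mul _ (by fun_prop) hGθ]
        exact lintegral_subtype_comap measurableSet_Ioi
          fun r : ℝ => ENNReal.ofReal (r ^ (Module.finrank ℝ E - 1)) * F (r • (θ : E))

theorem integral_eq_integral_sphere_Ioi {V : Type*} [NormedAddCommGroup V] [NormedSpace ℝ V]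
    {F : E → V} (hF : Integrable F μ) :
    ∫ w, F w ∂μ = ∫ θ : sphere (0 : E) 1, (∫ r in Set.Ioi (0 : ℝ),
      r ^ (Module.finrank ℝ E - 1) • F (r • (θ : E))) ∂μ.toSphere := by
  set G : sphere (0 : E) 1 × Set.Ioi (0 : ℝ) → V := fun z => F ((z.2 : ℝ) • (z.1 : E)) with hG
  have hpres := μ.measurePreserving_homeomorphUnitSphereProd
  have hemb := (homeomorphUnitSphereProd E).measurableEmbedding
  have hGF : G ∘ homeomorphUnitSphereProd E = F ∘ Subtype.val := by
    ext x
    simp only [hG, Function.comp_apply, smul_homeomorphUnitSphereProd]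
  have hGi : Integrable G (μ.toSphere.prod (.volumeIoiPow (Module.finrank ℝ E - 1))) := by
    rw [← hpres.integrable_comp_emb hemb, hGF]
    exact (integrableOn_iff_comap_subtypeVal (measurableSet_singleton (0 : E)).compl).1
      hF.integrableOn
  calc ∫ w, F w ∂μ
      = ∫ x : ({0}ᶜ : Set E), (G ∘ homeomorphUnitSphereProd E) x ∂(μ.comap (↑)) := by
        rw [hGF]
        exact ((integral_subtype_comap (measurableSet_singleton _).compl F).trans
          (by rw [restrict_compl_singleton])).symm
    _ = ∫ z, G z ∂(μ.toSphere.prod (.volumeIoiPow (Module.finrank ℝ E - 1))) :=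
        hpres.integral_comp hemb G
    _ = ∫ θ : sphere (0 : E) 1, (∫ r : Set.Ioi (0 : ℝ), G (θ, r)
          ∂(.volumeIoiPow (Module.finrank ℝ E - 1))) ∂μ.toSphere :=
        integral_prod _ hGi
    _ = _ := by
        congr 1 with θ
        simp only [Measure.volumeIoiPow, ENNReal.ofReal]
        rw [integral_withDensity_eq_integral_smul
            (measurable_subtype_coe.pow_const _).real_toNNReal,
          integral_subtype_comap measurableSet_Ioi
            fun r : ℝ => Real.toNNReal (r ^ (Module.finrank ℝ E - 1)) • F (r • (θ : E))]
        refine setIntegral_congr_fun measurableSet_Ioi fun r hr => ?_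
        rw [NNReal.smul_def, Real.coe_toNNReal _ (pow_nonneg (Set.mem_Ioi.1 hr).le _)]

end PolarCoordinates

section RotationMaximal

variable {E : Type*} [NormedAddCommGroup E] [NormedSpace ℝ E] [MeasurableSpace E]

/-- The average over all directions of the maximal functions of `f` along lines; the method of
rotations bounds singular integrals with odd kernels by it. -/
def rotationMaximal (μ : Measure E) (f : E → ℂ) (x : E) : ℝ≥0∞ :=
  ∫⁻ θ : sphere (0 : E) 1, directionalMaximal f θ x ∂μ.toSphere

variable [BorelSpace E] [FiniteDimensional ℝ E] (μ : Measure E) [μ.IsAddHaarMeasure]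

lemma measurable_rotationMaximal {f : E → ℂ} (hf : Measurable f) :
    Measurable (rotationMaximal μ f) :=
  (measurable_directionalMaximal hf (measurable_subtype_coe.comp measurable_snd)
    measurable_fst).lintegral_prod_right'

theorem exists_lintegral_rotationMaximal_rpow_le {p : ℝ} (hp : 1 < p) :
    ∃ C : ℝ≥0, ∀ f : E → ℂ, MemLinftyC f →
      ∫⁻ x, rotationMaximal μ f x ^ p ∂μ ≤ C * ∫⁻ x, ‖f x‖ₑ ^ p ∂μ := by
  obtain ⟨C, hC⟩ := exists_lintegral_directionalMaximal_rpow_le μ hp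
  set A : ℝ≥0 := (μ.toSphere Set.univ).toNNReal
  have hA : μ.toSphere Set.univ = A := (ENNReal.coe_toNNReal (measure_ne_top _ _)).symm
  have hp0 : 0 ≤ p - 1 := by linarith
  refine ⟨A ^ (p - 1) * (C * A), fun f hf => ?_⟩
  calc ∫⁻ x, rotationMaximal μ f x ^ p ∂μ
      ≤ ∫⁻ x, A ^ (p - 1) *
          ∫⁻ θ : sphere (0 : E) 1, directionalMaximal f θ x ^ p ∂μ.toSphere ∂μ := by
        gcongr with x
        rw [← hA]
        exact lintegral_rpow_le_measure_univ_rpow_mul hp.le (measurable_directionalMaximal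
          hf.measurable measurable_subtype_coe measurable_const).aemeasurable
    _ = A ^ (p - 1) *
          ∫⁻ θ : sphere (0 : E) 1, ∫⁻ x, directionalMaximal f θ x ^ p ∂μ ∂μ.toSphere := by
        rw [lintegral_const_mul' _ _ (by finiteness), lintegral_lintegral_swap]
        exact ((measurable_directionalMaximal hf.measurable
          (measurable_subtype_coe.comp measurable_snd) measurable_fst).pow_const p).aemeasurable
    _ ≤ A ^ (p - 1) * ∫⁻ _ : sphere (0 : E) 1, C * ∫⁻ x, ‖f x‖ₑ ^ p ∂μ ∂μ.toSphere := by
        gcongr with θ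
        exact hC f hf θ (ne_zero_of_mem_unit_sphere θ)
    _ = _ := by
        rw [lintegral_const, hA]
        push_cast [ENNReal.coe_rpow_of_nonneg _ hp0]
        ring

end RotationMaximal

section Homogeneous

variable {H V : Type*} [NormedAddCommGroup H] [NormedSpace ℝ H] [NormedAddCommGroup V]
  [NormedSpace ℝ V] {a : ℤ} {K : H → V}

/-- `K` is positively homogeneous of degree `a` on the complement of the origin; its value at the
origin is arbitrary. -/
def IsPosHomogeneous (a : ℤ) (K : H → V) : Prop :=
  ∀ ⦃l : ℝ⦄, 0 < l → ∀ ⦃x : H⦄, x ≠ 0 → K (l • x) = l ^ a • K x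

lemma IsPosHomogeneous.eq_zpow_smul (hK : IsPosHomogeneous a K) {l : ℝ} (hl : 0 < l) {x : H}
    (hx : x ≠ 0) : K x = l ^ a • K (l⁻¹ • x) := by
  rw [← hK hl (smul_ne_zero (inv_ne_zero hl.ne') hx), smul_inv_smul₀ hl.ne']

lemma IsPosHomogeneous.norm_le (hK : IsPosHomogeneous a K) {B : ℝ}
    (hB : ∀ θ : sphere (0 : H) 1, ‖K θ‖ ≤ B) {x : H} (hx : x ≠ 0) : ‖K x‖ ≤ B * ‖x‖ ^ a := by
  have hx0 : 0 < ‖x‖ := norm_pos_iff.2 hx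
  rw [hK.eq_zpow_smul hx0 hx, norm_smul, norm_of_nonneg (by positivity), mul_comm]
  gcongr
  exact hB ⟨_, by simpa using norm_smul_inv_norm (𝕜 := ℝ) hx⟩

end Homogeneous

section RadialIntegrability

variable {E : Type*} [NormedAddCommGroup E] [NormedSpace ℝ E] [FiniteDimensional ℝ E]
  [Nontrivial E] [MeasurableSpace E] [BorelSpace E] (μ : Measure E) [μ.IsAddHaarMeasure]

lemma integrable_indicator_closedBall_inv_norm_pow (R : ℝ) :
    Integrable ((closedBall 0 R).indicator fun w => (‖w‖ ^ (Module.finrank ℝ E - 1))⁻¹) μ := by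
  have hradial : (closedBall (0 : E) R).indicator (fun w => (‖w‖ ^ (Module.finrank ℝ E - 1))⁻¹) =
      fun w => (Set.Iic R).indicator (fun r => (r ^ (Module.finrank ℝ E - 1))⁻¹) ‖w‖ := by
    ext w
    simp only [Set.indicator, mem_closedBall_zero_iff, Set.mem_Iic]
  rw [hradial, integrable_fun_norm_addHaar μ]
  have hconst : IntegrableOn ((Set.Iic R).indicator fun _ => (1 : ℝ)) (Set.Ioi (0 : ℝ)) := by
    rw [IntegrableOn, integrable_indicator_iff measurableSet_Iic, IntegrableOn,
      Measure.restrict_restrict measurableSet_Iic, Set.Iic_inter_Ioi]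
    exact integrableOn_const (by simp)
  refine hconst.congr_fun (fun r hr => ?_) measurableSet_Ioi
  simp only [Set.indicator, smul_eq_mul, mul_ite, mul_zero,
    mul_inv_cancel₀ (pow_pos (Set.mem_Ioi.1 hr) _).ne']

variable {μ}

lemma MemLinftyC.integrable_comp_sub_mul {f : E → ℂ} (hf : MemLinftyC f) {k : E → ℂ}
    (hk : Measurable k) {A : ℝ} (hkA : ∀ w, ‖k w‖ ≤ A * (‖w‖ ^ (Module.finrank ℝ E - 1))⁻¹)
    (x : E) : Integrable (fun w => f (x - w) * k w) μ := by
  obtain ⟨hfm, ⟨B, hB⟩, R, hR⟩ := hf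
  refine ((integrable_indicator_closedBall_inv_norm_pow μ (R + ‖x‖)).const_mul (B * A)).mono'
    (by fun_prop) (.of_forall fun w => ?_)
  rw [norm_mul, Set.indicator]
  split_ifs with hw
  · rw [mul_assoc]
    exact mul_le_mul (hB _) (hkA w) (norm_nonneg _) ((norm_nonneg _).trans (hB 0))
  · rw [mem_closedBall_zero_iff, not_le] at hw
    rw [hR (x - w) (by linarith [norm_sub_norm_le w x, norm_sub_rev w x]), norm_zero, zero_mul,
      mul_zero]

end RadialIntegrability

section Rotations

variable {E : Type*} [NormedAddCommGroup E] {k : E → ℂ} {s : ℝ}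

lemma integral_Ioi_add_comp_neg {V : Type*} [NormedAddCommGroup V] [NormedSpace ℝ V] {h : ℝ → V}
    (hh : Integrable h) : ∫ r in Set.Ioi 0, (h r + h (-r)) = ∫ r, h r := by
  rw [integral_add hh.integrableOn hh.comp_neg.integrableOn, integral_comp_neg_Ioi, neg_zero,
    add_comm, intervalIntegral.integral_Iic_add_Ioi hh.integrableOn hh.integrableOn]

/-- A smooth substitute for the truncation of the kernel `k` to `{w | s < ‖w‖}`: in polar
coordinates, the radial part of a kernel of degree `-dim E` becomes the conjugate Poisson kernel. -/
def smoothTruncation (k : E → ℂ) (s : ℝ) (w : E) : ℂ := (‖w‖ * conjPoisson s ‖w‖) • k w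

lemma smoothTruncation_neg (hk : Function.Odd k) (w : E) :
    smoothTruncation k s (-w) = -smoothTruncation k s w := by
  rw [smoothTruncation, hk, norm_neg, smul_neg, smoothTruncation]

lemma measurable_smoothTruncation [MeasurableSpace E] [BorelSpace E] (hk : Measurable k) :
    Measurable (smoothTruncation k s) :=
  (measurable_norm.mul ((measurable_conjPoisson s).comp measurable_norm)).smul hk

variable [NormedSpace ℝ E]

lemma pow_smul_smoothTruncation_smul {m : ℕ} (hk : IsPosHomogeneous (-(m + 1)) k) {r : ℝ}
    (hr : 0 < r) (θ : sphere (0 : E) 1) :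
    r ^ m • smoothTruncation k s (r • (θ : E)) = conjPoisson s r • k θ := by
  have hθ : ‖(θ : E)‖ = 1 := norm_eq_of_mem_sphere θ
  rw [smoothTruncation, hk hr (ne_zero_of_mem_unit_sphere θ), smul_smul, smul_smul, norm_smul, hθ,
    mul_one, norm_of_nonneg hr.le]
  congr 1
  rw [← Nat.cast_succ, zpow_neg, zpow_natCast, pow_succ]
  field_simp

lemma norm_smoothTruncation_le {m : ℕ} (hk : IsPosHomogeneous (-(m + 1)) k) {B : ℝ} (hB0 : 0 ≤ B)
    (hB : ∀ θ : sphere (0 : E) 1, ‖k θ‖ ≤ B) (hs : 0 < s) (w : E) :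
    ‖smoothTruncation k s w‖ ≤ s⁻¹ * B * (‖w‖ ^ m)⁻¹ := by
  rcases eq_or_ne w 0 with rfl | hw
  · rw [smoothTruncation, norm_zero, zero_mul, zero_smul, norm_zero]
    positivity
  have : 0 < ‖w‖ := norm_pos_iff.2 hw
  calc ‖smoothTruncation k s w‖ = ‖w‖ * ‖conjPoisson s ‖w‖‖ * ‖k w‖ := by
        rw [smoothTruncation, norm_smul, norm_mul, norm_norm]
    _ ≤ ‖w‖ * s⁻¹ * (B * ‖w‖ ^ (-(m + 1 : ℤ))) := by
        gcongr
        exacts [norm_conjPoisson_le hs _, hk.norm_le hB hw]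
    _ = s⁻¹ * B * (‖w‖ ^ m)⁻¹ := by
        rw [← Nat.cast_succ, zpow_neg, zpow_natCast, pow_succ]
        field_simp

variable [FiniteDimensional ℝ E] [Nontrivial E] [MeasurableSpace E] [BorelSpace E]
  {μ : Measure E} [μ.IsAddHaarMeasure] {f : E → ℂ}

lemma lintegral_radial_poisson_mul_le_rotationMaximal (hf : Measurable f) (j : ℤ) (x : E) :
    ∫⁻ w, ENNReal.ofReal ((‖w‖ ^ (Module.finrank ℝ E - 1))⁻¹ * poisson (2 ^ j) ‖w‖) *
      ‖f (x - w)‖ₑ ∂μ ≤ rotationMaximal μ f x := by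
  have hp := (continuous_poisson (zpow_pos (two_pos (α := ℝ)) j)).measurable
  rw [lintegral_eq_lintegral_sphere_Ioi μ (by fun_prop)]
  refine lintegral_mono fun θ => ?_
  calc _ = ∫⁻ r in Set.Ioi (0 : ℝ), ENNReal.ofReal (poisson (2 ^ j) r) *
          ‖f (x - r • (θ : E))‖ₑ := by
        refine setLIntegral_congr_fun measurableSet_Ioi fun r hr => ?_
        have hr0 : 0 < r := hr
        have hnorm : ‖r • (θ : E)‖ = r := by
          rw [norm_smul, norm_eq_of_mem_sphere θ, mul_one, norm_of_nonneg hr0.le]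
        simp only [hnorm]
        rw [← mul_assoc, ← ENNReal.ofReal_mul (by positivity),
          mul_inv_cancel_left₀ (by positivity)]
    _ ≤ ∫⁻ r, ENNReal.ofReal (poisson (2 ^ j) r) * ‖f (x - r • (θ : E))‖ₑ :=
        setLIntegral_le_lintegral _ _
    _ ≤ directionalMaximal f θ x := lintegral_poisson_mul_le_directionalMaximal f θ x j

variable {m : ℕ} {B : ℝ}

lemma MemLinftyC.integrable_mul_smoothTruncation (hf : MemLinftyC f) (hk : Measurable k)
    (hm : Module.finrank ℝ E = m + 1) (hhom : IsPosHomogeneous (-(m + 1)) k)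
    (hB : ∀ θ : sphere (0 : E) 1, ‖k θ‖ ≤ B) (hs : 0 < s) (x : E) :
    Integrable (fun w => f (x - w) * smoothTruncation k s w) μ := by
  obtain ⟨θ⟩ : Nonempty (sphere (0 : E) 1) := (NormedSpace.sphere_nonempty.2 zero_le_one).to_subtype
  refine hf.integrable_comp_sub_mul (A := s⁻¹ * B) (measurable_smoothTruncation hk) ?_ x
  rw [hm, Nat.add_sub_cancel]
  exact norm_smoothTruncation_le hhom ((norm_nonneg _).trans (hB θ)) hB hs

theorem two_mul_integral_mul_smoothTruncation_eq (hf : MemLinftyC f) (hk : Measurable k)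
    (hodd : Function.Odd k) (hm : Module.finrank ℝ E = m + 1)
    (hhom : IsPosHomogeneous (-(m + 1)) k) (hB : ∀ θ : sphere (0 : E) 1, ‖k θ‖ ≤ B) (hs : 0 < s)
    (x : E) : 2 * ∫ w, f (x - w) * smoothTruncation k s w ∂μ =
      ∫ θ : sphere (0 : E) 1, (∫ r, conjPoisson s r • f (x - r • (θ : E))) * k θ ∂μ.toSphere := by
  have hFi := hf.integrable_mul_smoothTruncation (μ := μ) hk hm hhom hB hs x
  set F : E → ℂ := fun w => f (x - w) * smoothTruncation k s w with hF
  have hsymm : 2 * ∫ w, F w ∂μ = ∫ w, (F w + F (-w)) ∂μ := by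
    rw [integral_add hFi hFi.comp_neg, integral_neg_eq_self, two_mul]
  rw [hsymm, integral_eq_integral_sphere_Ioi μ (F := fun w => F w + F (-w)) (hFi.add hFi.comp_neg)]
  congr 1 with θ
  set h : ℝ → ℂ := fun r => conjPoisson s r • f (x - r • (θ : E)) with hh
  have hhi : Integrable h := by
    have hline := hf.comp_line (neg_ne_zero.2 (ne_zero_of_mem_unit_sphere θ)) x
    simp only [smul_neg, ← sub_eq_add_neg] at hline
    exact (hline.integrable volume).bdd_smul s⁻¹ (measurable_conjPoisson s).aestronglyMeasurable
      (.of_forall (norm_conjPoisson_le hs))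
  calc _ = ∫ r in Set.Ioi (0 : ℝ), (h r + h (-r)) * k θ := by
        refine setIntegral_congr_fun measurableSet_Ioi fun r hr => ?_
        have hpolar := pow_smul_smoothTruncation_smul (s := s) hhom (Set.mem_Ioi.1 hr) θ
        simp only [hF, hh, smoothTruncation_neg hodd, hm, Nat.add_sub_cancel, conjPoisson_neg]
        rw [mul_neg, smul_add, smul_neg, ← mul_smul_comm, ← mul_smul_comm, hpolar, neg_smul r,
          sub_neg_eq_add]
        simp only [Complex.real_smul, Complex.ofReal_neg]
        ring
    _ = (∫ r, h r) * k θ := by rw [integral_mul_const, integral_Ioi_add_comp_neg hhi]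

theorem enorm_integral_mul_smoothTruncation_le (hf : MemLinftyC f) (hk : Measurable k)
    (hodd : Function.Odd k) (hm : Module.finrank ℝ E = m + 1)
    (hhom : IsPosHomogeneous (-(m + 1)) k) (hB : ∀ θ : sphere (0 : E) 1, ‖k θ‖ ≤ B) (j : ℤ)
    (x : E) : ‖∫ w, f (x - w) * smoothTruncation k (2 ^ j) w ∂μ‖ₑ ≤
      ENNReal.ofReal B * rotationMaximal μ f x := by
  calc ‖∫ w, f (x - w) * smoothTruncation k (2 ^ j) w ∂μ‖ₑ
      ≤ ‖2 * ∫ w, f (x - w) * smoothTruncation k (2 ^ j) w ∂μ‖ₑ := by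
        rw [enorm_mul]
        refine le_mul_of_one_le_left zero_le ?_
        rw [← ofReal_norm]
        simp
    _ ≤ ∫⁻ θ : sphere (0 : E) 1, ENNReal.ofReal B * directionalMaximal f θ x ∂μ.toSphere := by
        rw [two_mul_integral_mul_smoothTruncation_eq hf hk hodd hm hhom hB (by positivity)]
        refine (enorm_integral_le_lintegral_enorm _).trans (lintegral_mono fun θ => ?_)
        rw [enorm_mul, mul_comm]
        gcongr
        · rw [← ofReal_norm]
          exact ENNReal.ofReal_le_ofReal (hB θ)
        · exact enorm_integral_conjPoisson_smul_le_directionalMaximal f θ x j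
    _ = _ := lintegral_const_mul' _ _ ENNReal.ofReal_ne_top

end Rotations

section HomogeneousRegularity

variable {H V : Type*} [NormedAddCommGroup H] [NormedSpace ℝ H] [FiniteDimensional ℝ H]
  [NormedAddCommGroup V]

lemma exists_forall_sphere_norm_le {K : H → V} (hK : ContinuousOn K {x | x ≠ 0}) :
    ∃ B : ℝ, 0 ≤ B ∧ ∀ θ : sphere (0 : H) 1, ‖K θ‖ ≤ B := by
  obtain ⟨B, hB⟩ := (isCompact_sphere (0 : H) 1).exists_bound_of_continuousOn
    (hK.mono fun x hx => ne_zero_of_mem_unit_sphere ⟨x, hx⟩)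
  exact ⟨max B 0, le_max_right _ _, fun θ => (hB θ θ.2).trans (le_max_left _ _)⟩

variable [NormedSpace ℝ V]

lemma exists_norm_sub_le_of_norm_eq_one {K : H → V} (hK : ContDiffOn ℝ 1 K {x | x ≠ 0}) :
    ∃ D : ℝ, 0 ≤ D ∧ ∀ x y, ‖x‖ = 1 → ‖y - x‖ ≤ 1 / 2 → ‖K y - K x‖ ≤ D * ‖y - x‖ := by
  have hcompact : IsCompact (closedBall (0 : H) (3 / 2) \ ball 0 (1 / 2)) :=
    (isCompact_closedBall _ _).diff isOpen_ball
  have hsubset : closedBall (0 : H) (3 / 2) \ ball 0 (1 / 2) ⊆ {x | x ≠ 0} := fun z hz hz0 =>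
    hz.2 (hz0 ▸ mem_ball_self (by norm_num))
  obtain ⟨D, hD⟩ := hcompact.exists_bound_of_continuousOn
    ((hK.continuousOn_fderiv_of_isOpen isOpen_ne le_rfl).mono hsubset)
  refine ⟨max D 0, le_max_right _ _, fun x y hx hxy => ?_⟩
  have hball : closedBall x (1 / 2) ⊆ closedBall (0 : H) (3 / 2) \ ball 0 (1 / 2) := by
    intro z hz
    rw [mem_closedBall_iff_norm] at hz
    simp only [Set.mem_sdiff, mem_closedBall_zero_iff, mem_ball_zero_iff, not_lt]
    constructor <;> linarith [norm_sub_norm_le z x, norm_sub_norm_le x z, norm_sub_rev z x]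
  refine (convex_closedBall x (1 / 2)).norm_image_sub_le_of_norm_fderiv_le (𝕜 := ℝ)
    (fun z hz => (hK.differentiableOn one_ne_zero).differentiableAt
      (isOpen_ne.mem_nhds (hsubset (hball hz))))
    (fun z hz => (hD z (hball hz)).trans (le_max_left _ _)) (mem_closedBall_self (by norm_num))
    (mem_closedBall_iff_norm.2 hxy)

lemma IsPosHomogeneous.exists_norm_sub_le {K : H → V} {a : ℤ} (hhom : IsPosHomogeneous a K)
    (hK : ContDiffOn ℝ 1 K {x | x ≠ 0}) :
    ∃ D : ℝ, 0 ≤ D ∧ ∀ x y, x ≠ 0 → ‖y - x‖ ≤ ‖x‖ / 2 →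
      ‖K y - K x‖ ≤ D * ‖y - x‖ * ‖x‖ ^ (a - 1) := by
  obtain ⟨D, hD0, hD⟩ := exists_norm_sub_le_of_norm_eq_one hK
  refine ⟨D, hD0, fun x y hx hxy => ?_⟩
  have hx0 : 0 < ‖x‖ := norm_pos_iff.2 hx
  have hy : y ≠ 0 := by
    rintro rfl
    rw [zero_sub, norm_neg] at hxy
    linarith
  have hscaled : ‖‖x‖⁻¹ • y - ‖x‖⁻¹ • x‖ = ‖x‖⁻¹ * ‖y - x‖ := by
    rw [← smul_sub, norm_smul, norm_inv, norm_norm]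
  have hunit := hD (‖x‖⁻¹ • x) (‖x‖⁻¹ • y) (norm_smul_inv_norm (𝕜 := ℝ) hx)
    (by rw [hscaled, inv_mul_le_iff₀ hx0]; linarith)
  rw [hscaled] at hunit
  rw [hhom.eq_zpow_smul hx0 hx, hhom.eq_zpow_smul hx0 hy, ← smul_sub, norm_smul,
    norm_of_nonneg (by positivity)]
  calc ‖x‖ ^ a * ‖K (‖x‖⁻¹ • y) - K (‖x‖⁻¹ • x)‖
      ≤ ‖x‖ ^ a * (D * (‖x‖⁻¹ * ‖y - x‖)) := by gcongr
    _ = D * ‖y - x‖ * ‖x‖ ^ (a - 1) := by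
        rw [zpow_sub_one₀ hx0.ne']
        ring

end HomogeneousRegularity

section KernelComparison

variable {s r A : ℝ} {m : ℕ}

lemma mul_inv_pow_add_two_le (hs : 0 < s) (hsr : s ≤ r) :
    s * (r ^ (m + 2))⁻¹ ≤ 2 * ((r ^ m)⁻¹ * poisson s r) := by
  have hr : 0 < r := hs.trans_le hsr
  calc s * (r ^ (m + 2))⁻¹ = 2 * ((r ^ m)⁻¹ * (s / (r ^ 2 + r ^ 2))) := by
        rw [pow_add]
        field_simp
        norm_num
    _ ≤ 2 * ((r ^ m)⁻¹ * poisson s r) := by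
        unfold poisson
        gcongr

lemma inv_pow_succ_le (hs : 0 < s) (hr : 0 < r) (hrA : r ≤ A * s) :
    (s ^ (m + 1))⁻¹ ≤ (1 + A ^ 2) * A ^ m * ((r ^ m)⁻¹ * poisson s r) := by
  have hden : s ^ 2 + r ^ 2 ≤ (1 + A ^ 2) * s ^ 2 :=
    calc s ^ 2 + r ^ 2 ≤ s ^ 2 + (A * s) ^ 2 := by gcongr
      _ = (1 + A ^ 2) * s ^ 2 := by ring
  calc (s ^ (m + 1))⁻¹ = (s ^ m)⁻¹ * s⁻¹ := by rw [pow_succ, mul_inv]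
    _ ≤ (A ^ m * (r ^ m)⁻¹) * ((1 + A ^ 2) * poisson s r) := by
        refine mul_le_mul ?_ ?_ (by positivity) ?_
        · rw [inv_le_iff_one_le_mul₀ (by positivity), mul_right_comm, ← mul_pow, ← div_eq_mul_inv,
            one_le_div (by positivity)]
          gcongr
        · rw [inv_le_iff_one_le_mul₀ hs, poisson, mul_assoc, div_mul_eq_mul_div, ← mul_div_assoc,
            one_le_div (by positivity), ← pow_two]
          exact hden
        · have : 0 < A := pos_of_mul_pos_left (hr.trans_le hrA) hs.le
          positivity
    _ = _ := by ring

variable {H : Type*} [NormedAddCommGroup H] [NormedSpace ℝ H] {K : H → ℂ} {B : ℝ} {x : H}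

lemma norm_sub_smoothTruncation_le (hK : IsPosHomogeneous (-(m + 1)) K)
    (hB : ∀ θ : sphere (0 : H) 1, ‖K θ‖ ≤ B) (hs : 0 < s) (hsx : s ≤ ‖x‖) :
    ‖K x - smoothTruncation K s x‖ ≤ B * ((‖x‖ ^ m)⁻¹ * poisson s ‖x‖) := by
  have hx : 0 < ‖x‖ := hs.trans_le hsx
  have hsub : K x - smoothTruncation K s x = (s * poisson s ‖x‖) • K x := by
    have hcoef : s * poisson s ‖x‖ = 1 - ‖x‖ * conjPoisson s ‖x‖ := by
      unfold poisson conjPoisson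
      field_simp
      ring
    rw [hcoef, sub_smul, one_smul, smoothTruncation]
  have hP := poisson_pos hs ‖x‖
  calc ‖K x - smoothTruncation K s x‖ = s * poisson s ‖x‖ * ‖K x‖ := by
        rw [hsub, norm_smul, norm_of_nonneg (by positivity)]
    _ ≤ ‖x‖ * poisson s ‖x‖ * (B * ‖x‖ ^ (-(m + 1 : ℤ))) := by
        gcongr
        exact hK.norm_le hB (norm_pos_iff.1 hx)
    _ = B * ((‖x‖ ^ m)⁻¹ * poisson s ‖x‖) := by
        rw [← Nat.cast_succ, zpow_neg, zpow_natCast, pow_succ]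
        field_simp

lemma norm_smoothTruncation_le_of_norm_le (hK : IsPosHomogeneous (-(m + 1)) K) (hB0 : 0 ≤ B)
    (hB : ∀ θ : sphere (0 : H) 1, ‖K θ‖ ≤ B) (hs : 0 < s) (hx : x ≠ 0) (hxA : ‖x‖ ≤ A * s) :
    ‖smoothTruncation K s x‖ ≤ B * A * ((‖x‖ ^ m)⁻¹ * poisson s ‖x‖) := by
  have : 0 < ‖x‖ := norm_pos_iff.2 hx
  have hconj : 0 ≤ conjPoisson s ‖x‖ := by
    unfold conjPoisson
    positivity
  calc ‖smoothTruncation K s x‖ = ‖x‖ * conjPoisson s ‖x‖ * ‖K x‖ := by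
        rw [smoothTruncation, norm_smul, norm_of_nonneg (by positivity)]
    _ ≤ ‖x‖ * conjPoisson s ‖x‖ * (B * ‖x‖ ^ (-(m + 1 : ℤ))) := by
        gcongr
        exact hK.norm_le hB hx
    _ = B * ((‖x‖ ^ m)⁻¹ * (‖x‖ / (s ^ 2 + ‖x‖ ^ 2))) := by
        rw [conjPoisson, ← Nat.cast_succ, zpow_neg, zpow_natCast, pow_succ _ m]
        field_simp
    _ ≤ B * ((‖x‖ ^ m)⁻¹ * (A * s / (s ^ 2 + ‖x‖ ^ 2))) := by gcongr
    _ = B * A * ((‖x‖ ^ m)⁻¹ * poisson s ‖x‖) := by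
        rw [poisson]
        ring

lemma norm_le_of_le_norm_of_norm_le (hK : IsPosHomogeneous (-(m + 1)) K) (hB0 : 0 ≤ B)
    (hB : ∀ θ : sphere (0 : H) 1, ‖K θ‖ ≤ B) (hs : 0 < s) (hx : x ≠ 0) (hxA : ‖x‖ ≤ A * s) {y : H}
    (hy : s ≤ ‖y‖) :
    ‖K y‖ ≤ B * ((1 + A ^ 2) * A ^ m) * ((‖x‖ ^ m)⁻¹ * poisson s ‖x‖) := by
  calc ‖K y‖ ≤ B * ‖y‖ ^ (-(m + 1 : ℤ)) := hK.norm_le hB (norm_pos_iff.1 (hs.trans_le hy))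
    _ = B * (‖y‖ ^ (m + 1))⁻¹ := by rw [← Nat.cast_succ, zpow_neg, zpow_natCast]
    _ ≤ B * (s ^ (m + 1))⁻¹ := by gcongr
    _ ≤ B * ((1 + A ^ 2) * A ^ m * ((‖x‖ ^ m)⁻¹ * poisson s ‖x‖)) := by
        gcongr
        exact inv_pow_succ_le hs (norm_pos_iff.2 hx) hxA
    _ = _ := by ring

variable [FiniteDimensional ℝ H]

lemma IsPosHomogeneous.exists_norm_sub_le_mul_poisson (hhom : IsPosHomogeneous (-(m + 1)) K)
    (hK : ContDiffOn ℝ 1 K {x | x ≠ 0}) {c : ℝ} (hc : 0 ≤ c) :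
    ∃ D : ℝ, 0 ≤ D ∧ ∀ ⦃s : ℝ⦄ (x y : H), 0 < s → s ≤ ‖x‖ → ‖y - x‖ ≤ ‖x‖ / 2 →
      ‖y - x‖ ≤ c * s → ‖K y - K x‖ ≤ D * ((‖x‖ ^ m)⁻¹ * poisson s ‖x‖) := by
  obtain ⟨D, hD0, hD⟩ := hhom.exists_norm_sub_le hK
  refine ⟨D * c * 2, by positivity, fun s x y hs hsx hxy hxyc => ?_⟩
  calc ‖K y - K x‖ ≤ D * ‖y - x‖ * ‖x‖ ^ (-(m + 1 : ℤ) - 1) :=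
        hD x y (norm_pos_iff.1 (hs.trans_le hsx)) hxy
    _ ≤ D * (c * s) * ‖x‖ ^ (-(m + 1 : ℤ) - 1) := by gcongr
    _ = D * c * (s * (‖x‖ ^ (m + 2))⁻¹) := by
        rw [← zpow_natCast, ← zpow_neg]
        push_cast
        ring_nf
    _ ≤ D * c * (2 * ((‖x‖ ^ m)⁻¹ * poisson s ‖x‖)) :=
        mul_le_mul_of_nonneg_left (mul_inv_pow_add_two_le hs hsx) (by positivity)
    _ = D * c * 2 * ((‖x‖ ^ m)⁻¹ * poisson s ‖x‖) := by ring

theorem exists_norm_sub_smoothTruncation_le (hhom : IsPosHomogeneous (-(m + 1)) K)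
    (hK : ContDiffOn ℝ 1 K {x | x ≠ 0}) {c : ℝ} (hc : 0 ≤ c) :
    ∃ C : ℝ, 0 ≤ C ∧ ∀ (x y : H) (s : ℝ), x ≠ 0 → 0 < s → s ≤ ‖y‖ → ‖y - x‖ ≤ c * s →
      ‖K y - smoothTruncation K s x‖ ≤ C * ((‖x‖ ^ m)⁻¹ * poisson s ‖x‖) := by
  obtain ⟨B, hB0, hB⟩ := exists_forall_sphere_norm_le hK.continuousOn
  obtain ⟨D, hD0, hD⟩ := hhom.exists_norm_sub_le_mul_poisson hK hc
  set A := 2 * c + 1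
  refine ⟨max (D + B) (B * ((1 + A ^ 2) * A ^ m) + B * A), by positivity,
    fun x y s hx hs hsy hxy => ?_⟩
  set P := (‖x‖ ^ m)⁻¹ * poisson s ‖x‖
  have : 0 ≤ P := mul_nonneg (by positivity) (poisson_pos hs _).le
  rcases le_total (A * s) ‖x‖ with hfar | hnear
  · have hsx : s ≤ ‖x‖ := by nlinarith
    calc ‖K y - smoothTruncation K s x‖
        ≤ ‖K y - K x‖ + ‖K x - smoothTruncation K s x‖ := norm_sub_le_norm_sub_add_norm_sub _ _ _
      _ ≤ D * P + B * P :=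
          add_le_add (hD x y hs hsx (by nlinarith) hxy)
            (norm_sub_smoothTruncation_le hhom hB hs hsx)
      _ ≤ _ := by
          rw [← add_mul]
          gcongr
          exact le_max_left _ _
  · calc ‖K y - smoothTruncation K s x‖ ≤ ‖K y‖ + ‖smoothTruncation K s x‖ := norm_sub_le _ _
      _ ≤ B * ((1 + A ^ 2) * A ^ m) * P + B * A * P :=
          add_le_add (norm_le_of_le_norm_of_norm_le hhom hB0 hB hs hx hnear hsy)
            (norm_smoothTruncation_le_of_norm_le hhom hB0 hB hs hx hnear)
      _ ≤ _ := by
          rw [← add_mul]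
          gcongr
          exact le_max_right _ _

end KernelComparison

section NontangentialMaximal

variable {E : Type*} [NormedAddCommGroup E]

/-- The nontangential maximal function of a function `u x t` on the half-space `E × (0, ∞)`, over
the cones `dist x y < κ * t`. -/
def nontangentialMaximal (κ : ℝ) (u : E → ℝ → ℂ) (x : E) : ℝ≥0∞ :=
  ⨆ (y : E) (t : ℝ) (_ : 0 < t ∧ dist x y < κ * t), ‖u y t‖ₑ

/-- The restriction of `f` to the set where both `f` and the argument have norm at most `N`; it
lies in `L^∞_c` when `f` is measurable. -/
def truncate (f : E → ℂ) (N : ℕ) : E → ℂ := {x | ‖f x‖ ≤ N ∧ ‖x‖ ≤ N}.indicator f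

lemma exists_norm_add_sub_smoothTruncation_le [NormedSpace ℝ E] [FiniteDimensional ℝ E] {m : ℕ}
    {K : E × ℝ → ℂ} (hK : ContDiffOn ℝ 1 K {x | x ≠ 0}) (hhom : IsPosHomogeneous (-(m + 1)) K)
    (κ : ℝ) :
    ∃ C, 0 ≤ C ∧ ∀ ⦃w v : E⦄ ⦃t s : ℝ⦄, w ≠ 0 → 0 < s → s ≤ t → t ≤ 2 * s → ‖v‖ ≤ κ * t →
      ‖K (w + v, t) - smoothTruncation K s (w, 0)‖ ≤ C * ((‖w‖ ^ m)⁻¹ * poisson s ‖w‖) := by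
  obtain ⟨C, hC0, hC⟩ := exists_norm_sub_smoothTruncation_le hhom hK (c := max κ 1 * 2)
    (by positivity)
  refine ⟨C, hC0, fun w v t s hw hs hst hts hv => ?_⟩
  have ht : 0 < t := hs.trans_le hst
  have hshift : ‖((w + v, t) : E × ℝ) - (w, 0)‖ ≤ max κ 1 * 2 * s := by
    calc ‖((w + v, t) : E × ℝ) - (w, 0)‖ = max ‖v‖ t := by
          simp [Prod.norm_def, abs_of_pos ht]
      _ ≤ max κ 1 * t := by
          refine max_le (hv.trans ?_) (le_mul_of_one_le_left ht.le (le_max_right _ _))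
          gcongr
          exact le_max_left _ _
      _ ≤ max κ 1 * 2 * s := by
          rw [mul_assoc]
          gcongr
  have hnorm : s ≤ ‖((w + v, t) : E × ℝ)‖ :=
    hst.trans ((le_abs_self t).trans (norm_snd_le ((w + v, t) : E × ℝ)))
  simpa [Prod.norm_def] using hC (w, 0) (w + v, t) s (by simpa using hw) hs hnorm hshift

variable [MeasurableSpace E] [BorelSpace E] {f : E → ℂ}

lemma measurableSet_norm_le_and_norm_le (hf : Measurable f) (N : ℕ) :
    MeasurableSet {x | ‖f x‖ ≤ N ∧ ‖x‖ ≤ N} :=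
  (measurableSet_le hf.norm measurable_const).inter (measurableSet_le measurable_norm
    measurable_const)

lemma memLinftyC_truncate (hf : Measurable f) (N : ℕ) : MemLinftyC (truncate f N) := by
  refine ⟨hf.indicator (measurableSet_norm_le_and_norm_le hf N), ⟨N, fun x => ?_⟩, N,
    fun x hx => Set.indicator_of_notMem (fun h => h.2.not_gt hx) _⟩
  by_cases hx : ‖f x‖ ≤ N ∧ ‖x‖ ≤ N <;> simp [truncate, hx]

lemma tendsto_integral_mul_truncate {μ : Measure E} (hf : Measurable f) {g : E → ℂ}
    (hgf : Integrable (fun z => g z * f z) μ) :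
    Tendsto (fun N => ∫ z, g z * truncate f N z ∂μ) atTop (𝓝 (∫ z, g z * f z ∂μ)) := by
  have hunion : ⋃ N : ℕ, {x | ‖f x‖ ≤ N ∧ ‖x‖ ≤ N} = Set.univ := by
    refine Set.eq_univ_of_forall fun x => Set.mem_iUnion.2 ?_
    obtain ⟨N, hN⟩ := exists_nat_ge (max ‖f x‖ ‖x‖)
    exact ⟨N, max_le_iff.1 hN⟩
  have hmono : Monotone fun N : ℕ => {x | ‖f x‖ ≤ N ∧ ‖x‖ ≤ N} := fun N M hNM x hx =>
    ⟨hx.1.trans (Nat.cast_le.2 hNM), hx.2.trans (Nat.cast_le.2 hNM)⟩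
  have hlim := tendsto_setIntegral_of_monotone (measurableSet_norm_le_and_norm_le hf) hmono
    hgf.integrableOn
  rw [hunion, setIntegral_univ] at hlim
  refine hlim.congr fun N => ?_
  rw [← integral_indicator (measurableSet_norm_le_and_norm_le hf N)]
  simp only [truncate, Set.indicator_mul_right]

variable [NormedSpace ℝ E] [FiniteDimensional ℝ E] [Nontrivial E] {m : ℕ} {K : E × ℝ → ℂ}

theorem exists_lintegral_mul_sub_smoothTruncation_le (μ : Measure E) [μ.IsAddHaarMeasure]
    (hm : Module.finrank ℝ E = m + 1) (hK : ContDiffOn ℝ 1 K {x | x ≠ 0})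
    (hhom : IsPosHomogeneous (-(m + 1)) K) (κ : ℝ) :
    ∃ C : ℝ≥0, ∀ ⦃f : E → ℂ⦄, Measurable f → ∀ (x v : E) (t : ℝ) (j : ℤ), 2 ^ j ≤ t →
      t ≤ 2 * 2 ^ j → ‖v‖ ≤ κ * t →
      ∫⁻ w, ‖f (x - w) * (K (w + v, t) - smoothTruncation K (2 ^ j) (w, 0))‖ₑ ∂μ ≤
        C * rotationMaximal μ f x := by
  obtain ⟨C, hC0, hC⟩ := exists_norm_add_sub_smoothTruncation_le hK hhom κ
  refine ⟨C.toNNReal, fun f hf x v t j hjt htj hv => ?_⟩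
  calc ∫⁻ w, ‖f (x - w) * (K (w + v, t) - smoothTruncation K (2 ^ j) (w, 0))‖ₑ ∂μ
      ≤ ∫⁻ w, ENNReal.ofReal C * (ENNReal.ofReal ((‖w‖ ^ (Module.finrank ℝ E - 1))⁻¹ *
          poisson (2 ^ j) ‖w‖) * ‖f (x - w)‖ₑ) ∂μ := by
        refine lintegral_mono_ae ?_
        filter_upwards [compl_mem_ae_iff.2 (measure_singleton (0 : E))] with w hw
        rw [enorm_mul, mul_comm, ← mul_assoc, hm, Nat.add_sub_cancel]
        gcongr
        rw [← ofReal_norm, ← ENNReal.ofReal_mul hC0]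
        exact ENNReal.ofReal_le_ofReal (hC hw (by positivity) hjt htj hv)
    _ ≤ C.toNNReal * rotationMaximal μ f x := by
        rw [lintegral_const_mul' _ _ ENNReal.ofReal_ne_top]
        exact mul_le_mul_right (lintegral_radial_poisson_mul_le_rotationMaximal hf j x) _

lemma exists_integral_mul_smoothTruncation_slice_le (μ : Measure E) [μ.IsAddHaarMeasure]
    (hm : Module.finrank ℝ E = m + 1) (hK : ContinuousOn K {x | x ≠ 0}) (hodd : Function.Odd K)
    (hhom : IsPosHomogeneous (-(m + 1)) K) :
    ∃ C : ℝ≥0, ∀ ⦃f : E → ℂ⦄, MemLinftyC f → ∀ (j : ℤ) (x : E),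
      Integrable (fun w => f (x - w) * smoothTruncation K (2 ^ j) (w, 0)) μ ∧
        ‖∫ w, f (x - w) * smoothTruncation K (2 ^ j) (w, 0) ∂μ‖ₑ ≤ C * rotationMaximal μ f x := by
  obtain ⟨B, -, hB⟩ := exists_forall_sphere_norm_le hK
  set k : E → ℂ := fun w => K (w, 0)
  have hk : Measurable k := (measurable_of_continuousOn_compl_singleton 0 hK).comp
    (measurable_id.prodMk measurable_const)
  have hkodd : Function.Odd k := fun w => by simpa using hodd (w, 0)
  have hkhom : IsPosHomogeneous (-(m + 1)) k := fun l hl w hw => by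
    simpa using hhom hl (x := (w, 0)) (by simpa using hw)
  have hkB (θ : sphere (0 : E) 1) : ‖k θ‖ ≤ B := hB ⟨(θ, 0), by simp [Prod.norm_def]⟩
  have hslice (s : ℝ) (w : E) : smoothTruncation K s (w, 0) = smoothTruncation k s w := by
    simp [smoothTruncation, Prod.norm_def, k]
  refine ⟨B.toNNReal, fun f hf j x => ?_⟩
  simp only [hslice]
  exact ⟨hf.integrable_mul_smoothTruncation hk hm hkhom hkB (zpow_pos two_pos j) x,
    enorm_integral_mul_smoothTruncation_le hf hk hkodd hm hkhom hkB j x⟩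

theorem exists_nontangentialMaximal_le_mul_rotationMaximal (μ : Measure E) [μ.IsAddHaarMeasure]
    (hm : Module.finrank ℝ E = m + 1) (hK : ContDiffOn ℝ 1 K {x | x ≠ 0}) (hodd : Function.Odd K)
    (hhom : IsPosHomogeneous (-(m + 1)) K) (κ : ℝ) :
    ∃ C : ℝ≥0, ∀ ⦃f : E → ℂ⦄, MemLinftyC f → ∀ x,
      nontangentialMaximal κ (fun y t => ∫ z, K (y - z, t) * f z ∂μ) x ≤
        C * rotationMaximal μ f x := by
  obtain ⟨A, hA⟩ := exists_integral_mul_smoothTruncation_slice_le μ hm hK.continuousOn hodd hhom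
  obtain ⟨C, hC⟩ := exists_lintegral_mul_sub_smoothTruncation_le μ hm hK hhom κ
  refine ⟨C + A, fun f hf x => iSup₂_le fun y t => iSup_le fun ⟨ht, hxy⟩ => ?_⟩
  by_cases hint : Integrable (fun z => K (y - z, t) * f z) μ
  swap
  · simp [integral_undef hint]
  obtain ⟨j, hjt, htj⟩ := exists_mem_Ico_zpow ht one_lt_two
  rw [zpow_add_one₀ two_ne_zero, mul_comm] at htj
  obtain ⟨htrunc, htrunc_le⟩ := hA hf j x
  have hv : ‖y - x‖ ≤ κ * t := by rw [← dist_eq_norm, dist_comm]; exact hxy.le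
  have hshift (w : E) : K (y - (x - w), t) * f (x - w) = f (x - w) * K (w + (y - x), t) := by
    rw [mul_comm, show y - (x - w) = w + (y - x) by abel]
  have hshifted := hint.comp_sub_left x
  have hsplit : ∫ z, K (y - z, t) * f z ∂μ =
      (∫ w, f (x - w) * (K (w + (y - x), t) - smoothTruncation K (2 ^ j) (w, 0)) ∂μ) +
        ∫ w, f (x - w) * smoothTruncation K (2 ^ j) (w, 0) ∂μ := by
    rw [← integral_sub_left_eq_self _ μ x]
    simp only [hshift, mul_sub] at hshifted ⊢
    rw [integral_sub hshifted htrunc, sub_add_cancel]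
  calc ‖∫ z, K (y - z, t) * f z ∂μ‖ₑ
      ≤ C * rotationMaximal μ f x + A * rotationMaximal μ f x := by
        rw [hsplit]
        exact (enorm_add_le _ _).trans (add_le_add ((enorm_integral_le_lintegral_enorm _).trans
          (hC hf.measurable x (y - x) t j hjt htj.le hv)) htrunc_le)
    _ = (C + A : ℝ≥0) * rotationMaximal μ f x := by rw [ENNReal.coe_add, add_mul]

theorem exists_lintegral_nontangentialMaximal_rpow_le (μ : Measure E) [μ.IsAddHaarMeasure]
    (hm : Module.finrank ℝ E = m + 1) (hK : ContDiffOn ℝ 1 K {x | x ≠ 0}) (hodd : Function.Odd K)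
    (hhom : IsPosHomogeneous (-(m + 1)) K) (κ : ℝ) {p : ℝ} (hp : 1 < p) :
    ∃ C : ℝ≥0, ∀ f : E → ℂ, Measurable f →
      ∫⁻ x, nontangentialMaximal κ (fun y t => ∫ z, K (y - z, t) * f z ∂μ) x ^ p ∂μ ≤
        C * ∫⁻ x, ‖f x‖ₑ ^ p ∂μ := by
  obtain ⟨C₁, hC₁⟩ := exists_nontangentialMaximal_le_mul_rotationMaximal μ hm hK hodd hhom κ
  obtain ⟨C₂, hC₂⟩ := exists_lintegral_rotationMaximal_rpow_le μ hp
  have hp0 : 0 < p := by linarith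
  refine ⟨C₁ ^ p * C₂, fun f hf => lintegral_rpow_le_of_le_liminf hp0
    (g := fun N x => C₁ * rotationMaximal μ (truncate f N) x)
    (fun N => (measurable_rotationMaximal μ (memLinftyC_truncate hf N).measurable).const_mul _)
    (fun x => iSup₂_le fun y t => iSup_le fun h => ?_) fun N => ?_⟩
  · by_cases hint : Integrable (fun z => K (y - z, t) * f z) μ
    · rw [← ((continuous_enorm.tendsto _).comp (tendsto_integral_mul_truncate hf hint)).liminf_eq]
      refine liminf_le_liminf (.of_forall fun N => le_trans ?_ (hC₁ (memLinftyC_truncate hf N) x))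
      exact le_iSup₂_of_le y t (le_iSup_of_le h le_rfl)
    · simp [integral_undef hint]
  · calc ∫⁻ x, (C₁ * rotationMaximal μ (truncate f N) x) ^ p ∂μ
        = C₁ ^ p * ∫⁻ x, rotationMaximal μ (truncate f N) x ^ p ∂μ := by
          simp_rw [ENNReal.mul_rpow_of_nonneg _ _ hp0.le]
          rw [lintegral_const_mul' _ _ (by finiteness)]
      _ ≤ C₁ ^ p * (C₂ * ∫⁻ x, ‖truncate f N x‖ₑ ^ p ∂μ) := by
          gcongr
          exact hC₂ _ (memLinftyC_truncate hf N)
      _ ≤ C₁ ^ p * (C₂ * ∫⁻ x, ‖f x‖ₑ ^ p ∂μ) := by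
          gcongr with x
          exact enorm_indicator_le_enorm_self _ _
      _ = (C₁ ^ p * C₂ : ℝ≥0) * ∫⁻ x, ‖f x‖ₑ ^ p ∂μ := by
          rw [← mul_assoc, ENNReal.coe_mul, ENNReal.coe_rpow_of_nonneg _ hp0.le]

theorem exists_nontangentialMaximal_le_eLpNorm (μ : Measure E) [μ.IsAddHaarMeasure]
    (hm : Module.finrank ℝ E = m + 1) (hK : ContDiffOn ℝ 1 K {x | x ≠ 0}) (hodd : Function.Odd K)
    (hhom : IsPosHomogeneous (-(m + 1)) K) (κ : ℝ) {p : ℝ} (hp : 1 < p) :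
    ∃ C : ℝ≥0, ∀ f : E → ℂ, AEStronglyMeasurable f μ →
      (∫⁻ x, nontangentialMaximal κ (fun y t => ∫ z, K (y - z, t) * f z ∂μ) x ^ p ∂μ) ^ (1 / p) ≤
        C * eLpNorm f (ENNReal.ofReal p) μ := by
  obtain ⟨C, hC⟩ := exists_lintegral_nontangentialMaximal_rpow_le μ hm hK hodd hhom κ hp
  have hp0 : 0 < p := by linarith
  refine ⟨C ^ (1 / p), fun f hf => ?_⟩
  have hmk (y : E) (t : ℝ) :
      ∫ z, K (y - z, t) * f z ∂μ = ∫ z, K (y - z, t) * hf.mk f z ∂μ :=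
    integral_congr_ae (hf.ae_eq_mk.mono fun z hz => by simp only [hz])
  rw [eLpNorm_congr_ae hf.ae_eq_mk, eLpNorm_eq_lintegral_rpow_enorm_toReal (by simpa using hp0)
    ENNReal.ofReal_ne_top, ENNReal.toReal_ofReal hp0.le,
    ENNReal.coe_rpow_of_nonneg _ (by positivity), ← ENNReal.mul_rpow_of_nonneg _ _ (by positivity)]
  simp only [hmk]
  gcongr
  exact hC _ hf.stronglyMeasurable_mk.measurable

end NontangentialMaximal

section HalfSpaceCoordinates

variable {n : ℕ}

lemma xinit_toUp (x : EuclideanSpace ℝ (Fin (n - 1))) (t : ℝ) : xinit (toUp x t) = x := by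
  ext i
  exact dif_pos i.isLt

lemma xlast_toUp (hn : 1 ≤ n) (x : EuclideanSpace ℝ (Fin (n - 1))) (t : ℝ) :
    xlast (toUp x t) = t :=
  (dif_pos hn).trans (dif_neg (lt_irrefl _))

/-- The coordinates `(x', t) ↦ toUp x' t` of the half-space, as a linear map. -/
def toUpLinear (n : ℕ) :
    (EuclideanSpace ℝ (Fin (n - 1)) × ℝ) →ₗ[ℝ] EuclideanSpace ℝ (Fin n) where
  toFun q := toUp q.1 q.2
  map_add' q r := by
    ext i
    by_cases hi : (i : ℕ) < n - 1 <;> simp [toUp, hi]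
  map_smul' c q := by
    ext i
    by_cases hi : (i : ℕ) < n - 1 <;> simp [toUp, hi]

lemma toUpLinear_injective (hn : 1 ≤ n) : Function.Injective (toUpLinear n) := by
  rintro ⟨x, s⟩ ⟨y, t⟩ (h : toUp x s = toUp y t)
  exact Prod.ext (by simpa only [xinit_toUp] using congrArg xinit h)
    (by simpa only [xlast_toUp hn] using congrArg xlast h)

end HalfSpaceCoordinates

section PullBack

variable {G H V : Type*} [NormedAddCommGroup G] [NormedSpace ℝ G] [NormedAddCommGroup H]
  [NormedSpace ℝ H] [NormedAddCommGroup V] [NormedSpace ℝ V] {K : H → V} {L : G →ₗ[ℝ] H}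

lemma IsPosHomogeneous.comp_injective {a : ℤ} (hK : IsPosHomogeneous a K)
    (hL : Function.Injective L) : IsPosHomogeneous a (K ∘ L) := fun l hl x hx => by
  rw [Function.comp_apply, map_smul, hK hl ((map_ne_zero_iff L hL).2 hx), Function.comp_apply]

lemma contDiffOn_comp_injective [FiniteDimensional ℝ G] {r : WithTop ℕ∞}
    (hK : ContDiffOn ℝ r K {x | x ≠ 0}) (hL : Function.Injective L) :
    ContDiffOn ℝ r (K ∘ L) {x | x ≠ 0} :=
  hK.comp L.toContinuousLinearMap.contDiff.contDiffOn fun _ hx => (map_ne_zero_iff L hL).2 hx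

end PullBack

section PartialDerivatives

variable {n : ℕ} {F : Type*} [NormedAddCommGroup F] [NormedSpace ℝ F]
  {u : EuclideanSpace ℝ (Fin n) → F}

lemma contDiffOn_pd {r : WithTop ℕ∞} (hu : ContDiffOn ℝ (r + 1) u {x | x ≠ 0}) (j : Fin n) :
    ContDiffOn ℝ r (pd j u) {x | x ≠ 0} :=
  (hu.fderiv_of_isOpen isOpen_ne le_rfl).clm_apply contDiffOn_const

lemma odd_pd (hu : ∀ x, x ≠ 0 → u (-x) = u x) (j : Fin n) : Function.Odd (pd j u) := fun x => by
  have hcomp := (ContinuousLinearEquiv.neg ℝ (M := EuclideanSpace ℝ (Fin n))).comp_right_fderiv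
    (f := u) (x := x)
  have heven : u ∘ ContinuousLinearEquiv.neg ℝ = u := by
    ext y
    rcases eq_or_ne y 0 with rfl | hy
    exacts [congrArg u neg_zero, hu y hy]
  rw [heven] at hcomp
  simp [pd, hcomp]

end PartialDerivatives

end CalderonZygmund

theorem statement12_general {n : ℕ} (hn : 2 ≤ n) {K : EuclideanSpace ℝ (Fin n) → ℂ}
    (hK : ContDiffOn ℝ 1 K {x | x ≠ 0}) (hodd : Function.Odd K)
    (hhom : CalderonZygmund.IsPosHomogeneous (1 - n) K) {p : ℝ} (hp : 1 < p) (κ : ℝ) :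
    ∃ C : ℝ, 0 < C ∧
      ∀ f : EuclideanSpace ℝ (Fin (n - 1)) → ℂ,
        MemLp f (ENNReal.ofReal p) volume →
        (∫⁻ x' : EuclideanSpace ℝ (Fin (n - 1)),
            (ntMax κ
              (fun x : EuclideanSpace ℝ (Fin n) =>
                ∫ y' : EuclideanSpace ℝ (Fin (n - 1)), K (toUp (xinit x - y') (xlast x)) * f y')
              x') ^ p) ^ (1 / p)
          ≤ ENNReal.ofReal C * eLpNorm f (ENNReal.ofReal p) volume := by
  have hfinrank : Module.finrank ℝ (EuclideanSpace ℝ (Fin (n - 1))) = (n - 2) + 1 := by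
    rw [finrank_euclideanSpace_fin]
    lia
  have : Nontrivial (EuclideanSpace ℝ (Fin (n - 1))) :=
    Module.nontrivial_of_finrank_pos (R := ℝ) (hfinrank ▸ Nat.succ_pos _)
  have hinj := CalderonZygmund.toUpLinear_injective (n := n) (by lia)
  have hdegree : (1 - n : ℤ) = -((n - 2 : ℕ) + 1) := by lia
  obtain ⟨C, hC⟩ := CalderonZygmund.exists_nontangentialMaximal_le_eLpNorm volume hfinrank
    (CalderonZygmund.contDiffOn_comp_injective hK hinj)
    (fun q => by rw [Function.comp_apply, map_neg, hodd, Function.comp_apply])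
    ((hdegree ▸ hhom).comp_injective hinj) κ hp
  refine ⟨C + 1, by positivity, fun f hf => ?_⟩
  simp only [ntMax, CalderonZygmund.xinit_toUp, CalderonZygmund.xlast_toUp (by lia : 1 ≤ n)]
  refine (hC f hf.aestronglyMeasurable).trans ?_
  gcongr
  rw [← ENNReal.ofReal_coe_nnreal]
  exact ENNReal.ofReal_le_ofReal (by linarith)

/-- Calderón–Zygmund bound for convolution with `K = ∂_j E_{αβ}`
(smooth away from the origin, odd, positively homogeneous of degree `-(n-1)`):
the nontangential maximal function of
`u(x',t) = ∫ (∂_j E_{αβ})(x'-y', t) f(y') dy'` is `L^p` bounded. -/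
theorem statement12
    (n M : ℕ) (hn : 2 ≤ n) (hM : 1 ≤ M)
    (E : EuclideanSpace ℝ (Fin n) → Matrix (Fin M) (Fin M) ℂ)
    (hEsmooth : ∀ α β : Fin M,
      ContDiffOn ℝ (⊤ : ℕ∞) (fun x => E x α β) {x : EuclideanSpace ℝ (Fin n) | x ≠ 0})
    (hEeven : ∀ x : EuclideanSpace ℝ (Fin n), x ≠ 0 → E (-x) = E x)
    (hEhom : ∀ (α β : Fin M) (j : Fin n) (l : ℝ), 0 < l →
      ∀ x : EuclideanSpace ℝ (Fin n), x ≠ 0 →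
        pd j (fun y => E y α β) (l • x)
          = ((l : ℂ) ^ ((1 : ℤ) - (n : ℤ))) * pd j (fun y => E y α β) x)
    (j : Fin n) (α β : Fin M) (p : ℝ) (hp : 1 < p) (κ : ℝ) (hκ : 0 < κ) :
    ∃ C : ℝ, 0 < C ∧
      ∀ f : EuclideanSpace ℝ (Fin (n - 1)) → ℂ,
        MemLp f (ENNReal.ofReal p) volume →
        (∫⁻ x' : EuclideanSpace ℝ (Fin (n - 1)),
            (ntMax κ
              (fun x : EuclideanSpace ℝ (Fin n) =>
                ∫ y' : EuclideanSpace ℝ (Fin (n - 1)),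
                  pd j (fun y => E y α β) (toUp (xinit x - y') (xlast x)) * f y')
              x') ^ p) ^ (1 / p)
          ≤ ENNReal.ofReal C * eLpNorm f (ENNReal.ofReal p) volume :=
  statement12_general hn
    (CalderonZygmund.contDiffOn_pd ((hEsmooth α β).of_le (by norm_cast)) j)
    (CalderonZygmund.odd_pd (fun x hx => by rw [hEeven x hx]) j)
    (fun l hl x hx => by rw [hEhom α β j l hl x hx, Complex.real_smul, Complex.ofReal_zpow]) hp κ

end
end

section
/- Let n ≥ 2, M ≥ 1, let A = (a^{αβ}_{rs}) be a complex coefficient tensor, let E = (E_{γβ}) : ℝⁿ∖{0} → ℂ^{M×M} be C² with each ∂_r E_{γβ} positively homogeneous of degree 1-n, and suppose k = (k_{γα}) : ℝⁿ∖{0} → ℂ^{M×M} satisfies Σ_{r,β} a^{βα}_{rs}(∂_r E_{γβ})(x) = x_s k_{γα}(x) for all x ∈ ℝⁿ∖{0}, all s, γ, α. Set P := 2k(·,1) on ℝ^{n-1} and Q^{(j)}(x') := ((∂_j E_{γβ})(x',1))_{γ,β}. Then for every γ,α ∈ {1,…,M} and every (x',t) ∈ ℝⁿ₊: ∂_t[(P_{γα})_t(x')]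 = -2 Σ_{s=1}^{n-1} Σ_{r,β} a^{βα}_{rs} ∂_{x_s}[(Q^{(r)}_{γβ})_t(x')]. -/
open MeasureTheory Filter Metric Real
open scoped ENNReal NNReal Topology

noncomputable section

/-- The auxiliary kernel `Q^{(j)}_{γβ}(x') := (∂_j E_{γβ})(x', 1)`. -/
def Qker {n M : ℕ} (E : EuclideanSpace ℝ (Fin n) → Matrix (Fin M) (Fin M) ℂ)
    (j : Fin n) (γ β : Fin M) (x' : EuclideanSpace ℝ (Fin (n - 1))) : ℂ :=
  pd j (fun y => E y γ β) (toUp x' 1)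

/-- The dilated auxiliary kernel `(Q^{(j)}_{γβ})_t(x') = t^{1-n} Q^{(j)}_{γβ}(x'/t)`,
viewed as a function of the point `x = (x', t) ∈ ℝⁿ₊`. -/
def QkerDil {n M : ℕ} (E : EuclideanSpace ℝ (Fin n) → Matrix (Fin M) (Fin M) ℂ)
    (j : Fin n) (γ β : Fin M) (x : EuclideanSpace ℝ (Fin n)) : ℂ :=
  ((xlast x : ℂ) ^ ((1 : ℤ) - (n : ℤ))) * Qker E j γ β ((xlast x)⁻¹ • xinit x)

/-!
Fix `γ, α` and put `h_s := Σ_{r,β} a^{βα}_{rs} ∂_r E_{γβ}`, so that `h_s = x_s k_{γα}`. Being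
homogeneous of degree `1 - n`, the functions `∂_r E_{γβ}` and `h_n` are recovered on the half space
by dilating their restrictions to the hyperplane `t = 1`. As `h_n = k_{γα}` there, the left-hand
side is `2 ∂_n h_n`, and the right-hand side is `-2 Σ_{s<n} ∂_s h_s`. The identity therefore says
that the radial field `x k_{γα}` is divergence free. This is Euler's identity for
`k_{γα} = h_n / x_n`, homogeneous of degree `-n`: `div (x k_{γα}) = n k_{γα} + x · ∇k_{γα} = 0`.
-/

/-- `f` is positively homogeneous of degree `m` at the points of `s`, as in Euler's identity.
The set `s` need not be a cone: each point of `s` is compared with every point of its open ray. -/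
def IsPosHomogeneousOn {V F : Type*} [SMul ℝ V] [SMul ℝ F] (m : ℝ) (f : V → F) (s : Set V) : Prop :=
  ∀ x ∈ s, ∀ l : ℝ, 0 < l → f (l • x) = l ^ m • f x

namespace IsPosHomogeneousOn

section Algebra

variable {V F : Type*} {m : ℝ} {s : Set V}

lemma congr [SMul ℝ V] [SMul ℝ F] {f g : V → F} (hf : IsPosHomogeneousOn m f s) (hfg : s.EqOn f g)
    (hs : ∀ x ∈ s, ∀ l : ℝ, 0 < l → l • x ∈ s) : IsPosHomogeneousOn m g s := by
  intro x hx l hl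
  rw [← hfg hx, ← hfg (hs x hx l hl), hf x hx l hl]

lemma const_mul [SMul ℝ V] [Mul F] [SMul ℝ F] [SMulCommClass ℝ F F] {f : V → F}
    (hf : IsPosHomogeneousOn m f s) (c : F) : IsPosHomogeneousOn m (fun x => c * f x) s := by
  intro x hx l hl
  simp only [hf x hx l hl, mul_smul_comm]

lemma sum [SMul ℝ V] [AddCommMonoid F] [DistribSMul ℝ F] {ι : Type*} {t : Finset ι} {f : ι → V → F}
    (hf : ∀ i ∈ t, IsPosHomogeneousOn m (f i) s) :
    IsPosHomogeneousOn m (fun x => ∑ i ∈ t, f i x) s := by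
  intro x hx l hl
  rw [Finset.smul_sum]
  exact Finset.sum_congr rfl fun i hi => hf i hi x hx l hl

lemma of_smul [SMul ℝ V] [AddCommGroup F] [Module ℝ F] {a : ℝ} {c : V → ℝ} {f : V → F}
    (hc : IsPosHomogeneousOn a c s) (hc₀ : ∀ x ∈ s, c x ≠ 0)
    (hcf : IsPosHomogeneousOn m (fun x => c x • f x) s) : IsPosHomogeneousOn (m - a) f s := by
  intro x hx l hl
  have hlc : l ^ a * c x ≠ 0 := mul_ne_zero (rpow_pos_of_pos hl a).ne' (hc₀ x hx)
  refine smul_right_injective F hlc ?_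
  calc (l ^ a * c x) • f (l • x) = c (l • x) • f (l • x) := by rw [hc x hx l hl, smul_eq_mul]
    _ = l ^ m • c x • f x := hcf x hx l hl
    _ = (l ^ a * c x) • l ^ (m - a) • f x := by
        rw [smul_smul, smul_smul, mul_right_comm, ← rpow_add hl, add_sub_cancel]

end Algebra

section Euler

variable {V F : Type*} [NormedAddCommGroup V] [NormedSpace ℝ V] [NormedAddCommGroup F]
  [NormedSpace ℝ F]

theorem fderiv_apply_self {m : ℝ} {f : V → F} {s : Set V} (hf : IsPosHomogeneousOn m f s) {x : V}
    (hx : x ∈ s) (hfx : DifferentiableAt ℝ f x) : fderiv ℝ f x x = m • f x := by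
  have along_ray : HasDerivAt (fun l : ℝ => f (l • x)) (fderiv ℝ f x x) 1 := by
    have hray : HasDerivAt (fun l : ℝ => l • x) x 1 := by
      simpa using (hasDerivAt_id (1 : ℝ)).smul_const x
    exact HasFDerivAt.comp_hasDerivAt 1 (by simpa using hfx.hasFDerivAt) hray
  have of_power : HasDerivAt (fun l : ℝ => l ^ m • f x) (m • f x) 1 := by
    simpa using (hasDerivAt_rpow_const (x := 1) (p := m) (Or.inl one_ne_zero)).smul_const (f x)
  refine along_ray.unique (of_power.congr_of_eventuallyEq ?_)
  filter_upwards [lt_mem_nhds zero_lt_one] with l hl using hf x hx l hl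

end Euler

end IsPosHomogeneousOn

lemma differentiableAt_of_smul {𝕜 V F : Type*} [NontriviallyNormedField 𝕜] [NormedAddCommGroup V]
    [NormedSpace 𝕜 V] [NormedAddCommGroup F] [NormedSpace 𝕜 F] {c : V → 𝕜} {f : V → F} {x : V}
    (hc : DifferentiableAt 𝕜 c x) (hcx : c x ≠ 0)
    (hcf : DifferentiableAt 𝕜 (fun z => c z • f z) x) : DifferentiableAt 𝕜 f x := by
  refine ((hc.inv hcx).smul hcf).congr_of_eventuallyEq ?_
  filter_upwards [hc.continuousAt.eventually_ne hcx] with z hz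
  exact (inv_smul_smul₀ hz (f z)).symm

section PartialDerivatives

variable {n : ℕ} {F : Type*} [NormedAddCommGroup F] [NormedSpace ℝ F]
  {x : EuclideanSpace ℝ (Fin n)}

lemma pd_congr {f g : EuclideanSpace ℝ (Fin n) → F} (hfg : f =ᶠ[𝓝 x] g) (i : Fin n) :
    pd i f x = pd i g x := by
  rw [pd, pd, hfg.fderiv_eq]

lemma pd_const_mul {𝔸 : Type*} [NormedRing 𝔸] [NormedAlgebra ℝ 𝔸]
    {f : EuclideanSpace ℝ (Fin n) → 𝔸} (hf : DifferentiableAt ℝ f x) (c : 𝔸) (i : Fin n) :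
    pd i (fun z => c * f z) x = c * pd i f x := by
  rw [pd, fderiv_const_mul hf]
  rfl

lemma pd_sum {ι : Type*} {t : Finset ι} {f : ι → EuclideanSpace ℝ (Fin n) → F}
    (hf : ∀ j ∈ t, DifferentiableAt ℝ (f j) x) (i : Fin n) :
    pd i (fun z => ∑ j ∈ t, f j z) x = ∑ j ∈ t, pd i (f j) x := by
  simp only [pd, fderiv_fun_sum hf, sum_apply]

lemma differentiableAt_pd_of_contDiffAt {f : EuclideanSpace ℝ (Fin n) → F}
    (hf : ContDiffAt ℝ 2 f x) (i : Fin n) : DifferentiableAt ℝ (pd i f) x :=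
  ((hf.fderiv_right (m := 1) (by norm_num)).differentiableAt one_ne_zero).clm_apply
    (differentiableAt_const _)

lemma pd_coord_smul {f : EuclideanSpace ℝ (Fin n) → F} (hf : DifferentiableAt ℝ f x) (i : Fin n) :
    pd i (fun z => z i • f z) x = f x + x i • pd i f x := by
  have hcoord := PiLp.hasFDerivAt_apply (𝕜 := ℝ) 2 x i
  simp [pd, fderiv_fun_smul hcoord.differentiableAt hf, hcoord.fderiv, add_comm]

lemma sum_coord_smul_pd (f : EuclideanSpace ℝ (Fin n) → F) (x : EuclideanSpace ℝ (Fin n)) :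
    ∑ i, x i • pd i f x = fderiv ℝ f x x := by
  calc ∑ i, x i • pd i f x = fderiv ℝ f x (∑ i, x i • EuclideanSpace.single i 1) := by
        simp only [pd, map_sum, map_smul]
    _ = fderiv ℝ f x x := by
        congr 1
        simpa using (EuclideanSpace.basisFun (Fin n) ℝ).sum_repr x

theorem IsPosHomogeneousOn.sum_pd_coord_smul {m : ℝ} {f : EuclideanSpace ℝ (Fin n) → F}
    {U : Set (EuclideanSpace ℝ (Fin n))} (hf : IsPosHomogeneousOn m f U) (hx : x ∈ U)
    (hfx : DifferentiableAt ℝ f x) : ∑ i, pd i (fun z => z i • f z) x = (n + m) • f x := by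
  simp only [pd_coord_smul hfx, Finset.sum_add_distrib, sum_coord_smul_pd,
    hf.fderiv_apply_self hx hfx, Finset.sum_const, Finset.card_univ, Fintype.card_fin, add_smul,
    Nat.cast_smul_eq_nsmul]

lemma isPosHomogeneousOn_coord (i : Fin n) (U : Set (EuclideanSpace ℝ (Fin n))) :
    IsPosHomogeneousOn 1 (fun z : EuclideanSpace ℝ (Fin n) => z i) U := by
  intro z _ l _
  simp

theorem sum_pd_eq_zero_of_eqOn_coord_smul {f : EuclideanSpace ℝ (Fin n) → F}
    {h : Fin n → EuclideanSpace ℝ (Fin n) → F} {U : Set (EuclideanSpace ℝ (Fin n))} {j : Fin n}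
    (hU : IsOpen U) (hUcone : ∀ z ∈ U, ∀ l : ℝ, 0 < l → l • z ∈ U) (hUj : ∀ z ∈ U, z j ≠ 0)
    (hradial : ∀ i, U.EqOn (h i) (fun z => z i • f z)) (hhom : IsPosHomogeneousOn (1 - n) (h j) U)
    (hx : x ∈ U) (hdiff : DifferentiableAt ℝ (h j) x) : ∑ i, pd i (h i) x = 0 := by
  have hradial_near (i : Fin n) : h i =ᶠ[𝓝 x] fun z => z i • f z :=
    (hradial i).eventuallyEq_of_mem (hU.mem_nhds hx)
  have hf_hom : IsPosHomogeneousOn (1 - n - 1) f U :=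
    (isPosHomogeneousOn_coord j U).of_smul hUj (hhom.congr (hradial j) hUcone)
  have hf_diff : DifferentiableAt ℝ f x :=
    differentiableAt_of_smul (PiLp.hasFDerivAt_apply 2 x j).differentiableAt (hUj x hx)
      (hdiff.congr_of_eventuallyEq (hradial_near j).symm)
  calc ∑ i, pd i (h i) x = ∑ i, pd i (fun z => z i • f z) x :=
        Finset.sum_congr rfl fun i _ => pd_congr (hradial_near i) i
    _ = (n + (1 - n - 1 : ℝ)) • f x := hf_hom.sum_pd_coord_smul hx hf_diff
    _ = 0 := by rw [show (n + (1 - n - 1) : ℝ) = 0 by ring, zero_smul]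

end PartialDerivatives

section UpperHalfSpace

variable {n : ℕ} {x : EuclideanSpace ℝ (Fin n)}

lemma sum_univ_eq_sum_finUp_add_lastIdx {G : Type*} [AddCommMonoid G] (hn : 0 < n) (f : Fin n → G) :
    ∑ i, f i = ∑ s : Fin (n - 1), f (finUp s) + f (lastIdx n hn) := by
  obtain ⟨m, rfl⟩ : ∃ m, n = m + 1 := ⟨n - 1, by omega⟩
  exact Fin.sum_univ_castSucc f

lemma xlast_eq_apply_lastIdx (hn : 0 < n) (x : EuclideanSpace ℝ (Fin n)) :
    xlast x = x (lastIdx n hn) :=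
  dif_pos hn

lemma toUp_apply_lastIdx (hn : 0 < n) (y : EuclideanSpace ℝ (Fin (n - 1))) (t : ℝ) :
    toUp y t (lastIdx n hn) = t := by
  simp [toUp, lastIdx]

lemma dim_pos_of_mem_upperHalfSpace (hx : x ∈ upperHalfSpace n) : 0 < n := by
  by_contra hn
  simp [upperHalfSpace, xlast, hn] at hx

lemma isOpen_upperHalfSpace (n : ℕ) : IsOpen (upperHalfSpace n) := by
  have hcont : Continuous (xlast (n := n)) := by
    unfold xlast
    split_ifs <;> fun_prop
  exact isOpen_lt continuous_const hcont

lemma ne_zero_of_mem_upperHalfSpace (hx : x ∈ upperHalfSpace n) : x ≠ 0 := by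
  rintro rfl
  simp [upperHalfSpace, xlast] at hx

lemma toUp_mem_upperHalfSpace (hn : 0 < n) (y : EuclideanSpace ℝ (Fin (n - 1))) {t : ℝ}
    (ht : 0 < t) : toUp y t ∈ upperHalfSpace n := by
  simpa only [upperHalfSpace, Set.mem_ofPred_eq, xlast_eq_apply_lastIdx hn, toUp_apply_lastIdx]

lemma smul_mem_upperHalfSpace (hx : x ∈ upperHalfSpace n) {l : ℝ} (hl : 0 < l) :
    l • x ∈ upperHalfSpace n := by
  have hn := dim_pos_of_mem_upperHalfSpace hx
  simp only [upperHalfSpace, Set.mem_ofPred_eq, xlast_eq_apply_lastIdx hn] at hx ⊢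
  exact mul_pos hl hx

lemma toUp_inv_xlast_smul_xinit (hx : xlast x ≠ 0) :
    toUp ((xlast x)⁻¹ • xinit x) 1 = (xlast x)⁻¹ • x := by
  ext i
  by_cases hi : (i : ℕ) < n - 1
  · simp [toUp, xinit, hi]
  · have hn : 0 < n := i.pos
    obtain rfl : i = lastIdx n hn := Fin.ext (by simp only [lastIdx]; omega)
    rw [xlast_eq_apply_lastIdx hn] at hx ⊢
    simp [toUp, hi, hx]

theorem IsPosHomogeneousOn.rpow_xlast_smul_toUp {F : Type*} [AddCommGroup F] [Module ℝ F] {m : ℝ}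
    {f : EuclideanSpace ℝ (Fin n) → F} (hf : IsPosHomogeneousOn m f (upperHalfSpace n))
    (hx : x ∈ upperHalfSpace n) :
    xlast x ^ m • f (toUp ((xlast x)⁻¹ • xinit x) 1) = f x := by
  have ht : 0 < xlast x := hx
  rw [toUp_inv_xlast_smul_xinit ht.ne', hf x hx _ (inv_pos.mpr ht), smul_smul,
    ← mul_rpow ht.le (inv_pos.mpr ht).le, mul_inv_cancel₀ ht.ne', one_rpow, one_smul]

theorem IsPosHomogeneousOn.rpow_xlast_smul_toUp_of_eqOn {F : Type*} [AddCommGroup F] [Module ℝ F]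
    {m : ℝ} {f g : EuclideanSpace ℝ (Fin n) → F} (hg : IsPosHomogeneousOn m g (upperHalfSpace n))
    (hn : 0 < n) (hgf : (upperHalfSpace n).EqOn g (fun z => z (lastIdx n hn) • f z))
    (hx : x ∈ upperHalfSpace n) :
    xlast x ^ m • f (toUp ((xlast x)⁻¹ • xinit x) 1) = g x := by
  rw [← hg.rpow_xlast_smul_toUp hx, hgf (toUp_mem_upperHalfSpace hn _ one_pos)]
  simp only [toUp_apply_lastIdx, one_smul]

lemma ofReal_zpow_mul_eq_rpow_smul (t : ℝ) (m : ℤ) (z : ℂ) :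
    (t : ℂ) ^ m * z = t ^ (m : ℝ) • z := by
  simp [Complex.real_smul]

end UpperHalfSpace

section Flux

variable {n M : ℕ} {A : Fin n → Fin n → Fin M → Fin M → ℂ}
  {E : EuclideanSpace ℝ (Fin n) → Matrix (Fin M) (Fin M) ℂ} {γ α : Fin M}

/-- The `s`-th component `Σ_{r,β} a^{βα}_{rs} ∂_r E_{γβ}` of the flux of the `γ`-th row of `E`,
with `A r s β α` standing for `a^{βα}_{rs}`. As a field in `s`, it is divergence free when radial
and homogeneous of degree `1 - n`. -/
def flux (A : Fin n → Fin n → Fin M → Fin M → ℂ)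
    (E : EuclideanSpace ℝ (Fin n) → Matrix (Fin M) (Fin M) ℂ) (γ α : Fin M) (s : Fin n)
    (x : EuclideanSpace ℝ (Fin n)) : ℂ :=
  ∑ r, ∑ β, A r s β α * pd r (fun y => E y γ β) x

lemma isPosHomogeneousOn_flux {m : ℝ} {U : Set (EuclideanSpace ℝ (Fin n))}
    (hE : ∀ β r, IsPosHomogeneousOn m (pd r fun y => E y γ β) U) (s : Fin n) :
    IsPosHomogeneousOn m (flux A E γ α s) U :=
  .sum fun r _ => .sum fun β _ => (hE β r).const_mul _

variable {x : EuclideanSpace ℝ (Fin n)}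

lemma differentiableAt_flux (hE : ∀ β r, DifferentiableAt ℝ (pd r fun y => E y γ β) x)
    (s : Fin n) : DifferentiableAt ℝ (flux A E γ α s) x :=
  .fun_sum fun r _ => .fun_sum fun β _ => (hE β r).const_mul _

lemma pd_flux (hE : ∀ β r, DifferentiableAt ℝ (pd r fun y => E y γ β) x) (i s : Fin n) :
    pd i (flux A E γ α s) x = ∑ r, ∑ β, A r s β α * pd i (pd r fun y => E y γ β) x := by
  have hterm (r : Fin n) (β : Fin M) :
      DifferentiableAt ℝ (fun z => A r s β α * pd r (fun y => E y γ β) z) x :=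
    (hE β r).const_mul _
  unfold flux
  rw [pd_sum fun r _ => .fun_sum fun β _ => hterm r β]
  simp only [pd_sum fun β _ => hterm _ β, pd_const_mul (hE _ _)]

lemma QkerDil_eq_pd {r : Fin n} {β : Fin M}
    (hE : IsPosHomogeneousOn (1 - n) (pd r fun y => E y γ β) (upperHalfSpace n))
    (hx : x ∈ upperHalfSpace n) : QkerDil E r γ β x = pd r (fun y => E y γ β) x := by
  rw [QkerDil, Qker, ofReal_zpow_mul_eq_rpow_smul]
  exact_mod_cast hE.rpow_xlast_smul_toUp hx

lemma sum_pd_flux_eq_zero {f : EuclideanSpace ℝ (Fin n) → ℂ}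
    (hhom : ∀ β r, IsPosHomogeneousOn (1 - n) (pd r fun y => E y γ β) (upperHalfSpace n))
    (hradial : ∀ s, (upperHalfSpace n).EqOn (flux A E γ α s) (fun z => z s • f z))
    (hx : x ∈ upperHalfSpace n) (hE : ∀ β r, DifferentiableAt ℝ (pd r fun y => E y γ β) x) :
    ∑ s, pd s (flux A E γ α s) x = 0 := by
  have hn := dim_pos_of_mem_upperHalfSpace hx
  exact sum_pd_eq_zero_of_eqOn_coord_smul (j := lastIdx n hn) (isOpen_upperHalfSpace n)
    (fun z hz l hl => smul_mem_upperHalfSpace hz hl)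
    (fun z hz => xlast_eq_apply_lastIdx hn z ▸ hz.ne')
    hradial (isPosHomogeneousOn_flux hhom _) hx (differentiableAt_flux hE _)

end Flux

theorem statement14_general
    (n M : ℕ) (hn : 0 < n)
    (A : Fin n → Fin n → Fin M → Fin M → ℂ)
    (E : EuclideanSpace ℝ (Fin n) → Matrix (Fin M) (Fin M) ℂ)
    (hEreg : ∀ (γ β : Fin M) (r : Fin n), ∀ x ∈ upperHalfSpace n,
      DifferentiableAt ℝ (pd r fun y => E y γ β) x)
    (hEhom : ∀ (γ β : Fin M) (r : Fin n),
      IsPosHomogeneousOn (1 - n) (pd r fun y => E y γ β) (upperHalfSpace n))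
    (k : EuclideanSpace ℝ (Fin n) → Matrix (Fin M) (Fin M) ℂ)
    (hk : ∀ x ∈ upperHalfSpace n, ∀ (s : Fin n) (γ α : Fin M),
      (∑ r, ∑ β, A r s β α * pd r (fun y => E y γ β) x) = ((x s : ℝ) : ℂ) * k x γ α) :
    ∀ (γ α : Fin M), ∀ x ∈ upperHalfSpace n,
      pd (lastIdx n hn)
        (fun z : EuclideanSpace ℝ (Fin n) =>
          ((xlast z : ℂ) ^ ((1 : ℤ) - (n : ℤ))) *
            (2 * k (toUp ((xlast z)⁻¹ • xinit z) 1) γ α)) x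
      = -2 * ∑ s : Fin (n - 1), ∑ r : Fin n, ∑ β : Fin M,
          A r (finUp s) β α * pd (finUp s) (QkerDil E r γ β) x := by
  intro γ α x hx
  have hnhds : upperHalfSpace n ∈ 𝓝 x := (isOpen_upperHalfSpace n).mem_nhds hx
  have hreg (β : Fin M) (r : Fin n) := hEreg γ β r x hx
  have hradial (s : Fin n) : (upperHalfSpace n).EqOn (flux A E γ α s) (fun z => z s • k z γ α) :=
    fun z hz => (hk z hz s γ α).trans Complex.real_smul.symm
  have hdiv := sum_pd_flux_eq_zero (hEhom γ) hradial hx hreg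
  have hP : (fun z : EuclideanSpace ℝ (Fin n) => ((xlast z : ℂ) ^ ((1 : ℤ) - (n : ℤ))) *
      (2 * k (toUp ((xlast z)⁻¹ • xinit z) 1) γ α)) =ᶠ[𝓝 x]
        fun z => 2 * flux A E γ α (lastIdx n hn) z := by
    filter_upwards [hnhds] with z hz
    have hflux := isPosHomogeneousOn_flux (A := A) (α := α) (hEhom γ) (lastIdx n hn)
    rw [mul_left_comm, ofReal_zpow_mul_eq_rpow_smul]
    exact_mod_cast congrArg (2 * ·) (hflux.rpow_xlast_smul_toUp_of_eqOn hn (hradial _) hz)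
  have hQ (r : Fin n) (β : Fin M) : QkerDil E r γ β =ᶠ[𝓝 x] pd r fun y => E y γ β := by
    filter_upwards [hnhds] with z hz using QkerDil_eq_pd (hEhom γ β r) hz
  simp only [pd_congr hP, pd_const_mul (differentiableAt_flux hreg _), pd_congr (hQ _ _),
    ← pd_flux hreg]
  rw [sum_univ_eq_sum_finUp_add_lastIdx hn] at hdiv
  linear_combination 2 * hdiv

/-- The identity
`∂_t[(P_{γα})_t(x')] = -2 Σ_{s=1}^{n-1} Σ_{r,β} a^{βα}_{rs} ∂_{x_s}[(Q^{(r)}_{γβ})_t(x')]`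
in the upper half space, where `P = 2k(·,1)` and `A r s β α` stands for `a^{βα}_{rs}`. -/
theorem statement14
    (n M : ℕ) (hn : 2 ≤ n) (hM : 1 ≤ M)
    (A : Fin n → Fin n → Fin M → Fin M → ℂ)
    (E : EuclideanSpace ℝ (Fin n) → Matrix (Fin M) (Fin M) ℂ)
    (hEreg : ∀ γ β : Fin M,
      ContDiffOn ℝ 2 (fun x => E x γ β) {x : EuclideanSpace ℝ (Fin n) | x ≠ 0})
    (hEhom : ∀ (γ β : Fin M) (r : Fin n) (l : ℝ), 0 < l →
      ∀ x : EuclideanSpace ℝ (Fin n), x ≠ 0 →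
        pd r (fun y => E y γ β) (l • x)
          = ((l : ℂ) ^ ((1 : ℤ) - (n : ℤ))) * pd r (fun y => E y γ β) x)
    (k : EuclideanSpace ℝ (Fin n) → Matrix (Fin M) (Fin M) ℂ)
    (hk : ∀ x : EuclideanSpace ℝ (Fin n), x ≠ 0 → ∀ (s : Fin n) (γ α : Fin M),
      (∑ r, ∑ β, A r s β α * pd r (fun y => E y γ β) x) = ((x s : ℝ) : ℂ) * k x γ α) :
    ∀ (γ α : Fin M), ∀ x ∈ upperHalfSpace n,
      pd (lastIdx n (by omega))
        (fun z : EuclideanSpace ℝ (Fin n) =>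
          ((xlast z : ℂ) ^ ((1 : ℤ) - (n : ℤ))) *
            (2 * k (toUp ((xlast z)⁻¹ • xinit z) 1) γ α)) x
      = -2 * ∑ s : Fin (n - 1), ∑ r : Fin n, ∑ β : Fin M,
          A r (finUp s) β α * pd (finUp s) (QkerDil E r γ β) x := by
  exact statement14_general n M (by omega) A E
    (fun γ β r x hx => differentiableAt_pd_of_contDiffAt
      ((hEreg γ β).contDiffAt (isOpen_ne.mem_nhds (ne_zero_of_mem_upperHalfSpace hx))) r)
    (fun γ β r x hx l hl => by
      simpa [ofReal_zpow_mul_eq_rpow_smul] using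
        hEhom γ β r l hl x (ne_zero_of_mem_upperHalfSpace hx))
    k (fun x hx => hk x (ne_zero_of_mem_upperHalfSpace hx))

end
end
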